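/- arXiv:1601.05515 — 3 statements merged into one kernel-verified Lean document; each statement's English description precedes it below -/
import Mathlib

section
/- For every ε > 0 there is a constant C(ε) > 0 with the following property: if K ≥ 10, α, β are real numbers with 2K^{−1/2} ≤ |α| ≤ K^{1/2}, and 0 < δ < 1/2, then the number of integers k with K < k ≤ 2K and ‖β + α√k‖ < δ is at most C(ε)·(Kδ + K^{1/2+ε}). -/
/-- Distance from a real number to the nearest integer. -/
noncomputable def distNearestInt (x : ℝ) : ℝ := |x - round x|

lemma csfp_divisor_bound (ε : ℝ) (hε : 0 < ε) :
    ∃ C : ℝ, 0 < C ∧ ∀ n : ℕ, n ≠ 0 → (n.divisors.card : ℝ) ≤ C * (n : ℝ) ^ ε := by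
  set P : ℕ := ⌈(2 : ℝ) ^ (1 / ε)⌉₊ with hP
  have hl2 : 0 < Real.log 2 := Real.log_pos (by norm_num)
  set B : ℝ := 1 + 1 / (ε * Real.log 2) with hB
  have hB1 : 1 ≤ B := by
    have : 0 < 1 / (ε * Real.log 2) := by positivity
    linarith
  have hB0 : 0 < B := by linarith
  refine ⟨B ^ P, by positivity, fun n hn => ?_⟩
  have h1 : (n : ℝ) ^ ε = ∏ p ∈ n.primeFactors, ((p : ℝ) ^ ε) ^ (n.factorization p) := by
    conv_lhs => rw [← Nat.prod_factorization_pow_eq_self hn]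
    rw [Finsupp.prod, Nat.support_factorization]
    push_cast
    rw [← Real.finsetProd_rpow _ _ (fun i _ => by positivity)]
    refine Finset.prod_congr rfl fun p _ => ?_
    rw [← Real.rpow_natCast, ← Real.rpow_natCast, ← Real.rpow_mul (by positivity), ← Real.rpow_mul (by positivity), mul_comm]
  have h2 : ∀ p ∈ n.primeFactors, ((n.factorization p + 1 : ℕ) : ℝ) ≤
      (if p < P then B else 1) * ((p : ℝ) ^ ε) ^ (n.factorization p) := by
    intro p hp
    have hp2 : (2 : ℝ) ≤ p := by exact_mod_cast (Nat.prime_of_mem_primeFactors hp).two_le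
    set a := n.factorization p
    split_ifs with h
    · have e1 : ((2 : ℝ) ^ ε) ^ a ≤ ((p : ℝ) ^ ε) ^ a := by gcongr
      have e2 : 1 + ε * Real.log 2 * a ≤ ((2 : ℝ) ^ ε) ^ a := by
        rw [← Real.rpow_natCast, ← Real.rpow_mul (by norm_num), Real.rpow_def_of_pos (by norm_num)]
        have := Real.add_one_le_exp (Real.log 2 * (ε * a))
        linarith
      have e3 : (a : ℝ) + 1 ≤ B * (1 + ε * Real.log 2 * a) := by
        have : B * (1 + ε * Real.log 2 * a) = 1 + a + 1 / (ε * Real.log 2) + ε * Real.log 2 * a := by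
          rw [hB]; field_simp; ring
        rw [this]
        have : 0 ≤ 1 / (ε * Real.log 2) + ε * Real.log 2 * a := by positivity
        linarith
      push_cast
      calc (a : ℝ) + 1 ≤ B * (1 + ε * Real.log 2 * a) := e3
        _ ≤ B * ((p : ℝ) ^ ε) ^ a := by gcongr; linarith
    · have e0 : (2 : ℝ) ≤ (p : ℝ) ^ ε := by
        have : (2 : ℝ) ^ (1 / ε) ≤ p := by
          refine (Nat.le_ceil _).trans ?_
          exact_mod_cast not_lt.mp h
        calc (2 : ℝ) = ((2 : ℝ) ^ (1 / ε)) ^ ε := by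
              rw [← Real.rpow_mul (by norm_num)]; field_simp; simp
          _ ≤ _ := by gcongr
      have e1 : (2 : ℝ) ^ a ≤ ((p : ℝ) ^ ε) ^ a := by gcongr
      have e2 : a + 1 ≤ 2 ^ a := Nat.lt_two_pow_self
      have e3 : ((a + 1 : ℕ) : ℝ) ≤ (2 : ℝ) ^ a := by exact_mod_cast e2
      linarith
  rw [Nat.card_divisors hn, h1]
  push_cast
  calc (∏ p ∈ n.primeFactors, ((n.factorization p : ℝ) + 1))
      ≤ ∏ p ∈ n.primeFactors, ((if p < P then B else 1) * ((p : ℝ) ^ ε) ^ (n.factorization p)) := by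
        refine Finset.prod_le_prod (fun i _ => by positivity) fun p hp => ?_
        have := h2 p hp
        push_cast at this
        exact this
    _ = (∏ p ∈ n.primeFactors, (if p < P then B else 1)) * ∏ p ∈ n.primeFactors, ((p : ℝ) ^ ε) ^ (n.factorization p) := Finset.prod_mul_distrib
    _ ≤ _ := by
        refine mul_le_mul_of_nonneg_right ?_ (Finset.prod_nonneg fun i _ => by positivity)
        rw [Finset.prod_ite]
        simp only [Finset.prod_const, one_pow, mul_one]
        refine pow_le_pow_right₀ hB1 ?_
        calc _ ≤ (Finset.range P).card := Finset.card_le_card (by intro x; simp)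
          _ = P := by simp

lemma csfp_dist_nonneg (x : ℝ) : 0 ≤ distNearestInt x := abs_nonneg _

lemma csfp_sum_G (A N : ℝ) (hA : 1 ≤ A) (hN : 0 < N) (M : ℕ) :
    ∑ m ∈ Finset.Icc 1 M, N / (1 + N * distNearestInt (m / A)) ≤
      (M / A + 2) * (2 * (N + A * (1 + Real.log A))) := by
  have hA0 : 0 < A := by linarith
  set g : ℕ → ℝ := fun j => N / (1 + N * (j / A)) with hg
  have hg0 : ∀ j, 0 ≤ g j := fun j => by rw [hg]; positivity
  set φ : ℕ → ℕ × ℕ × Bool := fun m =>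
    ((round ((m : ℝ) / A)).toNat, ⌊|(m : ℝ) - round ((m : ℝ) / A) * A|⌋₊,
      decide (round ((m : ℝ) / A) * A ≤ (m : ℝ))) with hφ
  set T : Finset (ℕ × ℕ × Bool) :=
    Finset.range (⌊(M : ℝ) / A⌋₊ + 2) ×ˢ (Finset.range (⌊A⌋₊ + 1) ×ˢ Finset.univ) with hT
  have hr0 : ∀ m : ℕ, 0 ≤ round ((m : ℝ) / A) := by
    intro m
    rw [round_eq]
    apply Int.floor_nonneg.mpr; positivity
  have hdist : ∀ m : ℕ, distNearestInt (m / A) = |(m : ℝ) - round ((m : ℝ) / A) * A| / A := by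
    intro m
    rw [distNearestInt, ← abs_of_pos hA0, ← abs_div, abs_of_pos hA0]
    congr 1; field_simp
  have hinj : Set.InjOn φ (Finset.Icc 1 M : Finset ℕ) := by
    intro m _ m' _ h
    simp only [hφ, Prod.mk.injEq] at h
    obtain ⟨h1, h2, h3⟩ := h
    have h1' : round ((m : ℝ) / A) = round ((m' : ℝ) / A) := by
      have := hr0 m; have := hr0 m'; omega
    rw [h1'] at h2 h3
    set r : ℝ := round ((m' : ℝ) / A) * A
    have h3' : (r ≤ (m : ℝ)) ↔ (r ≤ (m' : ℝ)) := by simpa using h3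
    have f1 := Nat.floor_le (abs_nonneg ((m : ℝ) - r))
    have f2 := Nat.lt_floor_add_one (|(m : ℝ) - r|)
    have f3 := Nat.floor_le (abs_nonneg ((m' : ℝ) - r))
    have f4 := Nat.lt_floor_add_one (|(m' : ℝ) - r|)
    rw [h2] at f1 f2
    generalize ⌊|(m' : ℝ) - r|⌋₊ = q at f1 f2 f3 f4
    have key : |(m : ℝ) - m'| < 1 := by
      rw [abs_lt]
      by_cases hr : r ≤ (m : ℝ)
      · have hr' := h3'.mp hr
        rw [abs_of_nonneg (by linarith)] at f1 f2
        rw [abs_of_nonneg (a := (m' : ℝ) - r) (by linarith)] at f3 f4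
        constructor <;> linarith
      · have hr' : ¬ r ≤ (m' : ℝ) := fun h => hr (h3'.mpr h)
        rw [abs_of_neg (by linarith)] at f1 f2
        rw [abs_of_neg (a := (m' : ℝ) - r) (by linarith)] at f3 f4
        constructor <;> linarith
    have : |(m : ℤ) - m'| < 1 := by exact_mod_cast key
    rw [abs_lt] at this; omega
  have hmaps : ∀ m ∈ Finset.Icc 1 M, φ m ∈ T := by
    intro m hm
    have hm2 : (m : ℝ) ≤ M := by exact_mod_cast (Finset.mem_Icc.mp hm).2
    simp only [hφ, hT, Finset.mem_product, Finset.mem_range, Finset.mem_univ, and_true]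
    have hab := abs_sub_round ((m : ℝ) / A)
    constructor
    · have : (((round ((m : ℝ) / A)).toNat : ℤ) : ℝ) < ((⌊(M : ℝ) / A⌋₊ + 2 : ℕ) : ℝ) := by
        rw [Int.toNat_of_nonneg (hr0 m)]
        have h1 := (abs_le.mp hab).1
        have h2 := Nat.lt_floor_add_one ((M : ℝ) / A)
        have h3 : (m : ℝ) / A ≤ M / A := by gcongr
        push_cast; linarith
      exact_mod_cast this
    · apply Nat.lt_succ_of_le
      apply Nat.floor_le_floor
      have h := hdist m
      rw [distNearestInt] at h
      rw [h, div_le_iff₀ hA0] at hab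
      linarith
  calc ∑ m ∈ Finset.Icc 1 M, N / (1 + N * distNearestInt (m / A))
      ≤ ∑ m ∈ Finset.Icc 1 M, g (φ m).2.1 := by
        refine Finset.sum_le_sum fun m _ => ?_
        simp only [hg, hφ]
        rw [hdist m]
        gcongr
        exact Nat.floor_le (abs_nonneg _)
    _ = ∑ t ∈ (Finset.Icc 1 M).image φ, g t.2.1 := by
        rw [Finset.sum_image hinj]
    _ ≤ ∑ t ∈ T, g t.2.1 := by
        refine Finset.sum_le_sum_of_subset_of_nonneg ?_ fun i _ _ => hg0 _
        intro t ht
        obtain ⟨m, hm, rfl⟩ := Finset.mem_image.mp ht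
        exact hmaps m hm
    _ = ((⌊(M : ℝ) / A⌋₊ + 2 : ℕ) : ℝ) * (2 * ∑ j ∈ Finset.range (⌊A⌋₊ + 1), g j) := by
        rw [hT, Finset.sum_product]
        simp only [Finset.sum_product, Finset.sum_const, Finset.card_range, nsmul_eq_mul, Finset.card_univ, Fintype.card_bool]
        simp [Finset.mul_sum]
    _ ≤ _ := by
        have hs : ∑ j ∈ Finset.range (⌊A⌋₊ + 1), g j ≤ N + A * (1 + Real.log A) := by
          rw [Finset.sum_range_succ']
          have h0 : g 0 = N := by simp [hg]
          rw [h0]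
          have h1 : ∑ k ∈ Finset.range ⌊A⌋₊, g (k + 1) ≤ A * (1 + Real.log A) := by
            calc _ ≤ ∑ k ∈ Finset.range ⌊A⌋₊, A * ((k + 1 : ℝ))⁻¹ := by
                  refine Finset.sum_le_sum fun k _ => ?_
                  simp only [hg]; push_cast
                  rw [div_le_iff₀ (by positivity)]
                  have : A * ((k : ℝ) + 1)⁻¹ * (1 + N * ((k + 1) / A)) = A * ((k : ℝ) + 1)⁻¹ + N := by
                    field_simp
                  rw [this]
                  have : 0 < A * ((k : ℝ) + 1)⁻¹ := by positivity
                  linarith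
              _ = A * (harmonic ⌊A⌋₊ : ℝ) := by
                  rw [← Finset.mul_sum, harmonic]; push_cast; rfl
              _ ≤ _ := by
                  gcongr
                  refine (harmonic_le_one_add_log _).trans ?_
                  have : 0 < ⌊A⌋₊ := Nat.floor_pos.mpr hA
                  have h3 : (⌊A⌋₊ : ℝ) ≤ A := Nat.floor_le hA0.le
                  have h4 : (0 : ℝ) < (⌊A⌋₊ : ℝ) := by exact_mod_cast this
                  have := Real.log_le_log h4 h3
                  linarith
          linarith
        have hf : (⌊(M : ℝ) / A⌋₊ : ℝ) ≤ M / A := Nat.floor_le (by positivity)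
        have : 0 ≤ ∑ j ∈ Finset.range (⌊A⌋₊ + 1), g j := Finset.sum_nonneg fun i _ => hg0 i
        push_cast
        gcongr

lemma csfp_shift (f : ℕ → ℝ) (N : ℕ) :
    ∑ d ∈ Finset.Icc 1 N, f d = ∑ d ∈ Finset.range N, f (d + 1) := by
  rw [Finset.range_eq_Ico, Finset.sum_Ico_add' f 0 N 1]
  rfl

/-- The additive character `x ↦ exp(2πix)`. -/
noncomputable def csfpE (x : ℝ) : ℂ := Complex.exp (Complex.I * ((2 * Real.pi * x : ℝ) : ℂ))

lemma csfpE_add (x y : ℝ) : csfpE (x + y) = csfpE x * csfpE y := by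
  rw [csfpE, csfpE, csfpE, ← Complex.exp_add]; congr 1; push_cast; ring

lemma csfpE_norm (x : ℝ) : ‖csfpE x‖ = 1 := by
  rw [csfpE, mul_comm]; exact Complex.norm_exp_ofReal_mul_I _

lemma csfpE_conj (x : ℝ) : (starRingEnd ℂ) (csfpE x) = csfpE (-x) := by
  rw [csfpE, csfpE, ← Complex.exp_conj]; congr 1
  simp only [map_mul, Complex.conj_I, Complex.conj_ofReal]
  push_cast; ring

lemma csfpE_int (n : ℤ) : csfpE n = 1 := by
  rw [csfpE, ← Complex.exp_int_mul_two_pi_mul_I n]; congr 1; push_cast; ring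

lemma csfpE_sub_round (x : ℝ) : csfpE (x - round x) = csfpE x := by
  have h := csfpE_add (x - round x) (round x)
  rw [csfpE_int, mul_one, sub_add_cancel] at h
  exact h.symm

lemma csfpE_nat_mul (n : ℕ) (x : ℝ) : csfpE (n * x) = csfpE x ^ n := by
  rw [csfpE, csfpE, ← Complex.exp_nat_mul]; congr 1; push_cast; ring

lemma csfpE_sub_one (x : ℝ) : 4 * distNearestInt x ≤ ‖csfpE x - 1‖ := by
  rw [← csfpE_sub_round x, distNearestInt]
  set y := x - round x
  have hy : |y| ≤ 1 / 2 := abs_sub_round x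
  rw [csfpE, Complex.norm_exp_I_mul_ofReal_sub_one]
  have e : 2 * Real.pi * y / 2 = Real.pi * y := by ring
  rw [e, norm_mul, Real.norm_eq_abs, Real.norm_eq_abs, abs_two]
  have hp := Real.pi_pos
  have h := Real.mul_abs_le_abs_sin (x := Real.pi * y) (by
    rw [abs_mul, abs_of_pos hp]; nlinarith)
  rw [abs_mul Real.pi, abs_of_pos hp] at h
  have : 2 / Real.pi * (Real.pi * |y|) = 2 * |y| := by field_simp
  linarith

lemma csfp_geom (L : ℕ) (N : ℝ) (hN : 0 < N) (hL : (L : ℝ) ≤ N) (γ c : ℝ) :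
    ‖∑ j ∈ Finset.range L, csfpE (j * γ + c)‖ ≤ 2 * (N / (1 + N * distNearestInt γ)) := by
  set S := ‖∑ j ∈ Finset.range L, csfpE (j * γ + c)‖ with hS
  have hd := csfp_dist_nonneg γ
  have h1 : S ≤ N := by
    refine (norm_sum_le _ _).trans ?_
    simpa [csfpE_norm] using hL
  have h2 : S * ‖csfpE γ - 1‖ ≤ 2 := by
    have : S = ‖∑ j ∈ Finset.range L, csfpE γ ^ j‖ := by
      rw [hS]
      simp only [csfpE_add, csfpE_nat_mul]
      rw [← Finset.sum_mul, norm_mul, csfpE_norm, mul_one]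
    rw [this, ← norm_mul, geom_sum_mul]
    refine (norm_sub_le _ _).trans ?_
    rw [norm_pow, csfpE_norm]; norm_num
  have h3 := csfpE_sub_one γ
  have hS0 : 0 ≤ S := norm_nonneg _
  have h4 : S * (4 * distNearestInt γ) ≤ 2 := le_trans (by gcongr) h2
  rw [← mul_div_assoc, le_div_iff₀ (by positivity)]
  nlinarith

lemma csfp_diff (z : ℕ → ℂ) (hz : ∀ n, ‖z n‖ = 1) (N : ℕ) :
    ‖∑ i ∈ Finset.range N, z i‖ ^ 2 = N + 2 * (∑ d ∈ Finset.range N,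
      ∑ j ∈ Finset.range (N - (d + 1)), z (j + (d + 1)) * (starRingEnd ℂ) (z j)).re := by
  induction N with
  | zero => simp
  | succ N ih =>
    rw [Finset.sum_range_succ, Finset.sum_range_succ]
    have h1 : ∑ d ∈ Finset.range N, ∑ j ∈ Finset.range (N + 1 - (d + 1)), z (j + (d + 1)) * (starRingEnd ℂ) (z j)
        = (∑ d ∈ Finset.range N, ∑ j ∈ Finset.range (N - (d + 1)), z (j + (d + 1)) * (starRingEnd ℂ) (z j))
          + z N * (starRingEnd ℂ) (∑ i ∈ Finset.range N, z i) := by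
      rw [← Finset.sum_range_reflect (fun i => z i), map_sum, Finset.mul_sum, ← Finset.sum_add_distrib]
      refine Finset.sum_congr rfl fun d hd => ?_
      have hd' := Finset.mem_range.mp hd
      rw [show N + 1 - (d + 1) = (N - (d + 1)) + 1 by omega, Finset.sum_range_succ,
        show N - (d + 1) + (d + 1) = N by omega, show N - 1 - d = N - (d + 1) by omega]
    rw [h1]
    set T := ∑ i ∈ Finset.range N, z i
    have h2 : ‖T + z N‖ ^ 2 = ‖T‖ ^ 2 + 1 + 2 * (z N * (starRingEnd ℂ) T).re := by
      have := hz N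
      rw [← Complex.normSq_eq_norm_sq, ← Complex.normSq_eq_norm_sq, Complex.normSq_add]
      rw [Complex.normSq_eq_norm_sq (z N), hz N]
      simp only [Complex.mul_re, Complex.conj_re, Complex.conj_im]; ring
    rw [h2, ih]
    simp
    ring

lemma csfp_weyl (N : ℕ) (hN : 0 < N) (θ μ ν : ℝ) :
    ‖∑ i ∈ Finset.range N, csfpE (θ * i ^ 2 + μ * i + ν)‖ ^ 2 ≤
      N + 4 * ∑ d ∈ Finset.Icc 1 N, (N : ℝ) / (1 + N * distNearestInt (2 * d * θ)) := by
  have hN' : (0 : ℝ) < N := by exact_mod_cast hN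
  rw [csfp_diff (fun i => csfpE (θ * i ^ 2 + μ * i + ν)) (fun _ => csfpE_norm _)]
  have h := Complex.re_le_norm (∑ d ∈ Finset.range N, ∑ j ∈ Finset.range (N - (d + 1)),
    csfpE (θ * ((j + (d + 1) : ℕ) : ℝ) ^ 2 + μ * ((j + (d + 1) : ℕ) : ℝ) + ν) *
      (starRingEnd ℂ) (csfpE (θ * (j : ℝ) ^ 2 + μ * (j : ℝ) + ν)))
  have h2 : ‖(∑ d ∈ Finset.range N, ∑ j ∈ Finset.range (N - (d + 1)),
    csfpE (θ * ((j + (d + 1) : ℕ) : ℝ) ^ 2 + μ * ((j + (d + 1) : ℕ) : ℝ) + ν) *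
      (starRingEnd ℂ) (csfpE (θ * (j : ℝ) ^ 2 + μ * (j : ℝ) + ν)))‖ ≤
      2 * ∑ d ∈ Finset.Icc 1 N, (N : ℝ) / (1 + N * distNearestInt (2 * d * θ)) := by
    rw [csfp_shift, Finset.mul_sum]
    refine (norm_sum_le _ _).trans (Finset.sum_le_sum fun d _ => ?_)
    refine le_trans (le_of_eq ?_) (csfp_geom (N - (d + 1)) N hN' (by exact_mod_cast Nat.sub_le _ _) (2 * ((d + 1 : ℕ) : ℝ) * θ) (θ * (d + 1) ^ 2 + μ * (d + 1)))
    congr 1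
    refine Finset.sum_congr rfl fun j _ => ?_
    rw [csfpE_conj, ← csfpE_add]
    congr 1; push_cast; ring
  linarith

lemma csfp_double (H N : ℕ) (D : ℝ) (f : ℕ → ℝ) (hf : ∀ m, 0 ≤ f m)
    (hD : ∀ m ∈ Finset.Icc 1 (2 * H * N), (m.divisors.card : ℝ) ≤ D) :
    ∑ h ∈ Finset.Icc 1 H, ∑ d ∈ Finset.Icc 1 N, f (2 * h * d) ≤
      D * ∑ m ∈ Finset.Icc 1 (2 * H * N), f m := by
  rw [← Finset.sum_product' (Finset.Icc 1 H) (Finset.Icc 1 N) (fun h d => f (2 * h * d))]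
  have hm : ∀ x ∈ Finset.Icc 1 H ×ˢ Finset.Icc 1 N, 2 * x.1 * x.2 ∈ Finset.Icc 1 (2 * H * N) := by
    rintro ⟨h, d⟩ hx
    simp only [Finset.mem_product, Finset.mem_Icc] at hx ⊢
    obtain ⟨⟨h1, h2⟩, h3, h4⟩ := hx
    constructor
    · have : 0 < 2 * h * d := by positivity
      omega
    · gcongr
  rw [← Finset.sum_fiberwise_of_maps_to hm, Finset.mul_sum]
  refine Finset.sum_le_sum fun m hm' => ?_
  have h0 : m ≠ 0 := by have := (Finset.mem_Icc.mp hm').1; omega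
  rw [Finset.sum_congr rfl (g := fun _ => f m) (fun x hx => by rw [(Finset.mem_filter.mp hx).2])]
  rw [Finset.sum_const, nsmul_eq_mul]
  refine mul_le_mul_of_nonneg_right (le_trans ?_ (hD m hm')) (hf m)
  norm_cast
  refine Finset.card_le_card_of_injOn (fun x => x.1) ?_ ?_
  · intro x hx
    have hx2 := (Finset.mem_filter.mp hx).2
    simp only [Finset.mem_coe, Nat.mem_divisors]
    exact ⟨⟨2 * x.2, by rw [← hx2]; ring⟩, h0⟩
  · intro x hx y hy hxy
    have hx2 := (Finset.mem_filter.mp hx).2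
    have hy2 := (Finset.mem_filter.mp hy).2
    have hx1 := (Finset.mem_product.mp (Finset.mem_filter.mp hx).1).1
    have hpos : 0 < 2 * x.1 := by have := (Finset.mem_Icc.mp hx1).1; omega
    simp only at hxy
    refine Prod.ext hxy ?_
    rw [← hy2, ← hxy] at hx2
    exact Nat.eq_of_mul_eq_mul_left hpos hx2

lemma csfp_fejer_lower (H : ℕ) (hH : 0 < H) (x : ℝ) (hx : distNearestInt x ≤ 1 / (8 * H)) :
    (H : ℝ) ^ 2 / 4 ≤ ‖∑ h ∈ Finset.range H, csfpE (h * x)‖ ^ 2 := by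
  have hH' : (0 : ℝ) < H := by exact_mod_cast hH
  have h1 : (H : ℝ) / 2 ≤ ‖∑ h ∈ Finset.range H, csfpE (h * x)‖ := by
    refine le_trans ?_ (Complex.re_le_norm _)
    rw [Complex.re_sum]
    have : ∀ h ∈ Finset.range H, (1 : ℝ) / 2 ≤ (csfpE (h * x)).re := by
      intro h hh
      have hh' : (h : ℝ) ≤ H := by exact_mod_cast (Finset.mem_range.mp hh).le
      rw [csfpE_nat_mul, ← csfpE_sub_round, ← csfpE_nat_mul]
      rw [distNearestInt] at hx
      set y := x - round x
      rw [csfpE, mul_comm, Complex.exp_ofReal_mul_I_re]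
      refine le_trans ?_ Real.one_sub_sq_div_two_le_cos
      have hy : |(h : ℝ) * y| ≤ 1 / 8 := by
        rw [abs_mul, abs_of_nonneg (by positivity)]
        calc (h : ℝ) * |y| ≤ H * (1 / (8 * H)) := by gcongr
          _ = 1 / 8 := by field_simp
      have hy2 : ((h : ℝ) * y) ^ 2 ≤ (1 / 8) ^ 2 := sq_le_sq' (abs_le.mp hy).1 (abs_le.mp hy).2
      have hp := Real.pi_lt_four
      have hp0 := Real.pi_pos
      have hp2 : Real.pi ^ 2 ≤ 16 := by nlinarith
      have : (2 * Real.pi * (h * y)) ^ 2 = 4 * (Real.pi ^ 2 * (h * y) ^ 2) := by ring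
      rw [this]
      have : Real.pi ^ 2 * ((h : ℝ) * y) ^ 2 ≤ 16 * (1 / 8) ^ 2 := by gcongr
      linarith
    have := Finset.card_nsmul_le_sum _ _ _ this
    rw [Finset.card_range, nsmul_eq_mul] at this
    linarith
  have : ((H : ℝ) / 2) ^ 2 ≤ ‖∑ h ∈ Finset.range H, csfpE (h * x)‖ ^ 2 := by gcongr
  linarith

lemma csfp_fejer (H N : ℕ) (hH : 0 < H) (x : ℕ → ℝ) (S : Finset ℕ) (hS : S ⊆ Finset.range N)
    (hx : ∀ n ∈ S, distNearestInt (x n) ≤ 1 / (8 * H)) :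
    (S.card : ℝ) * H ≤ 4 * N + 8 * ∑ h ∈ Finset.Icc 1 H, ‖∑ n ∈ Finset.range N, csfpE (h * x n)‖ := by
  have hH' : (0 : ℝ) < H := by exact_mod_cast hH
  have h1 : (S.card : ℝ) * (H ^ 2 / 4) ≤ ∑ n ∈ Finset.range N, ‖∑ h ∈ Finset.range H, csfpE (h * x n)‖ ^ 2 := by
    calc _ ≤ ∑ n ∈ S, ‖∑ h ∈ Finset.range H, csfpE (h * x n)‖ ^ 2 := by
          have := Finset.card_nsmul_le_sum S _ _ (fun n hn => csfp_fejer_lower H hH (x n) (hx n hn))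
          rwa [nsmul_eq_mul] at this
      _ ≤ _ := Finset.sum_le_sum_of_subset_of_nonneg hS fun _ _ _ => by positivity
  have h2 : ∑ n ∈ Finset.range N, ‖∑ h ∈ Finset.range H, csfpE (h * x n)‖ ^ 2 =
      N * H + 2 * (∑ d ∈ Finset.range H, ((H - (d + 1) : ℕ) : ℂ) * ∑ n ∈ Finset.range N, csfpE ((d + 1 : ℕ) * x n)).re := by
    have : ∀ n, ‖∑ h ∈ Finset.range H, csfpE (h * x n)‖ ^ 2 =
        H + 2 * (∑ d ∈ Finset.range H, ((H - (d + 1) : ℕ) : ℂ) * csfpE ((d + 1 : ℕ) * x n)).re := by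
      intro n
      rw [csfp_diff (fun h => csfpE (h * x n)) (fun _ => csfpE_norm _)]
      congr 3
      refine Finset.sum_congr rfl fun d _ => ?_
      rw [Finset.sum_congr rfl (g := fun _ => csfpE ((d + 1 : ℕ) * x n)), Finset.sum_const, Finset.card_range, nsmul_eq_mul]
      intro j _
      rw [csfpE_conj, ← csfpE_add]
      congr 1; push_cast; ring
    simp only [this]
    rw [Finset.sum_add_distrib, ← Finset.mul_sum, ← Complex.re_sum, Finset.sum_comm]
    simp [Finset.mul_sum]
  have h3 : (∑ d ∈ Finset.range H, ((H - (d + 1) : ℕ) : ℂ) * ∑ n ∈ Finset.range N, csfpE ((d + 1 : ℕ) * x n)).re ≤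
      H * ∑ h ∈ Finset.Icc 1 H, ‖∑ n ∈ Finset.range N, csfpE (h * x n)‖ := by
    refine (Complex.re_le_norm _).trans ?_
    rw [csfp_shift, Finset.mul_sum]
    refine (norm_sum_le _ _).trans (Finset.sum_le_sum fun d _ => ?_)
    rw [norm_mul, Complex.norm_natCast]
    gcongr
    exact Nat.sub_le _ _
  rw [h2] at h1
  set W := ∑ h ∈ Finset.Icc 1 H, ‖∑ n ∈ Finset.range N, csfpE (h * x n)‖
  have h4 : ((S.card : ℝ) * H) * H ≤ (4 * N + 8 * W) * H := by nlinarith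
  exact le_of_mul_le_mul_right h4 hH'

lemma csfp_core (ε : ℝ) (hε : 0 < ε) :
    ∃ C : ℝ, 0 < C ∧ ∀ (K α b : ℝ) (H N : ℕ) (S : Finset ℕ), 10 ≤ K → 1 ≤ α →
      α ≤ Real.sqrt K → 0 < H → (H : ℝ) ≤ α → 0 < N → (N : ℝ) ≤ α * Real.sqrt K →
      S ⊆ Finset.range N →
      (∀ n ∈ S, distNearestInt ((n + b) ^ 2 / α ^ 2) ≤ 1 / (8 * H)) →
      (S.card : ℝ) * H ≤ 4 * N + C * H * K ^ ((1 : ℝ) / 2 + ε) := by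
  obtain ⟨C1, hC1, hdiv⟩ := csfp_divisor_bound (ε / 2) (by positivity)
  set C2 : ℝ := 1 + 64 * C1 * (1 + 1 / ε) with hC2
  have hC2pos : 0 < C2 := by positivity
  refine ⟨8 * Real.sqrt C2, by positivity, ?_⟩
  intro K α b H N S hK hα hαK hH hHα hN hNK hS hx
  have hK0 : 0 < K := by linarith
  set s := Real.sqrt K with hs
  have hss : s * s = K := Real.mul_self_sqrt hK0.le
  have hs0 : 0 < s := Real.sqrt_pos.mpr hK0
  have hH1 : (1 : ℝ) ≤ H := by exact_mod_cast hH
  have hN1 : (1 : ℝ) ≤ N := by exact_mod_cast hN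
  have hα0 : 0 < α := by linarith
  set A : ℝ := α ^ 2 with hA
  have hA1 : 1 ≤ A := by nlinarith
  have hA0 : 0 < A := by linarith
  have hAK : A ≤ K := by nlinarith
  have hNK1 : (N : ℝ) ≤ K := by nlinarith
  have hNA : (N : ℝ) ^ 2 ≤ A * K := by
    have : (N : ℝ) ^ 2 ≤ (α * s) ^ 2 := by gcongr
    calc _ ≤ _ := this
      _ = A * K := by rw [hA, ← hss]; ring
  set T : ℕ → ℝ := fun h => ‖∑ n ∈ Finset.range N, csfpE (h * ((n + b) ^ 2 / A))‖ with hT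
  set f : ℕ → ℝ := fun m => (N : ℝ) / (1 + N * distNearestInt (m / A)) with hf
  have hf0 : ∀ m, 0 ≤ f m := by
    intro m
    have := csfp_dist_nonneg ((m : ℝ) / A)
    simp only [hf]; positivity
  have hW : ∀ h : ℕ, T h ^ 2 ≤ N + 4 * ∑ d ∈ Finset.Icc 1 N, f (2 * h * d) := by
    intro h
    have := csfp_weyl N hN (h / A) (2 * b * h / A) (h * b ^ 2 / A)
    refine le_trans (le_of_eq ?_) (this.trans (le_of_eq ?_))
    · simp only [hT]
      congr 2
      refine Finset.sum_congr rfl fun n _ => ?_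
      congr 1; field_simp; ring
    · congr 2
      refine Finset.sum_congr rfl fun d _ => ?_
      simp only [hf]
      congr 4; push_cast; ring
  set D : ℝ := C1 * K ^ ε with hD
  have hKε : 1 ≤ K ^ ε := Real.one_le_rpow (by linarith) hε.le
  have hD0 : 0 < D := by positivity
  have hDb : ∀ m ∈ Finset.Icc 1 (2 * H * N), (m.divisors.card : ℝ) ≤ D := by
    intro m hm
    obtain ⟨hm1, hm2⟩ := Finset.mem_Icc.mp hm
    refine (hdiv m (by omega)).trans ?_
    rw [hD]
    gcongr
    have hmK : (m : ℝ) ≤ K ^ (2 : ℝ) := by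
      have h1 : (m : ℝ) ≤ 2 * H * N := by exact_mod_cast hm2
      have h2 : 2 * α ≤ K := by nlinarith
      have h3 : 2 * (H : ℝ) * N ≤ K * K := by
        have : 2 * (H : ℝ) ≤ K := by linarith
        gcongr
      rw [Real.rpow_two]; nlinarith
    calc (m : ℝ) ^ (ε / 2) ≤ (K ^ (2 : ℝ)) ^ (ε / 2) := by gcongr
      _ = K ^ ε := by rw [← Real.rpow_mul hK0.le]; congr 1; ring
  have hdbl := csfp_double H N D f hf0 hDb
  have hG := csfp_sum_G A N hA1 (by linarith) (2 * H * N)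
  set L : ℝ := 1 + Real.log A with hL
  have hL1 : 1 ≤ L := by
    have := Real.log_nonneg hA1
    linarith
  have hLK : L ≤ (1 + 1 / ε) * K ^ ε := by
    have h1 : Real.log A ≤ Real.log K := Real.log_le_log hA0 hAK
    have h2 := Real.log_le_rpow_div hK0.le hε
    have : (1 + 1 / ε) * K ^ ε = K ^ ε + K ^ ε / ε := by ring
    rw [this]; linarith
  have hprod : (((2 * H * N : ℕ) : ℝ) / A + 2) * (2 * (N + A * L)) ≤ 16 * (H * K * L) := by
    have e1 : (((2 * H * N : ℕ) : ℝ) / A + 2) * (2 * (N + A * L)) =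
        4 * (H * (N ^ 2 / A)) + 4 * (H * N * L) + 4 * N + 4 * (A * L) := by
      push_cast; field_simp; ring
    rw [e1]
    have e2 : (N : ℝ) ^ 2 / A ≤ K := by rw [div_le_iff₀ hA0]; linarith
    have e3 : (H : ℝ) * (N ^ 2 / A) ≤ H * K * L := by
      calc (H : ℝ) * (N ^ 2 / A) ≤ H * K := by gcongr
        _ ≤ H * K * L := le_mul_of_one_le_right (by positivity) hL1
    have e4 : (H : ℝ) * N * L ≤ H * K * L := by gcongr
    have e5 : (N : ℝ) ≤ H * K * L := by
      calc (N : ℝ) ≤ K := hNK1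
        _ ≤ H * K := le_mul_of_one_le_left hK0.le hH1
        _ ≤ H * K * L := le_mul_of_one_le_right (by positivity) hL1
    have e6 : A * L ≤ H * K * L := by
      gcongr
      calc A ≤ K := hAK
        _ ≤ H * K := le_mul_of_one_le_left hK0.le hH1
    linarith
  have hsumT2 : ∑ h ∈ Finset.Icc 1 H, T h ^ 2 ≤ H * (K * (C2 * (K ^ ε * K ^ ε))) := by
    calc ∑ h ∈ Finset.Icc 1 H, T h ^ 2
        ≤ ∑ h ∈ Finset.Icc 1 H, ((N : ℝ) + 4 * ∑ d ∈ Finset.Icc 1 N, f (2 * h * d)) :=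
          Finset.sum_le_sum fun h _ => hW h
      _ = H * N + 4 * ∑ h ∈ Finset.Icc 1 H, ∑ d ∈ Finset.Icc 1 N, f (2 * h * d) := by
          rw [Finset.sum_add_distrib, ← Finset.mul_sum]; simp
      _ ≤ H * N + 4 * (D * (16 * (H * K * L))) := by
          gcongr
          refine hdbl.trans ?_
          gcongr
          exact hG.trans hprod
      _ ≤ H * K * (K ^ ε * K ^ ε) + 4 * (D * (16 * (H * K * ((1 + 1 / ε) * K ^ ε)))) := by
          have : (H : ℝ) * N ≤ H * K * (K ^ ε * K ^ ε) := by
            calc (H : ℝ) * N ≤ H * K := by gcongr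
              _ ≤ _ := le_mul_of_one_le_right (by positivity) (by nlinarith)
          gcongr
      _ = _ := by rw [hD, hC2]; ring
  set Q : ℝ := K ^ ((1 : ℝ) / 2 + ε) with hQ
  have hQ2 : Q ^ 2 = K * (K ^ ε * K ^ ε) := by
    rw [hQ, ← Real.rpow_natCast, ← Real.rpow_mul hK0.le, ← Real.rpow_add hK0]
    nth_rewrite 2 [← Real.rpow_one K]
    rw [← Real.rpow_add hK0]
    congr 1; push_cast; ring
  have hQ0 : 0 ≤ Q := by positivity
  have hsumT : ∑ h ∈ Finset.Icc 1 H, T h ≤ H * (Real.sqrt C2 * Q) := by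
    apply le_of_sq_le_sq _ (by positivity)
    have := sq_sum_le_card_mul_sum_sq (s := Finset.Icc 1 H) (f := T)
    refine this.trans ?_
    calc ((Finset.Icc 1 H).card : ℝ) * ∑ h ∈ Finset.Icc 1 H, T h ^ 2
        ≤ H * (H * (K * (C2 * (K ^ ε * K ^ ε)))) := by
          have : ((Finset.Icc 1 H).card : ℝ) = H := by simp
          rw [this]; gcongr
      _ = (H * (Real.sqrt C2 * Q)) ^ 2 := by
          rw [mul_pow, mul_pow, Real.sq_sqrt hC2pos.le, hQ2]; ring
  have hfin := csfp_fejer H N hH (fun n => ((n : ℝ) + b) ^ 2 / A) S hS hx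
  have : 8 * Real.sqrt C2 * H * Q = 8 * (H * (Real.sqrt C2 * Q)) := by ring
  rw [this]
  linarith

set_option maxHeartbeats 1000000 in
lemma csfp_pos (ε : ℝ) (hε : 0 < ε) :
    ∃ C : ℝ, 0 < C ∧ ∀ (K α β δ : ℝ) (F : Finset ℕ) (ν : ℕ → ℤ), 10 ≤ K →
      2 ≤ α * Real.sqrt K → α ≤ Real.sqrt K → 1 ≤ δ * Real.sqrt K → δ ≤ 1 / 2 →
      (∀ k ∈ F, K < (k : ℝ) ∧ (k : ℝ) ≤ 2 * K ∧ |β + α * Real.sqrt k - ν k| < δ) →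
      (F.card : ℝ) ≤ C * (K * δ + K ^ ((1 : ℝ) / 2 + ε)) := by
  obtain ⟨C, hC, hcore⟩ := csfp_core ε hε
  refine ⟨C + 256, by positivity, ?_⟩
  intro K α β δ F ν hK hα1 hα2 hδ1 hδ2 hF
  have hK0 : 0 < K := by linarith
  set s := Real.sqrt K with hs
  have hss : s * s = K := Real.mul_self_sqrt hK0.le
  have hs0 : 0 < s := Real.sqrt_pos.mpr hK0
  have hs3 : 3 ≤ s := by
    rw [hs]; exact Real.le_sqrt_of_sq_le (by linarith)
  have hα0 : 0 < α := by
    by_contra h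
    nlinarith
  have hδ0 : 0 < δ := by
    by_contra h
    nlinarith
  have hQ0 : 0 < K ^ ((1 : ℝ) / 2 + ε) := by positivity
  have hsq : ∀ k ∈ F, s ≤ Real.sqrt k ∧ Real.sqrt k ≤ 1.42 * s ∧ Real.sqrt k * Real.sqrt k = k := by
    intro k hk
    obtain ⟨h1, h2, _⟩ := hF k hk
    refine ⟨Real.sqrt_le_sqrt h1.le, ?_, Real.mul_self_sqrt (by positivity)⟩
    rw [Real.sqrt_le_left (by positivity)]
    nlinarith
  set a : ℤ := ⌊β + α * s - 1⌋ with ha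
  set N : ℕ := ⌈0.42 * (α * s) + 3⌉₊ with hN
  have hNle : (N : ℝ) ≤ 0.42 * (α * s) + 4 := by
    have := Nat.ceil_lt_add_one (a := 0.42 * (α * s) + 3) (by positivity)
    rw [hN]; linarith
  have hNpos : 0 < N := Nat.ceil_pos.mpr (by positivity)
  have hνrange : ∀ k ∈ F, 0 ≤ ν k - a ∧ ν k - a < N := by
    intro k hk
    obtain ⟨_, _, h3⟩ := hF k hk
    obtain ⟨g1, g2, _⟩ := hsq k hk
    obtain ⟨h3, h4⟩ := abs_lt.mp h3
    have a1 := Int.floor_le (β + α * s - 1)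
    have a2 := Int.lt_floor_add_one (β + α * s - 1)
    rw [← ha] at a1 a2
    have m1 : α * s ≤ α * Real.sqrt k := by gcongr
    have m2 : α * Real.sqrt k ≤ 1.42 * (α * s) := by
            linarith [mul_le_mul_of_nonneg_left g2 hα0.le]
    have n1 := Nat.le_ceil (0.42 * (α * s) + 3)
    rw [← hN] at n1
    constructor
    · have : (a : ℝ) ≤ ν k := by linarith
      have : a ≤ ν k := by exact_mod_cast this
      omega
    · have : ((ν k - a : ℤ) : ℝ) < ((N : ℤ) : ℝ) := by push_cast; linarith
      exact_mod_cast this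
  set μ : ℕ → ℕ := fun k => (ν k - a).toNat with hμ
  have hμν : ∀ k ∈ F, ((μ k : ℕ) : ℝ) = ν k - a := by
    intro k hk
    have h : ((μ k : ℕ) : ℤ) = ν k - a := Int.toNat_of_nonneg (hνrange k hk).1
    have : (((μ k : ℕ) : ℤ) : ℝ) = ((ν k - a : ℤ) : ℝ) := by rw [h]
    push_cast at this; exact this
  have hμN : F.image μ ⊆ Finset.range N := by
    intro x hx
    obtain ⟨k, hk, rfl⟩ := Finset.mem_image.mp hx
    have h := hνrange k hk
    simp only [hμ, Finset.mem_range]; omega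
  have hfib : ∀ k ∈ F, ∀ k' ∈ F, μ k = μ k' → α * ((k : ℝ) - k') ≤ 6 * (δ * s) := by
    intro k hk k' hk' h
    have e : (ν k : ℝ) = ν k' := by
      have h1 := hμν k hk; have h2 := hμν k' hk'; rw [h] at h1; linarith
    obtain ⟨_, _, h3⟩ := hF k hk
    obtain ⟨_, _, h3'⟩ := hF k' hk'
    obtain ⟨g1, g2, g3⟩ := hsq k hk
    obtain ⟨g1', g2', g3'⟩ := hsq k' hk'
    have h4 := (abs_lt.mp h3).2
    have h5 := (abs_lt.mp h3').1
    have h6 : α * (Real.sqrt k - Real.sqrt k') ≤ 2 * δ := by nlinarith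
    calc α * ((k : ℝ) - k') = α * (Real.sqrt k - Real.sqrt k') * (Real.sqrt k + Real.sqrt k') := by
          linear_combination (-α) * g3 + α * g3'
      _ ≤ 2 * δ * (Real.sqrt k + Real.sqrt k') := by gcongr
      _ ≤ 2 * δ * (3 * s) := by gcongr; linarith
      _ = _ := by ring
  rcases lt_or_ge α (32 * (δ * s)) with hcase | hcase
  · -- trivial count
    set q : ℕ := ⌊6 * (δ * s) / α⌋₊ + 1 with hq
    have hcard : F.card ≤ q * (F.image μ).card := by
      refine Finset.card_le_mul_card_image F q fun b hb => ?_
      obtain ⟨k0, hk0, hk0b⟩ := Finset.mem_image.mp hb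
      set G := {x ∈ F | μ x = b} with hG
      have hne : G.Nonempty := ⟨k0, by simp [hG, hk0, hk0b]⟩
      set m := G.min' hne with hm
      have hmG : m ∈ G := Finset.min'_mem _ _
      have hsub : G ⊆ Finset.Ico m (m + q) := by
        intro x hx
        have hmx : m ≤ x := Finset.min'_le _ _ hx
        have hx' := Finset.mem_filter.mp hx
        have hm' := Finset.mem_filter.mp hmG
        have h := hfib x hx'.1 m hm'.1 (by rw [hx'.2, hm'.2])
        have h2 : (x : ℝ) - m ≤ 6 * (δ * s) / α := by
          rw [le_div_iff₀ hα0]; linarith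
        have h3 : x - m ≤ ⌊6 * (δ * s) / α⌋₊ := by
          apply Nat.le_floor; rw [Nat.cast_sub hmx]; exact h2
        rw [Finset.mem_Ico]; omega
      calc G.card ≤ _ := Finset.card_le_card hsub
        _ = q := by simp
    have hcard2 : (F.card : ℝ) ≤ q * N := by
      have : (F.image μ).card ≤ N := by
        simpa using Finset.card_le_card hμN
      exact_mod_cast hcard.trans (Nat.mul_le_mul_left q this)
    have hq2 : (q : ℝ) ≤ 38 * (δ * s / α) := by
      have h1 : (⌊6 * (δ * s) / α⌋₊ : ℝ) ≤ 6 * (δ * s) / α := Nat.floor_le (by positivity)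
      have h2 : 1 ≤ 32 * (δ * s / α) := by
        rw [← mul_div_assoc, le_div_iff₀ hα0]; linarith
      have h3 : 6 * (δ * s) / α = 6 * (δ * s / α) := by ring
      rw [hq]; push_cast; linarith
    have hN3 : (N : ℝ) ≤ 3 * (α * s) := by linarith
    calc (F.card : ℝ) ≤ q * N := hcard2
      _ ≤ (38 * (δ * s / α)) * (3 * (α * s)) := by gcongr
      _ = 114 * (K * δ) := by rw [← hss]; field_simp; ring
      _ ≤ _ := by
        have : 0 < K * δ := by positivity
        nlinarith [mul_pos hC this, mul_pos hC hQ0]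
  · -- exponential sums
    have hδs : 0 < δ * s := by positivity
    have hinj : Set.InjOn μ (F : Set ℕ) := by
      intro k hk k' hk' h
      have h1 := hfib k hk k' hk' h
      have h2 := hfib k' hk' k hk h.symm
      have h3 : (k : ℝ) - k' < 1 := by
        by_contra hc
        have : α * 1 ≤ α * ((k : ℝ) - k') := by gcongr; linarith
        linarith
      have h4 : (k' : ℝ) - k < 1 := by
        by_contra hc
        have : α * 1 ≤ α * ((k' : ℝ) - k) := by gcongr; linarith
        linarith
      have h5 : k < k' + 1 := by
        have : (k : ℝ) < k' + 1 := by linarith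
        exact_mod_cast this
      have h6 : k' < k + 1 := by
        have : (k' : ℝ) < k + 1 := by linarith
        exact_mod_cast this
      omega
    set y : ℝ := α / (32 * (δ * s)) with hy
    have hy1 : 1 ≤ y := by rw [hy, le_div_iff₀ (by positivity)]; linarith
    set H : ℕ := ⌊y⌋₊ with hH
    have hHpos : 0 < H := Nat.floor_pos.mpr hy1
    have hH1 : (1 : ℝ) ≤ H := by exact_mod_cast hHpos
    have hHy : (H : ℝ) ≤ y := Nat.floor_le (by linarith)
    have hyH : y ≤ 2 * H := by
      have := Nat.lt_floor_add_one y
      rw [← hH] at this; linarith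
    have hyα : y ≤ α := by
      rw [hy]; apply div_le_self hα0.le; linarith
    have hα32 : 32 ≤ α := by linarith
    have hαs : 96 ≤ α * s := by nlinarith
    have hNs : (N : ℝ) ≤ α * s := by linarith
    have hmain := hcore K α (a - β) H N (F.image μ) hK (by linarith) hα2 hHpos (by linarith) hNpos
      hNs hμN (by
        intro n hn
        obtain ⟨k, hk, rfl⟩ := Finset.mem_image.mp hn
        rw [hμν k hk]
        obtain ⟨_, _, h3⟩ := hF k hk
        obtain ⟨g1, g2, g3⟩ := hsq k hk
        have e0 : ((ν k : ℝ) - a + (a - β)) = ν k - β := by ring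
        rw [e0]
        set w : ℝ := ν k - β with hw
        have h3' : |α * Real.sqrt k - w| < δ := by
          rw [hw]; convert h3 using 2; ring
        have h5 : |α * Real.sqrt k + w| ≤ 4 * (α * s) := by
          have hm2 : α * Real.sqrt k ≤ 1.42 * (α * s) := by
            linarith [mul_le_mul_of_nonneg_left g2 hα0.le]
          have hm0 : 0 ≤ α * Real.sqrt k := by positivity
          obtain ⟨u1, u2⟩ := abs_lt.mp h3'
          rw [abs_le]; constructor <;> linarith
        have h6 : |w ^ 2 / α ^ 2 - k| ≤ 4 * (δ * s) / α := by
          have e1 : w ^ 2 / α ^ 2 - k = -((α * Real.sqrt k - w) * (α * Real.sqrt k + w)) / α ^ 2 := by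
            rw [eq_div_iff (by positivity), sub_mul, div_mul_cancel₀ _ (by positivity)]
            nth_rewrite 1 [← g3]; ring
          rw [e1, abs_div, abs_neg, abs_mul, abs_of_pos (by positivity : 0 < α ^ 2),
            div_le_div_iff₀ (by positivity) hα0]
          calc |α * Real.sqrt k - w| * |α * Real.sqrt k + w| * α ≤ δ * (4 * (α * s)) * α := by
                gcongr
            _ = _ := by ring
        have h7 : distNearestInt (w ^ 2 / α ^ 2) ≤ |w ^ 2 / α ^ 2 - ((k : ℤ) : ℝ)| := round_le _ _
        refine h7.trans ?_
        rw [Int.cast_natCast]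
        refine h6.trans ?_
        have h8 : 4 * (δ * s) / α = 1 / (8 * y) := by rw [hy]; field_simp; norm_num
        rw [h8]
        gcongr)
    rw [Finset.card_image_of_injOn hinj] at hmain
    set Q := K ^ ((1 : ℝ) / 2 + ε)
    have hfin : (F.card : ℝ) * H ≤ (256 * (K * δ) + C * Q) * H := by
      have : (N : ℝ) ≤ 64 * (K * δ) * H := by
        calc (N : ℝ) ≤ α * s := hNs
          _ = 32 * (K * δ) * y := by rw [hy, ← hss]; field_simp
          _ ≤ 32 * (K * δ) * (2 * H) := by gcongr
          _ = _ := by ring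
      linarith
    have h9 := le_of_mul_le_mul_right hfin (by linarith)
    have : 0 < K * δ := by positivity
    nlinarith [mul_pos hC this]

theorem count_small_fractional_parts (ε : ℝ) (hε : 0 < ε) :
    ∃ C : ℝ, 0 < C ∧ ∀ K α β δ : ℝ,
      10 ≤ K → 2 * K ^ (-(1 : ℝ) / 2) ≤ |α| → |α| ≤ K ^ ((1 : ℝ) / 2) →
      0 < δ → δ < 1 / 2 →
      (Set.ncard {k : ℕ | K < (k : ℝ) ∧ (k : ℝ) ≤ 2 * K ∧
          distNearestInt (β + α * Real.sqrt k) < δ} : ℝ) ≤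
        C * (K * δ + K ^ ((1 : ℝ) / 2 + ε)) := by
  obtain ⟨C, hC, hpos⟩ := csfp_pos ε hε
  refine ⟨2 * C, by positivity, ?_⟩
  intro K α β δ hK hα1 hα2 hδ0 hδ2
  have hK0 : 0 < K := by linarith
  rw [← Real.sqrt_eq_rpow] at hα2
  have hneg : K ^ (-(1 : ℝ) / 2) = (Real.sqrt K)⁻¹ := by
    rw [Real.sqrt_eq_rpow, ← Real.rpow_neg hK0.le]; congr 1; ring
  rw [hneg] at hα1
  have hQ : Real.sqrt K ≤ K ^ ((1 : ℝ) / 2 + ε) := by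
    rw [Real.sqrt_eq_rpow]
    exact Real.rpow_le_rpow_of_exponent_le (by linarith) (by linarith)
  set s := Real.sqrt K with hs
  have hss : s * s = K := Real.mul_self_sqrt hK0.le
  have hs0 : 0 < s := Real.sqrt_pos.mpr hK0
  have hs3 : 3 ≤ s := by
    rw [hs]; exact Real.le_sqrt_of_sq_le (by linarith)
  have hα1' : 2 ≤ |α| * s := by
    rw [← div_eq_mul_inv, div_le_iff₀ hs0] at hα1; exact hα1
  set X : Set ℕ := {k : ℕ | K < (k : ℝ) ∧ (k : ℝ) ≤ 2 * K ∧
          distNearestInt (β + α * Real.sqrt k) < δ} with hX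
  have hfin : X.Finite := by
    refine (Set.finite_Iic ⌊2 * K⌋₊).subset ?_
    intro k hk
    exact Nat.le_floor hk.2.1
  rw [Set.ncard_eq_toFinset_card X hfin]
  set δ' : ℝ := max δ s⁻¹ with hδ'
  have hδ's : 1 ≤ δ' * s := by
    have : s⁻¹ ≤ δ' := le_max_right _ _
    calc (1 : ℝ) = s⁻¹ * s := by field_simp
      _ ≤ δ' * s := by gcongr
  have hδ'2 : δ' ≤ 1 / 2 := by
    refine max_le hδ2.le ?_
    rw [inv_le_comm₀ hs0 (by norm_num)]; linarith
  have hδ'3 : K * δ' ≤ K * δ + s := by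
    have : δ' ≤ δ + s⁻¹ := max_le (by have : 0 < s⁻¹ := by positivity
                                      linarith) (by linarith)
    calc K * δ' ≤ K * (δ + s⁻¹) := by gcongr
      _ = K * δ + s := by rw [← hss]; field_simp
  have hbound : (hfin.toFinset.card : ℝ) ≤ C * (K * δ' + K ^ ((1 : ℝ) / 2 + ε)) := by
    rcases le_total 0 α with h | h
    · rw [abs_of_nonneg h] at hα1' hα2
      refine hpos K α β δ' hfin.toFinset (fun k => round (β + α * Real.sqrt k)) hK hα1' hα2 hδ's hδ'2 ?_
      intro k hk
      rw [Set.Finite.mem_toFinset] at hk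
      exact ⟨hk.1, hk.2.1, lt_of_lt_of_le hk.2.2 (le_max_left _ _)⟩
    · rw [abs_of_nonpos h] at hα1' hα2
      refine hpos K (-α) (-β) δ' hfin.toFinset (fun k => -round (β + α * Real.sqrt k)) hK hα1' hα2 hδ's hδ'2 ?_
      intro k hk
      rw [Set.Finite.mem_toFinset] at hk
      refine ⟨hk.1, hk.2.1, lt_of_lt_of_le (lt_of_eq_of_lt ?_ hk.2.2) (le_max_left _ _)⟩
      rw [distNearestInt, ← abs_neg]
      congr 1; push_cast; ring
  refine hbound.trans ?_
  have : 0 < K * δ := by positivity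
  calc C * (K * δ' + K ^ ((1 : ℝ) / 2 + ε)) ≤ C * (2 * (K * δ + K ^ ((1 : ℝ) / 2 + ε))) := by
        gcongr; linarith
    _ = _ := by ring
end

section
/- Fix an integer k ≥ 2 and 1 ≤ ℓ < k. For every ε > 0, the series s_{k;ℓ}(d) converges and |s_{k;ℓ}(d) − s_{k;ℓ}(d; y)| ≤ C(ε) · y^{−1/2+ε} for all y > 1. -/
/-- The divisor function `d(n)`. -/
def divfun (n : ℕ) : ℕ := n.divisors.card

/-- The summand `d(n₁)⋯d(n_k)/(n₁⋯n_k)^{3/4}` for a tuple `v`. -/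
noncomputable def sklTerm (k : ℕ) (v : Fin k → ℕ+) : ℝ :=
  (∏ j : Fin k, (divfun (v j) : ℝ)) / (∏ j : Fin k, ((v j : ℕ) : ℝ)) ^ ((3 : ℝ) / 4)

/-- The condition `√n₁ + ⋯ + √n_ℓ = √n_{ℓ+1} + ⋯ + √n_k`. -/
def sklCond (k l : ℕ) (v : Fin k → ℕ+) : Prop :=
  ∑ j : Fin k, (if (j : ℕ) < l then (1 : ℝ) else -1) * Real.sqrt ((v j : ℕ)) = 0

/-- The series `s_{k;ℓ}(d)`. -/
noncomputable def skl (k l : ℕ) : ℝ :=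
  ∑' v : {v : Fin k → ℕ+ // sklCond k l v}, sklTerm k v.1

/-- The truncated series `s_{k;ℓ}(d; y)`, restricted to tuples with all entries `≤ y`. -/
noncomputable def sklTrunc (k l : ℕ) (y : ℝ) : ℝ :=
  ∑' v : {v : Fin k → ℕ+ // sklCond k l v ∧ ∀ j, ((v j : ℕ) : ℝ) ≤ y}, sklTerm k v.1

lemma aux_trace {L : Type*} [Field L] [Algebra ℚ L] [FiniteDimensional ℚ L] (x : L) (D : ℕ)
    (hx : x ^ 2 = (D : L)) (hD : ¬ IsSquare D) : Algebra.trace ℚ L x = 0 := by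
  have hirr : Irreducible (Polynomial.X ^ 2 - Polynomial.C (D : ℚ)) := by
    apply X_pow_sub_C_irreducible_of_prime Nat.prime_two
    intro b hb
    apply hD
    rw [← Rat.isSquare_natCast_iff]
    exact ⟨b, by rw [← hb]; ring⟩
  have hmp : minpoly ℚ x = Polynomial.X ^ 2 - Polynomial.C (D : ℚ) := by
    symm
    apply minpoly.eq_of_irreducible_of_monic hirr
    · simp [hx]
    · exact Polynomial.monic_X_pow_sub_C _ (by norm_num)
  have hdeg : (Polynomial.X ^ 2 - Polynomial.C (D : ℚ)).natDegree = 2 :=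
    Polynomial.natDegree_X_pow_sub_C
  rw [trace_eq_finrank_mul_minpoly_nextCoeff, hmp, Polynomial.nextCoeff_of_natDegree_pos, hdeg]
  · simp only [Polynomial.coeff_sub, Polynomial.coeff_X_pow, Polynomial.coeff_C]
    norm_num
  · rw [hdeg]; norm_num

/-- the terms whose product with `n j0` is a square already cancel. -/
lemma aux_indep {k : ℕ} (e : Fin k → ℚ) (n : Fin k → ℕ) (j0 : Fin k) (hpos : 0 < n j0)
    (h : ∑ j, (e j : ℝ) * Real.sqrt (n j) = 0) [DecidablePred fun j => IsSquare (n j * n j0)] :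
    ∑ j ∈ Finset.univ.filter (fun j => IsSquare (n j * n j0)), (e j : ℝ) * Real.sqrt (n j) = 0 := by
  let S : Set ℝ := Set.range fun j => Real.sqrt (n j)
  let L := IntermediateField.adjoin ℚ S
  have hfd : FiniteDimensional ℚ L := by
    apply IntermediateField.finiteDimensional_adjoin
    rintro _ ⟨j, rfl⟩
    refine ⟨Polynomial.X ^ 2 - Polynomial.C (n j : ℚ), Polynomial.monic_X_pow_sub_C _ (by norm_num), ?_⟩
    simp
  let s : Fin k → L := fun j => ⟨Real.sqrt (n j), IntermediateField.subset_adjoin ℚ S ⟨j, rfl⟩⟩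
  have hs : ∀ j, (s j) ^ 2 = ((n j : ℕ) : L) := by
    intro j
    apply Subtype.ext
    simp [s]
  have hL : ∑ j, (e j) • (s j * s j0) = 0 := by
    apply Subtype.ext
    have : ∑ j, (e j : ℝ) * Real.sqrt (n j) * Real.sqrt (n j0) = 0 := by
      rw [← Finset.sum_mul, h, zero_mul]
    simpa [s, Algebra.smul_def, mul_assoc] using this
  have htr := congrArg (Algebra.trace ℚ L) hL
  rw [map_sum, map_zero, ← Finset.sum_filter_add_sum_filter_not Finset.univ
    (fun j => IsSquare (n j * n j0))] at htr
  rw [Finset.sum_eq_zero (s := Finset.univ.filter (fun j => ¬ IsSquare (n j * n j0))), add_zero] at htr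
  swap
  · intro j hj
    rw [map_smul, aux_trace (s j * s j0) (n j * n j0), smul_zero]
    · rw [mul_pow, hs, hs]; push_cast; rfl
    · simpa using hj
  have key : ∀ j, IsSquare (n j * n j0) → ∃ t : ℕ, n j * n j0 = t * t ∧
      Algebra.trace ℚ L (s j * s j0) = (Module.finrank ℚ L : ℚ) * t ∧
      Real.sqrt (n j) * Real.sqrt (n j0) = t := by
    rintro j ⟨t, ht⟩
    have h1 : Real.sqrt (n j) * Real.sqrt (n j0) = t := by
      rw [← Real.sqrt_mul (by positivity), ← Nat.cast_mul, ht]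
      simp
    refine ⟨t, ht, ?_, h1⟩
    have : s j * s j0 = algebraMap ℚ L t := by
      apply Subtype.ext
      simpa [s] using h1
    rw [this, Algebra.trace_algebraMap]
    simp
  have hfin : (Module.finrank ℚ L : ℚ) ≠ 0 := by
    have : 0 < Module.finrank ℚ L := Module.finrank_pos
    positivity
  have h2 : ∑ j ∈ Finset.univ.filter (fun j => IsSquare (n j * n j0)),
      (e j : ℝ) * (Real.sqrt (n j) * Real.sqrt (n j0)) = 0 := by
    have h3 : (Module.finrank ℚ L : ℝ) * ∑ j ∈ Finset.univ.filter (fun j => IsSquare (n j * n j0)),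
      (e j : ℝ) * (Real.sqrt (n j) * Real.sqrt (n j0)) = 0 := by
      have := congrArg (fun q : ℚ => (q : ℝ)) htr
      simp only [Rat.cast_sum, Rat.cast_zero] at this
      rw [← this, Finset.mul_sum]
      apply Finset.sum_congr rfl
      intro j hj
      obtain ⟨t, -, h4, h5⟩ := key j (by simpa using hj)
      rw [map_smul, h4, h5]
      push_cast [smul_eq_mul]
      ring
    rcases mul_eq_zero.mp h3 with h4 | h4
    · exact absurd (by exact_mod_cast h4) hfin
    · exact h4
  simp_rw [← mul_assoc] at h2
  rw [← Finset.sum_mul] at h2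
  rcases mul_eq_zero.mp h2 with h4 | h4
  · exact h4
  · exfalso
    have : 0 < Real.sqrt (n j0) := Real.sqrt_pos.mpr (by exact_mod_cast hpos)
    linarith

lemma aux_squarefree {a b : ℕ} (ha : Squarefree a) (hb : Squarefree b) (h : IsSquare (a * b)) :
    a = b := by
  have key : ∀ {a b : ℕ}, Squarefree a → Squarefree b → IsSquare (a * b) → a ∣ b := by
    rintro a b ha hb ⟨t, ht⟩
    have h1 : a ∣ t := by
      rw [← ha.dvd_pow_iff_dvd (n := 2) (by norm_num), sq, ← ht]
      exact dvd_mul_right _ _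
    obtain ⟨s, rfl⟩ := h1
    have ha0 : 0 < a := Nat.pos_of_ne_zero ha.ne_zero
    refine ⟨s * s, ?_⟩
    apply Nat.eq_of_mul_eq_mul_left ha0
    rw [ht]; ring
  exact Nat.dvd_antisymm (key ha hb h) (key hb ha (by rwa [mul_comm]))

lemma aux_divisor (δ : ℝ) (hδ : 0 < δ) :
    ∃ C : ℝ, 1 ≤ C ∧ ∀ n : ℕ, 0 < n → (divfun n : ℝ) ≤ C * (n : ℝ) ^ δ := by
  set K : ℝ := 1 + 1 / (δ * Real.log 2) with hK
  have hlog : 0 < Real.log 2 := Real.log_pos (by norm_num)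
  have hK1 : 1 ≤ K := by rw [hK]; have : 0 < 1 / (δ * Real.log 2) := by positivity
                         linarith
  obtain ⟨P, hP⟩ := exists_nat_ge ((2 : ℝ) ^ (1 / δ))
  refine ⟨K ^ P, one_le_pow₀ hK1, ?_⟩
  intro n hn
  have hpp : ∀ p a : ℕ, p.Prime → ((a : ℝ) + 1) ≤ (if p < P then K else 1) * ((p : ℝ) ^ a) ^ δ := by
    intro p a hp
    have hp2 : (2 : ℝ) ≤ p := by exact_mod_cast hp.two_le
    split_ifs with h
    · have h1 : ((2 : ℝ) ^ a) ^ δ ≤ ((p : ℝ) ^ a) ^ δ := by gcongr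
      have h2 : 1 + a * (δ * Real.log 2) ≤ ((2 : ℝ) ^ a) ^ δ := by
        rw [← Real.rpow_natCast, ← Real.rpow_mul (by norm_num), Real.rpow_def_of_pos (by norm_num)]
        have := Real.add_one_le_exp (Real.log 2 * (a * δ))
        linarith
      have h3 : (a : ℝ) + 1 ≤ K * (1 + a * (δ * Real.log 2)) := by
        set u := δ * Real.log 2 with hu
        have hu0 : 0 < u := by positivity
        have : K * (1 + a * u) = 1 + a + a * u + 1 / u := by rw [hK]; field_simp; ring
        rw [this]
        have : 0 ≤ a * u + 1 / u := by positivity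
        linarith
      calc (a : ℝ) + 1 ≤ K * (1 + a * (δ * Real.log 2)) := h3
        _ ≤ K * ((p : ℝ) ^ a) ^ δ := by gcongr; linarith
    · rw [one_mul]
      have h1 : (2 : ℝ) ≤ (p : ℝ) ^ δ := by
        have : (2 : ℝ) ^ (1 / δ) ≤ p := hP.trans (by exact_mod_cast (not_lt.mp h))
        calc (2 : ℝ) = ((2 : ℝ) ^ (1 / δ)) ^ δ := by
              rw [← Real.rpow_mul (by norm_num)]; field_simp; simp
          _ ≤ _ := by gcongr
      have h2 : ((p : ℝ) ^ a) ^ δ = ((p : ℝ) ^ δ) ^ a := by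
        rw [← Real.rpow_natCast, ← Real.rpow_natCast, ← Real.rpow_mul (by positivity),
          ← Real.rpow_mul (by positivity), mul_comm]
      rw [h2]
      calc (a : ℝ) + 1 ≤ 2 ^ a := by
            have := Nat.lt_two_pow_self (n := a)
            exact_mod_cast this
        _ ≤ _ := by gcongr
  have h1 : (divfun n : ℝ) = ∏ p ∈ n.primeFactors, ((n.factorization p : ℝ) + 1) := by
    rw [divfun, Nat.card_divisors hn.ne']
    push_cast; rfl
  have h2 : (n : ℝ) ^ δ = ∏ p ∈ n.primeFactors, ((p : ℝ) ^ (n.factorization p)) ^ δ := by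
    rw [Real.finsetProd_rpow _ _ (fun i _ => by positivity)]
    congr 1
    conv_lhs => rw [← Nat.prod_factorization_pow_eq_self hn.ne', Finsupp.prod]
    push_cast; rfl
  have h3 : ∏ p ∈ n.primeFactors, (if p < P then K else 1) ≤ K ^ P := by
    rw [← Finset.prod_filter, Finset.prod_const]
    apply pow_le_pow_right₀ hK1
    calc _ ≤ (Finset.range P).card := Finset.card_le_card (by intro p; simp)
      _ = P := Finset.card_range P
  rw [h1, h2]
  calc _ ≤ ∏ p ∈ n.primeFactors, ((if p < P then K else 1) * ((p : ℝ) ^ (n.factorization p)) ^ δ) := by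
        apply Finset.prod_le_prod
        · intros; positivity
        · intro p hp; exact hpp p _ (Nat.prime_of_mem_primeFactors hp)
    _ ≤ _ := by
        rw [Finset.prod_mul_distrib]
        gcongr
open scoped ENNReal
lemma aux_tsum_fin {α : Type*} : ∀ (n : ℕ) (f : Fin n → α → ℝ≥0∞),
    ∑' u : Fin n → α, ∏ i, f i (u i) = ∏ i, ∑' a, f i a := by
  intro n
  induction n with
  | zero => intro f; simp
  | succ n ih =>
    intro f
    rw [← (Fin.consEquiv (fun _ : Fin (n+1) => α)).tsum_eq, ENNReal.tsum_prod', Fin.prod_univ_succ, ← ih]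
    simp only [Fin.consEquiv, Equiv.coe_fn_mk, Fin.prod_univ_succ, Fin.cons_zero, Fin.cons_succ]
    simp_rw [ENNReal.tsum_mul_left, ENNReal.tsum_mul_right]

lemma aux_tsum_pi {ι α : Type*} [Fintype ι] (f : ι → α → ℝ≥0∞) :
    ∑' u : ι → α, ∏ i, f i (u i) = ∏ i, ∑' a, f i a := by
  let e := Fintype.equivFin ι
  rw [← (e.symm.prod_comp (fun i => ∑' a, f i a)), ← aux_tsum_fin,
    ← (Equiv.arrowCongr e (Equiv.refl α)).tsum_eq]
  congr 1; ext u
  rw [← e.symm.prod_comp]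
  simp [Equiv.arrowCongr]

lemma aux_zeta (s : ℝ) (hs : 1 < s) : ∑' n : ℕ+, ENNReal.ofReal (((n : ℕ) : ℝ) ^ (-s)) ≠ ⊤ := by
  have h : Summable fun n : ℕ+ => ((n : ℕ) : ℝ) ^ (-s) :=
    (Real.summable_nat_rpow.mpr (by linarith)).comp_injective PNat.coe_injective
  exact h.tsum_ofReal_ne_top

/-- tuples in which every squarefree part occurs twice -/
lemma aux_sum {k : ℕ} (η : ℝ) (hη : 0 < η) (A : Set (Fin k → ℕ+))
    (hA : ∀ v ∈ A, ∀ j, ∃ i, i ≠ j ∧ IsSquare ((v i : ℕ) * (v j : ℕ)))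
    (hsf : ∀ a b : ℕ, Squarefree a → Squarefree b → IsSquare (a * b) → a = b) :
    ∑' v : A, ENNReal.ofReal (∏ j, ((v.1 j : ℕ) : ℝ) ^ (-(1/2 + η))) ≠ ⊤ := by
  classical
  set g : ℝ → ℕ+ → ℝ≥0∞ := fun s n => ENNReal.ofReal (((n : ℕ) : ℝ) ^ (-s)) with hg
  -- maps all of whose nonempty fibres have two elements
  let T : Set (Fin k → Fin k) := {τ | ∀ j, ∃ i, i ≠ j ∧ τ i = τ j}
  let X := Σ τ : T, (Set.range τ.1 → ℕ+) × (Fin k → ℕ+)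
  let Φ : X → (Fin k → ℕ+) := fun x j => x.2.1 ⟨x.1.1 j, j, rfl⟩ * (x.2.2 j) ^ 2
  have hsub : A ⊆ Set.range Φ := by
    intro v hv
    have hdec : ∀ j, ∃ r m : ℕ+, (v j : ℕ+) = r * m ^ 2 ∧ Squarefree (r : ℕ) := by
      intro j
      obtain ⟨a, b, ha, hb, hab, hsq⟩ := Nat.sq_mul_squarefree_of_pos (v j).pos
      refine ⟨⟨a, ha⟩, ⟨b, hb⟩, ?_, hsq⟩
      apply PNat.coe_injective
      rw [← hab, mul_comm]; rfl
    choose r m hrm hsq using hdec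
    have hr : ∀ j, ∃ i, i ≠ j ∧ r i = r j := by
      intro j
      obtain ⟨i, hij, hi⟩ := hA v hv j
      refine ⟨i, hij, PNat.coe_injective (hsf _ _ (hsq i) (hsq j) ?_)⟩
      rw [← Rat.isSquare_natCast_iff]
      obtain ⟨t, ht⟩ := hi
      have hmi : ((m i : ℕ) : ℚ) ≠ 0 := by simp
      have hmj : ((m j : ℕ) : ℚ) ≠ 0 := by simp
      refine ⟨t / (m i * m j), ?_⟩
      have : ((v i : ℕ) : ℚ) * (v j : ℕ) = t * t := by exact_mod_cast ht
      rw [hrm i, hrm j] at this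
      push_cast at this ⊢
      field_simp
      linarith
    -- representative
    let τ : Fin k → Fin k := fun j => Set.rangeSplitting r ⟨r j, j, rfl⟩
    have hτ : ∀ j, r (τ j) = r j := fun j => Set.apply_rangeSplitting r ⟨r j, j, rfl⟩
    have hT : τ ∈ T := by
      intro j
      obtain ⟨i, hij, hi⟩ := hr j
      refine ⟨i, hij, ?_⟩
      simp only [τ, hi]
    refine ⟨⟨⟨τ, hT⟩, fun i => r i.1, m⟩, ?_⟩
    funext j
    simp only [Φ, hτ, hrm j]
  have hsurj : ∑' v : A, ENNReal.ofReal (∏ j, ((v.1 j : ℕ) : ℝ) ^ (-(1/2 + η)))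
      ≤ ∑' x : X, ENNReal.ofReal (∏ j, ((Φ x j : ℕ) : ℝ) ^ (-(1/2 + η))) := by
    let F : (Fin k → ℕ+) → ℝ≥0∞ := fun v => ENNReal.ofReal (∏ j, ((v j : ℕ) : ℝ) ^ (-(1/2 + η)))
    calc ∑' v : A, F v ≤ ∑' v : Set.range Φ, F v := ENNReal.tsum_mono_subtype F hsub
      _ ≤ ∑' x : X, F (Set.rangeFactorization Φ x) :=
        ENNReal.tsum_le_tsum_comp_of_surjective Set.rangeFactorization_surjective (fun v => F v.1)
      _ = _ := rfl
  refine ne_top_of_le_ne_top ?_ hsurj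
  rw [ENNReal.tsum_sigma', tsum_fintype]
  refine ENNReal.sum_ne_top.mpr ?_
  intro τ _
  have hbound : ∀ x : (Set.range τ.1 → ℕ+) × (Fin k → ℕ+),
      ENNReal.ofReal (∏ j, ((Φ ⟨τ, x⟩ j : ℕ) : ℝ) ^ (-(1/2 + η)))
      ≤ (∏ i, g (1 + 2 * η) (x.1 i)) * ∏ j, g (1 + 2 * η) (x.2 j) := by
    rintro ⟨r, m⟩
    have h1 : ∏ j, ((Φ ⟨τ, r, m⟩ j : ℕ) : ℝ) ^ (-(1/2 + η)) =
      (∏ j, ((r ⟨τ.1 j, j, rfl⟩ : ℕ) : ℝ) ^ (-(1/2 + η))) * ∏ j, ((m j : ℕ) : ℝ) ^ (-(1 + 2 * η)) := by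
      rw [← Finset.prod_mul_distrib]
      apply Finset.prod_congr rfl
      intro j _
      simp only [Φ]
      push_cast
      rw [Real.mul_rpow (by positivity) (by positivity), ← Real.rpow_natCast, ← Real.rpow_mul (by positivity)]
      congr 2
      push_cast; ring
    have h2 : ∏ j, ((r ⟨τ.1 j, j, rfl⟩ : ℕ) : ℝ) ^ (-(1/2 + η)) ≤ ∏ i, ((r i : ℕ) : ℝ) ^ (-(1 + 2 * η)) := by
      rw [← Finset.prod_fiberwise Finset.univ (fun j => (⟨τ.1 j, j, rfl⟩ : Set.range τ.1))]
      apply Finset.prod_le_prod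
      · intros; positivity
      · rintro ⟨_, j, rfl⟩ _
        obtain ⟨i, hij, hi⟩ := τ.2 j
        rw [Finset.prod_congr rfl (g := fun _ => ((r ⟨τ.1 j, j, rfl⟩ : ℕ) : ℝ) ^ (-(1/2 + η))), Finset.prod_const]
        · have hcard : 2 ≤ (Finset.univ.filter (fun i => (⟨τ.1 i, i, rfl⟩ : Set.range τ.1) = ⟨τ.1 j, j, rfl⟩)).card := by
            rw [← Finset.card_pair hij]
            apply Finset.card_le_card
            intro x hx
            simp only [Finset.mem_insert, Finset.mem_singleton] at hx
            rcases hx with rfl | rfl <;> simp [hi]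
          have hr1 : (1 : ℝ) ≤ (r ⟨τ.1 j, j, rfl⟩ : ℕ) := by exact_mod_cast (r ⟨τ.1 j, j, rfl⟩).pos
          calc _ ≤ (((r ⟨τ.1 j, j, rfl⟩ : ℕ) : ℝ) ^ (-(1/2 + η))) ^ 2 := by
                apply pow_le_pow_of_le_one (by positivity) _ hcard
                exact Real.rpow_le_one_of_one_le_of_nonpos hr1 (by linarith)
            _ = _ := by
                rw [← Real.rpow_natCast, ← Real.rpow_mul (by positivity)]
                congr 1; push_cast; ring
        · intro x hx
          simp only [Finset.mem_filter, Finset.mem_univ, true_and] at hx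
          rw [hx]
    rw [h1, ENNReal.ofReal_mul (by positivity)]
    simp only [hg]
    rw [← ENNReal.ofReal_prod_of_nonneg (fun i _ => by positivity),
      ← ENNReal.ofReal_prod_of_nonneg (fun i _ => by positivity)]
    gcongr
  refine ne_top_of_le_ne_top ?_ (ENNReal.tsum_le_tsum hbound)
  rw [ENNReal.tsum_prod']
  simp_rw [ENNReal.tsum_mul_left, ENNReal.tsum_mul_right]
  rw [aux_tsum_pi (fun _ => g (1 + 2 * η)), aux_tsum_pi (fun _ => g (1 + 2 * η))]
  have hz : ∑' n, g (1 + 2 * η) n ≠ ⊤ := aux_zeta _ (by linarith)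
  exact ENNReal.mul_ne_top (ENNReal.prod_ne_top fun _ _ => hz) (ENNReal.prod_ne_top fun _ _ => hz)

lemma aux_cond {k l : ℕ} (v : Fin k → ℕ+) (h : sklCond k l v) (j : Fin k) :
    ∃ i, i ≠ j ∧ IsSquare ((v i : ℕ) * (v j : ℕ)) ∧ ((v j : ℕ) : ℝ) ≤ (k : ℝ) ^ 2 * ((v i : ℕ) : ℝ) := by
  classical
  by_contra hcon
  push Not at hcon
  let e : Fin k → ℚ := fun j => if (j : ℕ) < l then 1 else -1
  have he : ∀ j, |(e j : ℝ)| = 1 := by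
    intro j
    simp only [e]; split_ifs <;> simp
  have h0 : ∑ j, (e j : ℝ) * Real.sqrt ((v j : ℕ)) = 0 := by
    rw [← h]
    apply Finset.sum_congr rfl
    intro j _
    simp only [e]; split_ifs <;> simp
  have h1 := aux_indep e (fun j => (v j : ℕ)) j (v j).pos h0
  have hmem : j ∈ Finset.univ.filter (fun i => IsSquare ((v i : ℕ) * (v j : ℕ))) := by simp
  rw [← Finset.add_sum_erase _ _ hmem] at h1
  have hk : (0 : ℝ) < k := by exact_mod_cast (Fin.pos j)
  set x := Real.sqrt ((v j : ℕ)) with hx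
  have hx0 : 0 < x := Real.sqrt_pos.mpr (by exact_mod_cast (v j).pos)
  set E := (Finset.univ.filter (fun i => IsSquare ((v i : ℕ) * (v j : ℕ)))).erase j with hE
  have hcard : (E.card : ℝ) + 1 ≤ k := by
    have h2 : E.card + 1 ≤ k := by
      rw [hE, Finset.card_erase_add_one hmem]
      exact (Finset.card_le_univ _).trans (by simp)
    exact_mod_cast h2
  have h2 : x ≤ ∑ i ∈ E, Real.sqrt ((v i : ℕ)) := by
    have h3 : |(e j : ℝ) * x| = |∑ i ∈ E, (e i : ℝ) * Real.sqrt ((v i : ℕ))| := by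
      rw [eq_neg_of_add_eq_zero_left h1, abs_neg]
    rw [abs_mul, he, one_mul, abs_of_pos hx0] at h3
    rw [h3]
    refine (Finset.abs_sum_le_sum_abs _ _).trans (Finset.sum_le_sum ?_)
    intro i _
    rw [abs_mul, he, one_mul, abs_of_nonneg (Real.sqrt_nonneg _)]
  have h4 : ∀ i ∈ E, Real.sqrt ((v i : ℕ)) ≤ x / k := by
    intro i hi
    simp only [hE, Finset.mem_erase, Finset.mem_filter, Finset.mem_univ, true_and] at hi
    have h5 := hcon i hi.1 hi.2
    apply Real.sqrt_le_iff.mpr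
    refine ⟨by positivity, ?_⟩
    rw [div_pow, hx, Real.sq_sqrt (by positivity), le_div_iff₀ (by positivity)]
    linarith
  have h5 := Finset.sum_le_card_nsmul E _ _ h4
  rw [nsmul_eq_mul] at h5
  have h6 : (E.card : ℝ) * (x / k) < x := by
    rw [← mul_div_assoc, div_lt_iff₀ hk]
    nlinarith
  linarith

theorem skl_convergent_and_truncation (k l : ℕ) (hk : 2 ≤ k) (hl : 1 ≤ l) (hlk : l < k)
    (ε : ℝ) (hε : 0 < ε) :
    (Summable fun v : {v : Fin k → ℕ+ // sklCond k l v} => sklTerm k v.1) ∧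
      ∃ C : ℝ, 0 < C ∧ ∀ y : ℝ, 1 < y →
        |skl k l - sklTrunc k l y| ≤ C * y ^ (-(1 : ℝ) / 2 + ε) := by
  classical
  obtain ⟨ε', hε', hle, hq⟩ : ∃ ε' : ℝ, 0 < ε' ∧ ε' ≤ ε ∧ ε' ≤ 1 / 4 :=
    ⟨min ε (1 / 4), by positivity, min_le_left _ _, min_le_right _ _⟩
  obtain ⟨D, hD1, hD⟩ := aux_divisor (ε' / 4) (by positivity)
  set A : Set (Fin k → ℕ+) := {v | sklCond k l v} with hA
  set G : (Fin k → ℕ+) → ℝ := fun v => ∏ j, ((v j : ℕ) : ℝ) ^ (-(1/2 + ε' / 4)) with hG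
  have hG0 : ∀ v, 0 ≤ G v := fun v => by simp only [hG]; positivity
  have hT0 : ∀ v, 0 ≤ sklTerm k v := fun v => by unfold sklTerm; positivity
  have hGsum : Summable fun v : A => G v := by
    have := aux_sum (ε' / 4) (by positivity) A
      (fun v hv j => by
        obtain ⟨i, h1, h2, -⟩ := aux_cond v hv j
        exact ⟨i, h1, h2⟩) (fun a b ha hb h => aux_squarefree ha hb h)
    have h2 := ENNReal.summable_toReal this
    refine h2.congr ?_
    intro v
    exact ENNReal.toReal_ofReal (hG0 v)
  set W : ℝ := k * D ^ k with hW
  have hk1 : (1 : ℝ) ≤ k := by exact_mod_cast (by omega : 1 ≤ k)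
  have hW0 : 0 < W := by positivity
  have hn1 : ∀ (v : Fin k → ℕ+) j, (1 : ℝ) ≤ ((v j : ℕ) : ℝ) := fun v j => by
    exact_mod_cast (v j).pos
  have hmain : ∀ v ∈ A, ∀ j, sklTerm k v * ((v j : ℕ) : ℝ) ^ (1/2 - ε') ≤ W * G v := by
    intro v hv j
    obtain ⟨i, hij, -, hi⟩ := aux_cond v hv j
    have h1 : sklTerm k v ≤ ∏ j, (D * ((v j : ℕ) : ℝ) ^ (ε' / 4 - 3 / 4)) := by
      unfold sklTerm
      rw [← Real.finsetProd_rpow _ _ (fun i _ => by positivity), ← Finset.prod_div_distrib]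
      apply Finset.prod_le_prod
      · intros; positivity
      · intro j _
        rw [Real.rpow_sub (by linarith [hn1 v j]), ← mul_div_assoc]
        gcongr
        exact hD _ (v j).pos
    have h2 : ((v j : ℕ) : ℝ) ^ (1/2 - ε') ≤ k * ∏ j, ((v j : ℕ) : ℝ) ^ (1/4 - ε' / 2) := by
      have h3 : ((v j : ℕ) : ℝ) ^ (1/2 - ε') =
          ((v j : ℕ) : ℝ) ^ (1/4 - ε' / 2) * ((v j : ℕ) : ℝ) ^ (1/4 - ε' / 2) := by
        rw [← Real.rpow_add (by linarith [hn1 v j])]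
        congr 1; ring
      have h4 : ((v j : ℕ) : ℝ) ^ (1/4 - ε' / 2) ≤ k * ((v i : ℕ) : ℝ) ^ (1/4 - ε' / 2) := by
        calc ((v j : ℕ) : ℝ) ^ (1/4 - ε' / 2) ≤ ((k : ℝ) ^ 2 * ((v i : ℕ) : ℝ)) ^ (1/4 - ε' / 2) :=
              Real.rpow_le_rpow (by positivity) hi (by linarith)
          _ = ((k : ℝ) ^ 2) ^ (1/4 - ε' / 2) * ((v i : ℕ) : ℝ) ^ (1/4 - ε' / 2) :=
              Real.mul_rpow (by positivity) (by positivity)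
          _ ≤ _ := by
              gcongr
              rw [← Real.rpow_natCast, ← Real.rpow_mul (by positivity)]
              calc _ ≤ (k : ℝ) ^ (1 : ℝ) := by
                    apply Real.rpow_le_rpow_of_exponent_le hk1
                    push_cast; linarith
                _ = k := Real.rpow_one _
      have h5 : ((v i : ℕ) : ℝ) ^ (1/4 - ε' / 2) * ((v j : ℕ) : ℝ) ^ (1/4 - ε' / 2)
          ≤ ∏ j, ((v j : ℕ) : ℝ) ^ (1/4 - ε' / 2) := by
        rw [← Finset.prod_pair (f := fun j => ((v j : ℕ) : ℝ) ^ (1/4 - ε' / 2)) hij]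
        rw [← Finset.prod_sdiff (Finset.subset_univ {i, j})]
        refine le_mul_of_one_le_left (Finset.prod_nonneg fun _ _ => by positivity) ?_
        calc (1 : ℝ) = ∏ _j ∈ Finset.univ \ {i, j}, (1 : ℝ) := by simp
          _ ≤ _ := Finset.prod_le_prod (fun _ _ => zero_le_one)
            (fun x _ => Real.one_le_rpow (hn1 v x) (by linarith))
      rw [h3]
      calc _ ≤ (k * ((v i : ℕ) : ℝ) ^ (1/4 - ε' / 2)) * ((v j : ℕ) : ℝ) ^ (1/4 - ε' / 2) := by gcongr
        _ = k * (((v i : ℕ) : ℝ) ^ (1/4 - ε' / 2) * ((v j : ℕ) : ℝ) ^ (1/4 - ε' / 2)) := by ring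
        _ ≤ _ := by gcongr
    calc _ ≤ (∏ j, (D * ((v j : ℕ) : ℝ) ^ (ε' / 4 - 3 / 4))) *
          (k * ∏ j, ((v j : ℕ) : ℝ) ^ (1/4 - ε' / 2)) := by
            gcongr
      _ = W * G v := by
        rw [Finset.prod_mul_distrib, Finset.prod_const, Finset.card_univ, Fintype.card_fin]
        have : G v = (∏ j, ((v j : ℕ) : ℝ) ^ (ε' / 4 - 3 / 4)) *
            ∏ j, ((v j : ℕ) : ℝ) ^ (1/4 - ε' / 2) := by
          rw [← Finset.prod_mul_distrib]
          apply Finset.prod_congr rfl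
          intro j _
          rw [← Real.rpow_add (by linarith [hn1 v j])]
          congr 1; ring
        rw [this, hW]; ring
  have hsum : Summable fun v : A => sklTerm k v := by
    refine Summable.of_nonneg_of_le (fun v => hT0 v) (fun v => ?_) (hGsum.mul_left W)
    refine le_trans ?_ (hmain v v.2 ⟨0, by omega⟩)
    apply le_mul_of_one_le_right (hT0 _)
    exact Real.one_le_rpow (hn1 _ _) (by linarith)
  refine ⟨hsum, W * (∑' v : A, G v) + 1, ?_, ?_⟩
  · have : 0 ≤ ∑' v : A, G v := tsum_nonneg fun v => hG0 v
    positivity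
  intro y hy
  set B : Set (Fin k → ℕ+) := {v | sklCond k l v ∧ ∀ j, ((v j : ℕ) : ℝ) ≤ y} with hB
  have hBA : B ⊆ A := fun v hv => hv.1
  have e1 : skl k l = ∑' v, A.indicator (sklTerm k) v := tsum_subtype A (sklTerm k)
  have e2 : sklTrunc k l y = ∑' v, B.indicator (sklTerm k) v := tsum_subtype B (sklTerm k)
  have s1 : Summable (A.indicator (sklTerm k)) := summable_subtype_iff_indicator.mp hsum
  have s2 : Summable (B.indicator (sklTerm k)) := by
    refine Summable.of_nonneg_of_le (fun v => Set.indicator_nonneg (fun v _ => hT0 v) v) (fun v => ?_) s1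
    exact Set.indicator_le_indicator_of_subset hBA (fun v => hT0 v) v
  have s3 : Summable (A.indicator G) := summable_subtype_iff_indicator.mp hGsum
  have hy0 : 0 < y := by linarith
  rw [e1, e2, ← s1.tsum_sub s2, abs_of_nonneg]
  · calc _ ≤ ∑' v, (W * y ^ (-(1/2 - ε'))) * A.indicator G v := by
          refine (s1.sub s2).tsum_le_tsum ?_ (s3.mul_left _)
          intro v
          by_cases hvB : v ∈ B
          · rw [Set.indicator_of_mem hvB, Set.indicator_of_mem (hBA hvB), sub_self]
            have := Set.indicator_nonneg (s := A) (fun v _ => hG0 v) v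
            positivity
          · rw [Set.indicator_of_notMem hvB, sub_zero]
            by_cases hvA : v ∈ A
            · rw [Set.indicator_of_mem hvA, Set.indicator_of_mem hvA]
              have : ∃ j, y < ((v j : ℕ) : ℝ) := by
                by_contra hcon
                push Not at hcon
                exact hvB ⟨hvA, hcon⟩
              obtain ⟨j, hj⟩ := this
              have h1 := hmain v hvA j
              have h2 : y ^ (1/2 - ε') ≤ ((v j : ℕ) : ℝ) ^ (1/2 - ε') :=
                Real.rpow_le_rpow hy0.le hj.le (by linarith)
              have h3 : sklTerm k v * y ^ (1/2 - ε') ≤ W * G v :=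
                (mul_le_mul_of_nonneg_left h2 (hT0 v)).trans h1
              rw [Real.rpow_neg hy0.le]
              have h4 : 0 < y ^ (1/2 - ε') := by positivity
              calc _ ≤ W * G v / y ^ (1/2 - ε') := by rwa [le_div_iff₀ h4]
                _ = _ := by rw [div_eq_mul_inv]; ring
            · rw [Set.indicator_of_notMem hvA, Set.indicator_of_notMem hvA]; simp
      _ = (W * ∑' v : A, G v) * y ^ (-(1/2 - ε')) := by
          rw [tsum_mul_left, tsum_subtype A G]; ring
      _ ≤ _ := by
          have h0 : 0 ≤ ∑' v : A, G v := tsum_nonneg fun v => hG0 v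
          gcongr
          · linarith
          · exact hy.le
          · linarith
  · refine tsum_nonneg fun v => sub_nonneg.mpr ?_
    exact Set.indicator_le_indicator_of_subset hBA (fun v => hT0 v) v
end

section
/- Fix signs σ₅, σ₆ ∈ {+1, −1}. For every ε > 0 there is a constant C(ε) > 0 such that for all real numbers N₁, …, N₇ ≥ 2 and all Δ > 0, the number of 7-tuples of positive integers (n₁,…,n₇) with n_j ~ N_j for j = 1,…,7 satisfying 0 < |√n₁ + √n₂ + √n₃ + √n₄ + σ₅·√n₅ + σ₆·√n₆ − √n₇| < Δ is at most C(ε) · ∏_{j=1}^{7} (Δ^{1/7}·N_j^{13/14} + N_j^{5/7})·N_j^{ε}. -/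
/-- integer vectors of length four -/
abbrev Z4 : Type := ℤ × ℤ × ℤ × ℤ

/-- the signed pairing -/
def pairZ {R : Type*} [CommRing R] (X Y : R × R × R × R) : R :=
  X.1 * Y.1 + X.2.1 * Y.2.1 - X.2.2.1 * Y.2.2.1 - X.2.2.2 * Y.2.2.2

/-- reduction modulo q -/
def redZ (q : ℕ) (X : Z4) : ZMod q × ZMod q × ZMod q × ZMod q :=
  ((X.1 : ZMod q), (X.2.1 : ZMod q), (X.2.2.1 : ZMod q), (X.2.2.2 : ZMod q))

lemma pairZ_red (q : ℕ) (X Y : Z4) : pairZ (redZ q X) (redZ q Y) = ((pairZ X Y : ℤ) : ZMod q) := by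
  simp [pairZ, redZ]

lemma sum_char4 (q : ℕ) [NeZero q] (X : ZMod q × ZMod q × ZMod q × ZMod q) :
    ∑ ζ : ZMod q × ZMod q × ZMod q × ZMod q, ZMod.stdAddChar (pairZ X ζ) =
      if X = 0 then (q : ℂ) ^ 4 else 0 := by
  classical
  obtain ⟨a, b, c, d⟩ := X
  have h1 : ∀ t : ZMod q, ∑ x : ZMod q, ZMod.stdAddChar (x * t) = if t = 0 then (q : ℂ) else 0 := by
    intro t
    have := AddChar.sum_mulShift t (ZMod.isPrimitive_stdAddChar q)
    simpa [ZMod.card] using this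
  have h2 : ∀ ζ : ZMod q × ZMod q × ZMod q × ZMod q,
      (ZMod.stdAddChar (pairZ (a, b, c, d) ζ) : ℂ) =
      ZMod.stdAddChar (ζ.1 * a) * (ZMod.stdAddChar (ζ.2.1 * b) *
        (ZMod.stdAddChar (ζ.2.2.1 * (-c)) * ZMod.stdAddChar (ζ.2.2.2 * (-d)))) := by
    intro ζ
    rw [← AddChar.map_add_eq_mul, ← AddChar.map_add_eq_mul, ← AddChar.map_add_eq_mul]
    congr 1
    simp only [pairZ]; ring
  simp_rw [h2, Fintype.sum_prod_type, ← Finset.mul_sum, ← Finset.sum_mul, h1]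
  simp only [neg_eq_zero, Prod.ext_iff, Prod.fst_zero, Prod.snd_zero]
  by_cases ha : a = 0 <;> by_cases hb : b = 0 <;> by_cases hc : c = 0 <;> by_cases hd : d = 0 <;>
    simp [ha, hb, hc, hd]
  ring

lemma fourier_card (q : ℕ) [NeZero q] (A Ξ : Finset Z4) (m : ℕ)
    (hA : ∀ X ∈ A, ∀ X' ∈ A, redZ q X = redZ q X' → X = X')
    (hΞ : ∀ ζ, (Ξ.filter (fun z => redZ q z = ζ)).card ≤ m)
    (hb : ∀ X ∈ A, ∀ z ∈ Ξ, |((pairZ X z : ℤ) : ℝ) / q| ≤ 1 / 6) :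
    (Ξ.card : ℝ) * A.card ≤ 4 * m * (q : ℝ) ^ 4 := by
  classical
  set S : (ZMod q × ZMod q × ZMod q × ZMod q) → ℂ :=
    fun ζ => ∑ X ∈ A, ZMod.stdAddChar (pairZ (redZ q X) ζ) with hS
  have htot : ∑ ζ, ‖S ζ‖ ^ 2 = (q : ℝ) ^ 4 * A.card := by
    have hC : ∑ ζ, ((‖S ζ‖ ^ 2 : ℝ) : ℂ) = (q : ℂ) ^ 4 * A.card := by
      have e1 : ∀ ζ, ((‖S ζ‖ ^ 2 : ℝ) : ℂ) =
          ∑ X ∈ A, ∑ X' ∈ A, ZMod.stdAddChar (pairZ (redZ q X - redZ q X') ζ) := by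
        intro ζ
        have : ((‖S ζ‖ ^ 2 : ℝ) : ℂ) = S ζ * (starRingEnd ℂ) (S ζ) := by
          rw [Complex.mul_conj, Complex.normSq_eq_norm_sq]
        rw [this, hS]
        simp only [map_sum, Finset.sum_mul_sum]
        refine Finset.sum_congr rfl fun X _ => Finset.sum_congr rfl fun X' _ => ?_
        rw [← AddChar.map_neg_eq_conj, ← AddChar.map_add_eq_mul]
        congr 1
        simp only [pairZ, Prod.fst_sub, Prod.snd_sub]; ring
      simp_rw [e1]
      rw [Finset.sum_comm]
      have : ∀ X ∈ A, ∑ ζ, ∑ X' ∈ A, (ZMod.stdAddChar (pairZ (redZ q X - redZ q X') ζ) : ℂ)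
          = (q : ℂ) ^ 4 := by
        intro X hX
        rw [Finset.sum_comm]
        simp_rw [sum_char4]
        rw [Finset.sum_eq_single X]
        · simp
        · intro X' hX' hne
          rw [if_neg]
          intro h
          exact hne (hA X hX X' hX' (sub_eq_zero.mp h)).symm
        · intro h; exact absurd hX h
      rw [Finset.sum_congr rfl this]
      simp [mul_comm]
    exact_mod_cast hC
  have hlow : ∀ z ∈ Ξ, ((A.card : ℝ) / 2) ^ 2 ≤ ‖S (redZ q z)‖ ^ 2 := by
    intro z hz
    have h1 : (A.card : ℝ) / 2 ≤ (S (redZ q z)).re := by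
      rw [hS]
      simp only [Complex.re_sum]
      have : (A.card : ℝ) / 2 = ∑ X ∈ A, (1 / 2 : ℝ) := by simp; ring
      rw [this]
      refine Finset.sum_le_sum fun X hX => ?_
      rw [pairZ_red, ZMod.stdAddChar_coe]
      have h := hb X hX z hz
      have e : (2 * Real.pi * Complex.I * ((pairZ X z : ℤ) : ℂ) / (q : ℂ)) =
          ((2 * Real.pi * (((pairZ X z : ℤ) : ℝ) / q) : ℝ) : ℂ) * Complex.I := by
        push_cast; ring
      rw [e, Complex.exp_ofReal_mul_I_re, ← Real.cos_abs, ← Real.cos_pi_div_three]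
      apply Real.cos_le_cos_of_nonneg_of_le_pi (abs_nonneg _)
      · linarith [Real.pi_pos]
      · rw [abs_mul, abs_of_pos (by positivity : (0:ℝ) < 2 * Real.pi)]
        nlinarith [Real.pi_pos]
    have h2 : (S (redZ q z)).re ≤ ‖S (redZ q z)‖ := Complex.re_le_norm _
    have h0 : (0:ℝ) ≤ (A.card : ℝ) / 2 := by positivity
    gcongr
    linarith
  have hup : ∑ z ∈ Ξ, ‖S (redZ q z)‖ ^ 2 ≤ m * ∑ ζ, ‖S ζ‖ ^ 2 := by
    rw [← Finset.sum_fiberwise (s := Ξ) (g := redZ q), Finset.mul_sum]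
    refine Finset.sum_le_sum fun ζ _ => ?_
    have : ∀ z ∈ Ξ.filter (fun z => redZ q z = ζ), ‖S (redZ q z)‖ ^ 2 = ‖S ζ‖ ^ 2 := by
      intro z hz
      rw [(Finset.mem_filter.mp hz).2]
    rw [Finset.sum_congr rfl this, Finset.sum_const, nsmul_eq_mul]
    have := hΞ ζ
    gcongr
  have h3 : (Ξ.card : ℝ) * ((A.card : ℝ) / 2) ^ 2 ≤ m * ((q : ℝ) ^ 4 * A.card) := by
    rw [← htot]
    refine le_trans ?_ hup
    have := Finset.sum_le_sum hlow
    simpa using this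
  rcases Nat.eq_zero_or_pos A.card with h0 | hpos
  · rw [h0]; simp; positivity
  · have hp : (0:ℝ) < A.card := by exact_mod_cast hpos
    have : (A.card : ℝ) * ((Ξ.card : ℝ) * A.card) ≤ A.card * (4 * m * (q : ℝ) ^ 4) := by nlinarith
    exact le_of_mul_le_mul_left this hp


lemma dvd_of_redZ (q : ℕ) (z z' : Z4) (h : redZ q z = redZ q z') :
    ∃ Y : Z4, z.1 - z'.1 = q * Y.1 ∧ z.2.1 - z'.2.1 = q * Y.2.1 ∧
      z.2.2.1 - z'.2.2.1 = q * Y.2.2.1 ∧ z.2.2.2 - z'.2.2.2 = q * Y.2.2.2 := by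
  simp only [redZ, Prod.mk.injEq] at h
  obtain ⟨h1, h2, h3, h4⟩ := h
  have e1 := (ZMod.intCast_eq_intCast_iff_dvd_sub _ _ _).1 h1.symm
  have e2 := (ZMod.intCast_eq_intCast_iff_dvd_sub _ _ _).1 h2.symm
  have e3 := (ZMod.intCast_eq_intCast_iff_dvd_sub _ _ _).1 h3.symm
  have e4 := (ZMod.intCast_eq_intCast_iff_dvd_sub _ _ _).1 h4.symm
  obtain ⟨a, ha⟩ := e1
  obtain ⟨b, hb⟩ := e2
  obtain ⟨c, hc⟩ := e3
  obtain ⟨d, hd⟩ := e4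
  exact ⟨(a, b, c, d), ha, hb, hc, hd⟩

lemma exists_inj_mod (A : Finset Z4) : ∃ M : ℕ, ∀ q : ℕ, M < q →
    ∀ X ∈ A, ∀ X' ∈ A, redZ q X = redZ q X' → X = X' := by
  let g : Z4 → ℕ := fun X => X.1.natAbs + X.2.1.natAbs + X.2.2.1.natAbs + X.2.2.2.natAbs
  refine ⟨2 * ∑ X ∈ A, g X, ?_⟩
  intro q hq X hX X' hX' h
  have h1 : g X ≤ ∑ X ∈ A, g X := Finset.single_le_sum (f := g) (fun _ _ => Nat.zero_le _) hX
  have h2 : g X' ≤ ∑ X ∈ A, g X := Finset.single_le_sum (f := g) (fun _ _ => Nat.zero_le _) hX'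
  obtain ⟨Y, e1, e2, e3, e4⟩ := dvd_of_redZ q X X' h
  have key : ∀ a b y : ℤ, a - b = q * y → a.natAbs + b.natAbs < q → a = b := by
    intro a b y hy hl
    have : a - b = 0 := by
      apply Int.eq_zero_of_abs_lt_dvd (m := (q:ℤ)) ⟨y, hy⟩
      have h9 := abs_sub a b
      rw [Int.abs_eq_natAbs, Int.abs_eq_natAbs a, Int.abs_eq_natAbs b] at h9
      rw [Int.abs_eq_natAbs]
      omega
    omega
  have hg : g X + g X' < q := by omega
  simp only [g] at hg
  have f1 := key _ _ _ e1 (by omega)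
  have f2 := key _ _ _ e2 (by omega)
  have f3 := key _ _ _ e3 (by omega)
  have f4 := key _ _ _ e4 (by omega)
  ext <;> assumption

lemma pair_bound (p1 p2 p3 q1 q2 q3 x1 x2 x3 x4 z1 z2 z3 z4 N' r δ q c : ℝ)
    (hpq : p1 * q1 + p2 * q2 - p3 * q3 = 1) (hN : 0 < N') (hr : 0 < r) (hδ : 0 < δ) (hq : 0 < q)
    (hc : 0 < c) (hc2 : c ≤ 1 / 4000)
    (h4 : |x4| ≤ N') (h1 : |x1 - x4 * p1| ≤ r) (h2 : |x2 - x4 * p2| ≤ r)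
    (h3 : |x3 - x4 * p3| ≤ r) (h5 : |q1 * x1 + q2 * x2 - q3 * x3 - x4| ≤ δ)
    (k4 : |z4| ≤ c * q / δ) (k1 : |z1 - z4 * q1| ≤ c * q / r) (k2 : |z2 - z4 * q2| ≤ c * q / r)
    (k3 : |z3 - z4 * q3| ≤ 528 * (c * q / r))
    (k5 : |p1 * z1 + p2 * z2 - p3 * z3 - z4| ≤ c * q / N') :
    |(x1 * z1 + x2 * z2 - x3 * z3 - x4 * z4) / q| ≤ 1 / 6 := by
  have id : x1 * z1 + x2 * z2 - x3 * z3 - x4 * z4 =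
      z4 * (q1 * x1 + q2 * x2 - q3 * x3 - x4) + (x1 - x4 * p1) * (z1 - z4 * q1)
      + (x2 - x4 * p2) * (z2 - z4 * q2) - (x3 - x4 * p3) * (z3 - z4 * q3)
      + x4 * (p1 * z1 + p2 * z2 - p3 * z3 - z4) := by
    linear_combination (-x4 * z4) * hpq
  have m1 : |z4 * (q1 * x1 + q2 * x2 - q3 * x3 - x4)| ≤ c * q := by
    rw [abs_mul]
    calc _ ≤ c * q / δ * δ := by gcongr
      _ = c * q := by field_simp
  have m2 : |(x1 - x4 * p1) * (z1 - z4 * q1)| ≤ c * q := by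
    rw [abs_mul]
    calc _ ≤ r * (c * q / r) := by gcongr
      _ = c * q := by field_simp
  have m3 : |(x2 - x4 * p2) * (z2 - z4 * q2)| ≤ c * q := by
    rw [abs_mul]
    calc _ ≤ r * (c * q / r) := by gcongr
      _ = c * q := by field_simp
  have m4 : |(x3 - x4 * p3) * (z3 - z4 * q3)| ≤ 528 * (c * q) := by
    rw [abs_mul]
    calc _ ≤ r * (528 * (c * q / r)) := by gcongr
      _ = 528 * (c * q) := by field_simp
  have m5 : |x4 * (p1 * z1 + p2 * z2 - p3 * z3 - z4)| ≤ c * q := by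
    rw [abs_mul]
    calc _ ≤ N' * (c * q / N') := by gcongr
      _ = c * q := by field_simp
  rw [abs_div, abs_of_pos hq, div_le_iff₀ hq, id]
  rw [abs_le] at *
  have : c * q ≤ 1 / 4000 * q := by gcongr
  constructor <;> linarith [m1.1, m1.2, m2.1, m2.2, m3.1, m3.2, m4.1, m4.2, m5.1, m5.2]

/-- The point of `Ξ` with indices `(i1,i2,i3,i4)`. -/
noncomputable def xiPt (p1 p2 p3 q1 q2 q3 : ℝ) (i : ℕ × ℕ × ℕ × ℕ) : Z4 :=
  let z4 : ℤ := i.2.2.2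
  let z1 : ℤ := ⌊(z4:ℝ) * q1⌋ + i.1
  let z2 : ℤ := ⌊(z4:ℝ) * q2⌋ + i.2.1
  let z3 : ℤ := ⌊(z4:ℝ) * q3 + (p1 * (z1 - z4 * q1) + p2 * (z2 - z4 * q2)) / p3⌋ + i.2.2.1
  (z1, z2, z3, z4)

lemma xiPt_inj (p1 p2 p3 q1 q2 q3 : ℝ) : Function.Injective (xiPt p1 p2 p3 q1 q2 q3) := by
  rintro ⟨i1, i2, i3, i4⟩ ⟨j1, j2, j3, j4⟩ h
  simp only [xiPt, Prod.mk.injEq] at h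
  obtain ⟨h1, h2, h3, h4⟩ := h
  have e4 : i4 = j4 := by exact_mod_cast h4
  subst e4
  have e1 : i1 = j1 := by exact_mod_cast add_left_cancel h1
  subst e1
  have e2 : i2 = j2 := by exact_mod_cast add_left_cancel h2
  subst e2
  have e3 : i3 = j3 := by exact_mod_cast add_left_cancel h3
  subst e3
  rfl

lemma floor_add_bound (x y : ℝ) (i : ℕ) (hy : 1 ≤ y) (hi : (i : ℝ) < y) :
    |((⌊x⌋ + (i : ℤ) : ℤ) : ℝ) - x| ≤ y := by
  have h1 := Int.floor_le x
  have h2 := Int.lt_floor_add_one x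
  have h3 : (0:ℝ) ≤ i := Nat.cast_nonneg i
  push_cast
  rw [abs_le]; constructor <;> linarith

lemma xiPt_spec (p1 p2 p3 q1 q2 q3 U V W : ℝ) 
    (hp1 : |p1| ≤ 16) (hp2 : |p2| ≤ 16) (hp3 : 1 / 16 ≤ p3) (hp3' : p3 ≤ 16)
    (hpq : p1 * q1 + p2 * q2 - p3 * q3 = 1)
    (hV : 1 ≤ V) (hW : 16 ≤ W) (hWV : W ≤ V)
    (i : ℕ × ℕ × ℕ × ℕ) (h1 : (i.1 : ℝ) < V) (h2 : (i.2.1 : ℝ) < V) (h3 : (i.2.2.1 : ℝ) < W / 16)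
    (h4 : (i.2.2.2 : ℝ) < U) (z : Z4) (hz : z = xiPt p1 p2 p3 q1 q2 q3 i) :
    (0 ≤ (z.2.2.2 : ℝ) ∧ (z.2.2.2 : ℝ) ≤ U) ∧ |(z.1 : ℝ) - z.2.2.2 * q1| ≤ V ∧
    |(z.2.1 : ℝ) - z.2.2.2 * q2| ≤ V ∧ |(z.2.2.1 : ℝ) - z.2.2.2 * q3| ≤ 528 * V ∧
    |p1 * z.1 + p2 * z.2.1 - p3 * z.2.2.1 - z.2.2.2| ≤ W := by
  have k1 : |(z.1 : ℝ) - z.2.2.2 * q1| ≤ V := by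
    rw [hz]; exact floor_add_bound _ _ _ hV h1
  have k2 : |(z.2.1 : ℝ) - z.2.2.2 * q2| ≤ V := by
    rw [hz]; exact floor_add_bound _ _ _ hV h2
  have k3 : |(z.2.2.1 : ℝ) - (z.2.2.2 * q3 + (p1 * (z.1 - z.2.2.2 * q1) + p2 * (z.2.1 - z.2.2.2 * q2)) / p3)| ≤ W / 16 := by
    rw [hz]; exact floor_add_bound _ _ _ (by linarith) h3
  have k4 : (z.2.2.2 : ℝ) = i.2.2.2 := by rw [hz]; simp [xiPt]
  generalize (z.1 : ℝ) = z1 at *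
  generalize (z.2.1 : ℝ) = z2 at *
  generalize (z.2.2.1 : ℝ) = z3 at *
  generalize (z.2.2.2 : ℝ) = z4 at *
  have hp0 : 0 < p3 := by linarith
  have k5 : |p1 * z1 + p2 * z2 - p3 * z3 - z4| ≤ W := by
    have e : p1 * z1 + p2 * z2 - p3 * z3 - z4 = 
      - p3 * (z3 - (z4 * q3 + (p1 * (z1 - z4 * q1) + p2 * (z2 - z4 * q2)) / p3)) := by
      field_simp
      linear_combination (z4) * hpq
    rw [e, abs_mul, abs_neg, abs_of_pos hp0]
    calc _ ≤ 16 * (W / 16) := by gcongr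
      _ = W := by ring
  refine ⟨⟨by rw [k4]; positivity, by rw [k4]; exact h4.le⟩, k1, k2, ?_, k5⟩
  have m1 : |p1 * (z1 - z4 * q1)| ≤ 16 * V := by rw [abs_mul]; gcongr
  have m2 : |p2 * (z2 - z4 * q2)| ≤ 16 * V := by rw [abs_mul]; gcongr
  have m3 : |p3 * (z3 - z4 * q3)| ≤ 33 * V := by
    have e : p3 * (z3 - z4 * q3) = p1 * (z1 - z4 * q1) + p2 * (z2 - z4 * q2) - 
      (p1 * z1 + p2 * z2 - p3 * z3 - z4) := by linear_combination (z4) * hpq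
    rw [e]
    rw [abs_le] at *
    constructor <;> linarith [m1.1, m1.2, m2.1, m2.2, k5.1, k5.2]
  rw [abs_mul, abs_of_pos hp0] at m3
  nlinarith [abs_nonneg (z3 - z4 * q3)]

lemma transfer (p1 p2 p3 q1 q2 q3 N' r δ : ℝ)
    (hp1 : |p1| ≤ 16) (hp2 : |p2| ≤ 16) (hp3 : 1 / 16 ≤ p3) (hp3' : p3 ≤ 16)
    (hpq : p1 * q1 + p2 * q2 - p3 * q3 = 1) (hN : 0 < N') (hr : 0 < r) (hδ : 0 < δ)
    (hrN : r ≤ N') (A D : Finset Z4)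
    (hA : ∀ X ∈ A, |(X.2.2.2 : ℝ)| ≤ N' ∧ |(X.1 : ℝ) - X.2.2.2 * p1| ≤ r ∧
      |(X.2.1 : ℝ) - X.2.2.2 * p2| ≤ r ∧ |(X.2.2.1 : ℝ) - X.2.2.2 * p3| ≤ r ∧
      |q1 * X.1 + q2 * X.2.1 - q3 * X.2.2.1 - X.2.2.2| ≤ δ)
    (hD : ∀ Y : Z4, |(Y.2.2.2 : ℝ)| ≤ 1 / δ → |(Y.1 : ℝ) - Y.2.2.2 * q1| ≤ 1 / r →
      |(Y.2.1 : ℝ) - Y.2.2.2 * q2| ≤ 1 / r → |(Y.2.2.1 : ℝ) - Y.2.2.2 * q3| ≤ 1 / r →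
      |p1 * Y.1 + p2 * Y.2.1 - p3 * Y.2.2.1 - Y.2.2.2| ≤ 1 / N' → Y ∈ D) :
    (A.card : ℝ) ≤ (64 * 4000 ^ 4) * (N' * r ^ 2 * δ) * D.card := by
  obtain ⟨M, hM⟩ := exists_inj_mod A
  obtain ⟨q, hq⟩ := exists_nat_gt (max (M : ℝ) (max (16 * N' * 4000) (r * 4000)))
  have hq1 : M < q := by exact_mod_cast lt_of_le_of_lt (le_max_left _ _) hq
  have hq2 : 16 * N' * 4000 < q := lt_of_le_of_lt ((le_max_left _ _).trans (le_max_right _ _)) hq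
  have hq3 : r * 4000 < q := lt_of_le_of_lt ((le_max_right _ _).trans (le_max_right _ _)) hq
  have hq0 : (0:ℝ) < q := by linarith [show 0 < r * 4000 by positivity]
  have : NeZero q := ⟨by rintro rfl; simp at hq0⟩
  set c : ℝ := 1 / 4000 with hc
  set U := c * q / δ with hU
  set V := c * q / r with hV
  set W := c * q / N' with hW
  have hV1 : 1 ≤ V := by rw [hV, le_div_iff₀ hr, hc]; linarith
  have hW1 : 16 ≤ W := by rw [hW, le_div_iff₀ hN, hc]; linarith
  have hWV : W ≤ V := by rw [hW, hV]; gcongr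
  have hU0 : 0 < U := by positivity
  let S := Finset.range ⌈V⌉₊ ×ˢ Finset.range ⌈V⌉₊ ×ˢ Finset.range ⌈W / 16⌉₊ ×ˢ Finset.range ⌈U⌉₊
  let Ξ := S.map ⟨_, xiPt_inj p1 p2 p3 q1 q2 q3⟩
  have hΞ : ∀ z ∈ Ξ, (0 ≤ (z.2.2.2 : ℝ) ∧ (z.2.2.2 : ℝ) ≤ U) ∧ |(z.1 : ℝ) - z.2.2.2 * q1| ≤ V ∧
      |(z.2.1 : ℝ) - z.2.2.2 * q2| ≤ V ∧ |(z.2.2.1 : ℝ) - z.2.2.2 * q3| ≤ 528 * V ∧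
      |p1 * z.1 + p2 * z.2.1 - p3 * z.2.2.1 - z.2.2.2| ≤ W := by
    intro z hz
    obtain ⟨i, hi, rfl⟩ := Finset.mem_map.1 hz
    simp only [S, Finset.mem_product, Finset.mem_range, Nat.lt_ceil] at hi
    exact xiPt_spec p1 p2 p3 q1 q2 q3 U V W hp1 hp2 hp3 hp3' hpq hV1 hW1 hWV i hi.1 hi.2.1
      hi.2.2.1 hi.2.2.2 _ rfl
  have hcard : V * V * (W / 16) * U ≤ Ξ.card := by
    simp only [Ξ, S, Finset.card_map, Finset.card_product, Finset.card_range, Nat.cast_mul]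
    calc V * V * (W / 16) * U ≤ (⌈V⌉₊ : ℝ) * ⌈V⌉₊ * ⌈W / 16⌉₊ * ⌈U⌉₊ := by
          gcongr <;> exact Nat.le_ceil _
      _ = _ := by ring
  have main := fourier_card q A Ξ D.card (hM q hq1) ?_ ?_
  · have h1 : V * V * (W / 16) * U * A.card ≤ 4 * D.card * (q:ℝ) ^ 4 :=
      le_trans (by gcongr) main
    have h2 : V * V * (W / 16) * U = c ^ 4 * q ^ 4 / (16 * (N' * r ^ 2 * δ)) := by
      rw [hU, hV, hW]; field_simp
    rw [h2, div_mul_eq_mul_div, div_le_iff₀ (by positivity)] at h1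
    have h3 : (q:ℝ) ^ 4 * (c ^ 4 * A.card) ≤ q ^ 4 * (64 * (N' * r ^ 2 * δ) * D.card) := by
      linarith
    have h4 := le_of_mul_le_mul_left h3 (by positivity)
    rw [hc] at h4
    norm_num at h4 ⊢
    linarith
  · intro ζ
    rcases (Ξ.filter (fun z => redZ q z = ζ)).eq_empty_or_nonempty with h | ⟨z', hz'⟩
    · simp [h]
    rw [Finset.mem_filter] at hz'
    refine Finset.card_le_card_of_injOn (fun z => ((z.1 - z'.1) / q, (z.2.1 - z'.2.1) / q,
      (z.2.2.1 - z'.2.2.1) / q, (z.2.2.2 - z'.2.2.2) / q)) ?_ ?_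
    · intro z hz
      rw [Finset.mem_coe, Finset.mem_filter] at hz
      obtain ⟨Y, e1, e2, e3, e4⟩ := dvd_of_redZ q z z' (hz.2.trans hz'.2.symm)
      have hqz : (q : ℤ) ≠ 0 := by exact_mod_cast NeZero.ne q
      have : (fun z : Z4 => ((z.1 - z'.1) / (q:ℤ), (z.2.1 - z'.2.1) / (q:ℤ),
        (z.2.2.1 - z'.2.2.1) / (q:ℤ), (z.2.2.2 - z'.2.2.2) / (q:ℤ))) z = Y := by
        simp only [e1, e2, e3, e4, Int.mul_ediv_cancel_left _ hqz]
      rw [this]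
      obtain ⟨⟨a0, a4⟩, a1, a2, a3, a5⟩ := hΞ z hz.1
      obtain ⟨⟨b0, b4⟩, b1, b2, b3, b5⟩ := hΞ z' hz'.1
      have r1 : (z.1 : ℝ) - z'.1 = q * Y.1 := by exact_mod_cast e1
      have r2 : (z.2.1 : ℝ) - z'.2.1 = q * Y.2.1 := by exact_mod_cast e2
      have r3 : (z.2.2.1 : ℝ) - z'.2.2.1 = q * Y.2.2.1 := by exact_mod_cast e3
      have r4 : (z.2.2.2 : ℝ) - z'.2.2.2 = q * Y.2.2.2 := by exact_mod_cast e4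
      have scale : ∀ y B T : ℝ, 0 < B → |q * y| ≤ T → T ≤ q / B → |y| ≤ 1 / B := by
        intro y B T hB h1 h2
        rw [abs_mul, abs_of_pos hq0] at h1
        have : q * |y| ≤ q * (1 / B) := by rw [mul_one_div]; linarith
        exact le_of_mul_le_mul_left this hq0
      have hVq : 1056 * V ≤ q / r := by
        rw [hV, hc, show 1056 * (1 / 4000 * (q:ℝ) / r) = (1056 / 4000 * q) / r by ring]
        gcongr; linarith
      have hWq : 2 * W ≤ q / N' := by
        rw [hW, hc, show 2 * (1 / 4000 * (q:ℝ) / N') = (2 / 4000 * q) / N' by ring]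
        gcongr; linarith
      have hUq : 2 * U ≤ q / δ := by
        rw [hU, hc, show 2 * (1 / 4000 * (q:ℝ) / δ) = (2 / 4000 * q) / δ by ring]
        gcongr; linarith
      apply hD
      · refine scale _ _ _ hδ ?_ hUq
        rw [← r4, abs_le]; constructor <;> linarith
      · refine scale _ _ _ hr ?_ hVq
        rw [mul_sub, ← r1, show (q:ℝ) * (Y.2.2.2 * q1) = (q * Y.2.2.2) * q1 by ring, ← r4]
        rw [abs_le] at *
        constructor <;> linarith [a1.1, a1.2, b1.1, b1.2]
      · refine scale _ _ _ hr ?_ hVq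
        rw [mul_sub, ← r2, show (q:ℝ) * (Y.2.2.2 * q2) = (q * Y.2.2.2) * q2 by ring, ← r4]
        rw [abs_le] at *
        constructor <;> linarith [a2.1, a2.2, b2.1, b2.2]
      · refine scale _ _ _ hr ?_ hVq
        rw [mul_sub, ← r3, show (q:ℝ) * (Y.2.2.2 * q3) = (q * Y.2.2.2) * q3 by ring, ← r4]
        rw [abs_le] at *
        constructor <;> linarith [a3.1, a3.2, b3.1, b3.2]
      · refine scale _ _ _ hN ?_ hWq
        rw [show (q:ℝ) * (p1 * Y.1 + p2 * Y.2.1 - p3 * Y.2.2.1 - Y.2.2.2) =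
          p1 * (q * Y.1) + p2 * (q * Y.2.1) - p3 * (q * Y.2.2.1) - q * Y.2.2.2 by ring,
          ← r1, ← r2, ← r3, ← r4]
        rw [abs_le] at *
        constructor <;> linarith [a5.1, a5.2, b5.1, b5.2]
    · intro z hz y hy hzy
      rw [Finset.mem_coe, Finset.mem_filter] at hz hy
      obtain ⟨Y, e1, e2, e3, e4⟩ := dvd_of_redZ q z z' (hz.2.trans hz'.2.symm)
      obtain ⟨Y', f1, f2, f3, f4⟩ := dvd_of_redZ q y z' (hy.2.trans hz'.2.symm)
      have hqz : (q : ℤ) ≠ 0 := by exact_mod_cast NeZero.ne q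
      simp only [e1, e2, e3, e4, f1, f2, f3, f4, Int.mul_ediv_cancel_left _ hqz,
        Prod.mk.injEq] at hzy
      obtain ⟨g1, g2, g3, g4⟩ := hzy
      rw [g1] at e1; rw [g2] at e2; rw [g3] at e3; rw [g4] at e4
      ext
      · linarith
      · linarith
      · linarith
      · linarith
  · intro X hX z hz
    obtain ⟨a4, a1, a2, a3, a5⟩ := hA X hX
    obtain ⟨⟨b0, b4⟩, b1, b2, b3, b5⟩ := hΞ z hz
    have := pair_bound p1 p2 p3 q1 q2 q3 X.1 X.2.1 X.2.2.1 X.2.2.2 z.1 z.2.1 z.2.2.1 z.2.2.2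
      N' r δ q c hpq hN hr hδ hq0 (by positivity) le_rfl a4 a1 a2 a3 a5
      (by rw [abs_of_nonneg b0]; exact b4) b1 b2 b3 b5
    simpa [pairZ] using this


/-- parameter region -/
def InK (s t : ℝ) : Prop :=
  1 / 4 ≤ s ∧ s ≤ 4 ∧ 1 / 4 ≤ t ∧ t ≤ 4 ∧ 1 / 4 ≤ s + t - 1 ∧ s + t - 1 ≤ 4

/-- a pair of dual surfaces -/
structure Fam where
  p1 : ℝ → ℝ → ℝ
  p2 : ℝ → ℝ → ℝ
  p3 : ℝ → ℝ → ℝ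
  q1 : ℝ → ℝ → ℝ
  q2 : ℝ → ℝ → ℝ
  q3 : ℝ → ℝ → ℝ
  bp : ∀ s t, InK s t → (1 / 16 ≤ p1 s t ∧ p1 s t ≤ 16) ∧ (1 / 16 ≤ p2 s t ∧ p2 s t ≤ 16) ∧
    (1 / 16 ≤ p3 s t ∧ p3 s t ≤ 16)
  bq : ∀ s t, InK s t → (1 / 16 ≤ q1 s t ∧ q1 s t ≤ 16) ∧ (1 / 16 ≤ q2 s t ∧ q2 s t ≤ 16) ∧
    (1 / 16 ≤ q3 s t ∧ q3 s t ≤ 16)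
  pq : ∀ s t, InK s t → p1 s t * q1 s t + p2 s t * q2 s t - p3 s t * q3 s t = 1
  lp : ∀ s t s' t' κ, InK s t → InK s' t' → |s - s'| ≤ κ → |t - t'| ≤ κ →
    |p1 s t - p1 s' t'| ≤ 32 * κ ∧ |p2 s t - p2 s' t'| ≤ 32 * κ ∧ |p3 s t - p3 s' t'| ≤ 32 * κ
  lq : ∀ s t s' t' κ, InK s t → InK s' t' → |s - s'| ≤ κ → |t - t'| ≤ κ →
    |q1 s t - q1 s' t'| ≤ 32 * κ ∧ |q2 s t - q2 s' t'| ≤ 32 * κ ∧ |q3 s t - q3 s' t'| ≤ 32 * κ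
  qd : ∀ s t s' t' κ, InK s t → InK s' t' → |s - s'| ≤ κ → |t - t'| ≤ κ →
    |p1 s t * q1 s' t' + p2 s t * q2 s' t' - p3 s t * q3 s' t' - 1| ≤ 32 * κ ^ 2
  ip : ∀ s t s' t' η, InK s t → InK s' t' → |p1 s t - p1 s' t'| ≤ η → |p2 s t - p2 s' t'| ≤ η →
    |s - s'| ≤ 16 * η ∧ |t - t'| ≤ 16 * η
  iq : ∀ s t s' t' η, InK s t → InK s' t' → |q1 s t - q1 s' t'| ≤ η → |q2 s t - q2 s' t'| ≤ η →
    |s - s'| ≤ 16 * η ∧ |t - t'| ≤ 16 * η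

/-- exchange the two surfaces -/
def Fam.swap (F : Fam) : Fam where
  p1 := F.q1
  p2 := F.q2
  p3 := F.q3
  q1 := F.p1
  q2 := F.p2
  q3 := F.p3
  bp := F.bq
  bq := F.bp
  pq := fun s t h => by have := F.pq s t h; linarith
  lp := F.lq
  lq := F.lp
  qd := fun s t s' t' κ h h' hs ht => by
    rw [abs_sub_comm] at hs ht
    have := F.qd s' t' s t κ h' h hs ht
    convert this using 2
    ring
  ip := F.iq
  iq := F.ip

lemma sq_lip (a b κ : ℝ) (ha : 1 / 4 ≤ a ∧ a ≤ 4) (hb : 1 / 4 ≤ b ∧ b ≤ 4) (h : |a - b| ≤ κ) :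
    |a ^ 2 - b ^ 2| ≤ 8 * κ := by
  rw [show a ^ 2 - b ^ 2 = (a + b) * (a - b) by ring, abs_mul, abs_of_nonneg (by linarith)]
  gcongr; linarith

lemma inv_lip (a b κ : ℝ) (ha : 1 / 4 ≤ a ∧ a ≤ 4) (hb : 1 / 4 ≤ b ∧ b ≤ 4) (h : |a - b| ≤ κ) :
    |1 / a - 1 / b| ≤ 16 * κ := by
  have ha0 : 0 < a := by linarith
  have hb0 : 0 < b := by linarith
  rw [show 1 / a - 1 / b = (b - a) / (a * b) by field_simp, abs_div, abs_of_pos (mul_pos ha0 hb0),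
    div_le_iff₀ (by positivity), abs_sub_comm]
  have : 1 ≤ 16 * (a * b) := by nlinarith
  nlinarith [abs_nonneg (a - b)]

lemma sq_inv (a b κ : ℝ) (ha : 1 / 4 ≤ a ∧ a ≤ 4) (hb : 1 / 4 ≤ b ∧ b ≤ 4)
    (h : |a ^ 2 - b ^ 2| ≤ κ) : |a - b| ≤ 16 * κ := by
  rw [show a ^ 2 - b ^ 2 = (a + b) * (a - b) by ring, abs_mul, abs_of_nonneg (by linarith)] at h
  nlinarith [abs_nonneg (a - b)]

lemma inv_inv_lip (a b κ : ℝ) (ha : 1 / 4 ≤ a ∧ a ≤ 4) (hb : 1 / 4 ≤ b ∧ b ≤ 4)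
    (h : |1 / a - 1 / b| ≤ κ) : |a - b| ≤ 16 * κ := by
  have ha0 : 0 < a := by linarith
  have hb0 : 0 < b := by linarith
  rw [show 1 / a - 1 / b = (b - a) / (a * b) by field_simp, abs_div, abs_of_pos (mul_pos ha0 hb0),
    div_le_iff₀ (by positivity), abs_sub_comm] at h
  have h0 : 0 ≤ κ := by
    by_contra hk
    have := abs_nonneg (a - b)
    have : κ * (a * b) < 0 := mul_neg_of_neg_of_pos (by linarith) (by positivity)
    linarith
  have : a * b ≤ 16 := by nlinarith
  nlinarith

lemma sq_bd (a : ℝ) (ha : 1 / 4 ≤ a ∧ a ≤ 4) : 1 / 16 ≤ a ^ 2 ∧ a ^ 2 ≤ 16 := by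
  constructor <;> nlinarith

lemma inv_bd (a : ℝ) (ha : 1 / 4 ≤ a ∧ a ≤ 4) : 1 / 16 ≤ 1 / a ∧ 1 / a ≤ 16 := by
  have ha0 : 0 < a := by linarith
  constructor
  · rw [le_div_iff₀ ha0]; linarith
  · rw [div_le_iff₀ ha0]; linarith

lemma gam_lip (s t s' t' κ : ℝ) (hs : |s - s'| ≤ κ) (ht : |t - t'| ≤ κ) :
    |(s + t - 1) - (s' + t' - 1)| ≤ 2 * κ := by
  rw [abs_le] at *
  constructor <;> linarith [hs.1, hs.2, ht.1, ht.2]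

/-- the basic family -/
noncomputable def F0 : Fam where
  p1 := fun s _ => s ^ 2
  p2 := fun _ t => t ^ 2
  p3 := fun s t => (s + t - 1) ^ 2
  q1 := fun s _ => 1 / s
  q2 := fun _ t => 1 / t
  q3 := fun s t => 1 / (s + t - 1)
  bp := fun s t ⟨h1, h2, h3, h4, h5, h6⟩ => ⟨sq_bd _ ⟨h1, h2⟩, sq_bd _ ⟨h3, h4⟩, sq_bd _ ⟨h5, h6⟩⟩
  bq := fun s t ⟨h1, h2, h3, h4, h5, h6⟩ =>
    ⟨inv_bd _ ⟨h1, h2⟩, inv_bd _ ⟨h3, h4⟩, inv_bd _ ⟨h5, h6⟩⟩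
  pq := fun s t ⟨h1, h2, h3, h4, h5, h6⟩ => by
    have h1' : s ≠ 0 := by intro h; linarith
    have h3' : t ≠ 0 := by intro h; linarith
    have h5' : s + t - 1 ≠ 0 := by intro h; linarith
    field_simp
    ring
  lp := fun s t s' t' κ ⟨h1, h2, h3, h4, h5, h6⟩ ⟨k1, k2, k3, k4, k5, k6⟩ hs ht => by
    have h0 : 0 ≤ κ := (abs_nonneg _).trans hs
    have a1 := sq_lip _ _ _ ⟨h1, h2⟩ ⟨k1, k2⟩ hs
    have a2 := sq_lip _ _ _ ⟨h3, h4⟩ ⟨k3, k4⟩ ht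
    have a3 := sq_lip _ _ _ ⟨h5, h6⟩ ⟨k5, k6⟩ (gam_lip _ _ _ _ _ hs ht)
    exact ⟨by linarith, by linarith, by linarith⟩
  lq := fun s t s' t' κ ⟨h1, h2, h3, h4, h5, h6⟩ ⟨k1, k2, k3, k4, k5, k6⟩ hs ht => by
    have h0 : 0 ≤ κ := (abs_nonneg _).trans hs
    have a1 := inv_lip _ _ _ ⟨h1, h2⟩ ⟨k1, k2⟩ hs
    have a2 := inv_lip _ _ _ ⟨h3, h4⟩ ⟨k3, k4⟩ ht
    have a3 := inv_lip _ _ _ ⟨h5, h6⟩ ⟨k5, k6⟩ (gam_lip _ _ _ _ _ hs ht)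
    exact ⟨by linarith, by linarith, by linarith⟩
  qd := fun s t s' t' κ ⟨h1, h2, h3, h4, h5, h6⟩ ⟨k1, k2, k3, k4, k5, k6⟩ hs ht => by
    have h0 : 0 ≤ κ := (abs_nonneg _).trans hs
    have p1 : 0 < s' := by linarith
    have p2 : 0 < t' := by linarith
    have p3 : 0 < s' + t' - 1 := by linarith
    have e : s ^ 2 * (1 / s') + t ^ 2 * (1 / t') - (s + t - 1) ^ 2 * (1 / (s' + t' - 1)) - 1 =
        (s - s') ^ 2 / s' + (t - t') ^ 2 / t' - ((s + t - 1) - (s' + t' - 1)) ^ 2 / (s' + t' - 1) := by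
      have p3' : s' + t' - 1 ≠ 0 := p3.ne'
      have e1 : s ^ 2 * (1 / s') = (s - s') ^ 2 / s' + 2 * s - s' := by field_simp; ring
      have e2 : t ^ 2 * (1 / t') = (t - t') ^ 2 / t' + 2 * t - t' := by field_simp; ring
      have e3 : (s + t - 1) ^ 2 * (1 / (s' + t' - 1)) =
        ((s + t - 1) - (s' + t' - 1)) ^ 2 / (s' + t' - 1) + 2 * (s + t - 1) - (s' + t' - 1) := by
        generalize s' + t' - 1 = g at *
        field_simp; ring
      rw [e1, e2, e3]; ring
    have sqb : ∀ x y B : ℝ, 1 / 4 ≤ y → |x| ≤ B → 0 ≤ x ^ 2 / y ∧ x ^ 2 / y ≤ 4 * B ^ 2 := by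
      intro x y B hy hx
      have hy0 : 0 < y := by linarith
      refine ⟨by positivity, ?_⟩
      have : x ^ 2 ≤ B ^ 2 := sq_le_sq' (by linarith [(abs_le.1 hx).1]) (abs_le.1 hx).2
      rw [div_le_iff₀ hy0]
      nlinarith [sq_nonneg B]
    have b1 := sqb _ _ _ k1 hs
    have b2 := sqb _ _ _ k3 ht
    have b3 := sqb _ _ _ k5 (gam_lip _ _ _ _ _ hs ht)
    rw [e, abs_le]
    have := sq_nonneg κ
    constructor <;> linarith [b1.1, b1.2, b2.1, b2.2, b3.1, b3.2]
  ip := fun s t s' t' η ⟨h1, h2, h3, h4, h5, h6⟩ ⟨k1, k2, k3, k4, k5, k6⟩ hs ht =>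
    ⟨sq_inv _ _ _ ⟨h1, h2⟩ ⟨k1, k2⟩ hs, sq_inv _ _ _ ⟨h3, h4⟩ ⟨k3, k4⟩ ht⟩
  iq := fun s t s' t' η ⟨h1, h2, h3, h4, h5, h6⟩ ⟨k1, k2, k3, k4, k5, k6⟩ hs ht =>
    ⟨inv_inv_lip _ _ _ ⟨h1, h2⟩ ⟨k1, k2⟩ hs, inv_inv_lip _ _ _ ⟨h3, h4⟩ ⟨k3, k4⟩ ht⟩

/-- closeness of `X` to the cone over the surface at parameters `(s,t)` -/
def GoodAt (F : Fam) (J : ℕ) (X : Z4) (s t : ℝ) : Prop :=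
  InK s t ∧ |(X.1 : ℝ) - X.2.2.2 * F.p1 s t| ≤ 1 ∧
    |(X.2.1 : ℝ) - X.2.2.2 * F.p2 s t| ≤ 1 ∧ |(X.2.2.1 : ℝ) - X.2.2.2 * F.p3 s t| ≤ 1 ∧
    |F.q1 s t * X.1 + F.q2 s t * X.2.1 - F.q3 s t * X.2.2.1 - X.2.2.2| ≤ 1 / 2 ^ J

/-- good points -/
def Good (F : Fam) (J : ℕ) (X : Z4) : Prop :=
  (2:ℤ) ^ J ≤ X.2.2.2 ∧ X.2.2.2 < (2:ℤ) ^ (J + 1) ∧ ∃ s t, GoodAt F J X s t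

/-- the dual conditions -/
def Dual (F : Fam) (J h : ℕ) (s t : ℝ) (Y : Z4) : Prop :=
  |(Y.2.2.2 : ℝ)| ≤ 2 ^ J / 4 ^ h ∧ |(Y.1 : ℝ) - Y.2.2.2 * F.q1 s t| ≤ 1 / 2 ^ h ∧
    |(Y.2.1 : ℝ) - Y.2.2.2 * F.q2 s t| ≤ 1 / 2 ^ h ∧
    |(Y.2.2.1 : ℝ) - Y.2.2.2 * F.q3 s t| ≤ 1 / 2 ^ h ∧
    |F.p1 s t * Y.1 + F.p2 s t * Y.2.1 - F.p3 s t * Y.2.2.1 - Y.2.2.2| ≤ 1 / 2 ^ J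

lemma near_bound (F : Fam) (s t s' t' κ N x1 x2 x3 x4 : ℝ) (hK : InK s t) (hK' : InK s' t')
    (hs : |s - s'| ≤ κ) (ht : |t - t'| ≤ κ) (hN : 0 < N) (h4 : |x4| ≤ 2 * N)
    (h1 : |x1 - x4 * F.p1 s t| ≤ 1) (h2 : |x2 - x4 * F.p2 s t| ≤ 1)
    (h3 : |x3 - x4 * F.p3 s t| ≤ 1)
    (h5 : |F.q1 s t * x1 + F.q2 s t * x2 - F.q3 s t * x3 - x4| ≤ 1 / N) :
    |x1 - x4 * F.p1 s' t'| ≤ 1 + 64 * (N * κ) ∧ |x2 - x4 * F.p2 s' t'| ≤ 1 + 64 * (N * κ) ∧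
    |x3 - x4 * F.p3 s' t'| ≤ 1 + 64 * (N * κ) ∧
    |F.q1 s' t' * x1 + F.q2 s' t' * x2 - F.q3 s' t' * x3 - x4| ≤
      1 / N + 96 * κ + 64 * (N * κ ^ 2) := by
  have h0 : 0 ≤ κ := (abs_nonneg _).trans hs
  obtain ⟨a1, a2, a3⟩ := F.lp s t s' t' κ hK hK' hs ht
  obtain ⟨b1, b2, b3⟩ := F.lq s t s' t' κ hK hK' hs ht
  have c := F.qd s t s' t' κ hK hK' hs ht
  have e := F.pq s t hK
  generalize F.p1 s t = P1 at *
  generalize F.p2 s t = P2 at *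
  generalize F.p3 s t = P3 at *
  generalize F.q1 s t = Q1 at *
  generalize F.q2 s t = Q2 at *
  generalize F.q3 s t = Q3 at *
  generalize F.p1 s' t' = P1' at *
  generalize F.p2 s' t' = P2' at *
  generalize F.p3 s' t' = P3' at *
  generalize F.q1 s' t' = Q1' at *
  generalize F.q2 s' t' = Q2' at *
  generalize F.q3 s' t' = Q3' at *
  have aux : ∀ x P P' : ℝ, |x - x4 * P| ≤ 1 → |P - P'| ≤ 32 * κ →
      |x - x4 * P'| ≤ 1 + 64 * (N * κ) := by
    intro x P P' k1 k2
    have : |x4 * (P - P')| ≤ 2 * N * (32 * κ) := by rw [abs_mul]; gcongr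
    rw [show x - x4 * P' = (x - x4 * P) + x4 * (P - P') by ring]
    refine (abs_add_le _ _).trans ?_
    linarith
  refine ⟨aux _ _ _ h1 a1, aux _ _ _ h2 a2, aux _ _ _ h3 a3, ?_⟩
  have aux2 : ∀ x P Q Q' : ℝ, |x - x4 * P| ≤ 1 → |Q - Q'| ≤ 32 * κ →
      |(Q - Q') * (x - x4 * P)| ≤ 32 * κ := by
    intro x P Q Q' k1 k2
    rw [abs_mul]
    calc _ ≤ 32 * κ * 1 := by gcongr
      _ = _ := by ring
  have d1 := aux2 _ _ _ _ h1 b1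
  have d2 := aux2 _ _ _ _ h2 b2
  have d3 := aux2 _ _ _ _ h3 b3
  have d4 : |x4 * (P1 * Q1' + P2 * Q2' - P3 * Q3' - 1)| ≤ 2 * N * (32 * κ ^ 2) := by
    rw [abs_mul]; gcongr
  have id : Q1' * x1 + Q2' * x2 - Q3' * x3 - x4 = (Q1 * x1 + Q2 * x2 - Q3 * x3 - x4)
      + x4 * (P1 * Q1' + P2 * Q2' - P3 * Q3' - 1) - (Q1 - Q1') * (x1 - x4 * P1)
      - (Q2 - Q2') * (x2 - x4 * P2) + (Q3 - Q3') * (x3 - x4 * P3) := by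
    linear_combination (- x4) * e
  rw [id]
  rw [abs_le] at h5 d1 d2 d3 d4
  rw [abs_le]
  constructor <;> linarith [h5.1, h5.2, d1.1, d1.2, d2.1, d2.2, d3.1, d3.2, d4.1, d4.2]

open Classical in
/-- the finite set of dual points -/
noncomputable def DS (F : Fam) (J h : ℕ) (s t : ℝ) : Finset Z4 :=
  (Finset.Icc (-17 * 2 ^ J : ℤ) (17 * 2 ^ J) ×ˢ Finset.Icc (-17 * 2 ^ J : ℤ) (17 * 2 ^ J) ×ˢ
    Finset.Icc (-17 * 2 ^ J : ℤ) (17 * 2 ^ J) ×ˢ Finset.Icc (-17 * 2 ^ J : ℤ) (17 * 2 ^ J)).filter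
    (fun Y => Dual F J h s t Y)

lemma mem_DS (F : Fam) (J h : ℕ) (s t : ℝ) (hK : InK s t) (Y : Z4) :
    Y ∈ DS F J h s t ↔ Dual F J h s t Y := by
  simp only [DS, Finset.mem_filter]
  refine ⟨fun h => h.2, fun hY => ⟨?_, hY⟩⟩
  obtain ⟨a4, a1, a2, a3, -⟩ := hY
  obtain ⟨⟨b1, c1⟩, ⟨b2, c2⟩, ⟨b3, c3⟩⟩ := F.bq s t hK
  have hN : (1:ℝ) ≤ 2 ^ J := one_le_pow₀ (by norm_num)
  have hH : (1:ℝ) / 2 ^ h ≤ 1 := by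
    rw [div_le_one (by positivity)]; exact one_le_pow₀ (by norm_num)
  have h4 : |(Y.2.2.2 : ℝ)| ≤ 2 ^ J :=
    a4.trans (div_le_self (by positivity) (one_le_pow₀ (by norm_num)))
  have key : ∀ (y : ℤ), |(y:ℝ)| ≤ 17 * 2 ^ J → y ∈ Finset.Icc (-17 * 2 ^ J : ℤ) (17 * 2 ^ J) := by
    intro y hy
    rw [abs_le] at hy
    rw [Finset.mem_Icc]
    constructor
    · have : ((-17 * 2 ^ J : ℤ) : ℝ) ≤ y := by push_cast; linarith [hy.1]
      exact_mod_cast this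
    · have : (y : ℝ) ≤ ((17 * 2 ^ J : ℤ) : ℝ) := by push_cast; linarith [hy.2]
      exact_mod_cast this
  have key2 : ∀ (y Q : ℝ), |y - Y.2.2.2 * Q| ≤ 1 / 2 ^ h → 1 / 16 ≤ Q → Q ≤ 16 →
      |y| ≤ 17 * 2 ^ J := by
    intro y Q k1 k2 k3
    have : |Y.2.2.2 * Q| ≤ 2 ^ J * 16 := by
      rw [abs_mul, abs_of_nonneg (by linarith : 0 ≤ Q)]; gcongr
    rw [show y = (y - Y.2.2.2 * Q) + Y.2.2.2 * Q by ring]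
    refine (abs_add_le _ _).trans ?_
    linarith
  simp only [Finset.mem_product]
  exact ⟨key _ (key2 _ _ a1 b1 c1), key _ (key2 _ _ a2 b2 c2), key _ (key2 _ _ a3 b3 c3),
    key _ (by linarith)⟩


/-- dyadic piece of the dual set -/
noncomputable def DSj (F : Fam) (J h : ℕ) (s t : ℝ) (j : ℕ) : Finset Z4 :=
  (DS F J h s t).filter (fun Y => (2:ℤ) ^ j ≤ Y.2.2.2 ∧ Y.2.2.2 < (2:ℤ) ^ (j + 1))

lemma Dual_neg (F : Fam) (J h : ℕ) (s t : ℝ) (Y : Z4) (hY : Dual F J h s t Y) :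
    Dual F J h s t (-Y) := by
  obtain ⟨a4, a1, a2, a3, a5⟩ := hY
  refine ⟨?_, ?_, ?_, ?_, ?_⟩
  · simpa using a4
  · rw [← abs_neg]; convert a1 using 2; simp; ring
  · rw [← abs_neg]; convert a2 using 2; simp; ring
  · rw [← abs_neg]; convert a3 using 2; simp; ring
  · rw [← abs_neg]; convert a5 using 2; simp; ring

lemma DS_card (F : Fam) (J h : ℕ) (hh : 1 ≤ h) (hJ : 2 * h ≤ J) (s t : ℝ) (hK : InK s t) :
    (DS F J h s t).card ≤ 1 + 2 * ∑ j ∈ Finset.range (J - 2 * h + 1), (DSj F J h s t j).card := by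
  classical
  let P := (Finset.range (J - 2 * h + 1)).biUnion (fun j => DSj F J h s t j)
  have hsub : DS F J h s t ⊆ ({0} ∪ P) ∪ P.image (fun Y => -Y) := by
    have pos : ∀ Y ∈ DS F J h s t, 0 < Y.2.2.2 → Y ∈ P := by
      intro Y hY h0
      have hD := (mem_DS F J h s t hK Y).1 hY
      have hb := hD.1
      have e : (2:ℝ) ^ J / 4 ^ h = 2 ^ (J - 2 * h) := by
        rw [show (4:ℝ) = 2 ^ 2 by norm_num, ← pow_mul, div_eq_iff (by positivity), ← pow_add]
        congr 1; omega
      rw [e, abs_of_pos (by exact_mod_cast h0)] at hb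
      have hb' : Y.2.2.2 ≤ 2 ^ (J - 2 * h) := by exact_mod_cast hb
      obtain ⟨y, hy⟩ := Int.eq_ofNat_of_zero_le h0.le
      have hy0 : y ≠ 0 := by rintro rfl; rw [hy] at h0; simp at h0
      rw [hy] at hb'
      have hb2 : y ≤ 2 ^ (J - 2 * h) := by exact_mod_cast hb'
      simp only [P, Finset.mem_biUnion, DSj, Finset.mem_filter, Finset.mem_range]
      refine ⟨Nat.log 2 y, ?_, hY, ?_, ?_⟩
      · have : Nat.log 2 y ≤ J - 2 * h := by
          calc Nat.log 2 y ≤ Nat.log 2 (2 ^ (J - 2 * h)) := Nat.log_mono_right hb2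
            _ = _ := Nat.log_pow (by norm_num) _
        omega
      · rw [hy]; exact_mod_cast Nat.pow_log_le_self 2 hy0
      · rw [hy]; exact_mod_cast Nat.lt_pow_succ_log_self (by norm_num) y
    intro Y hY
    simp only [Finset.mem_union, Finset.mem_singleton, Finset.mem_image]
    rcases lt_trichotomy Y.2.2.2 0 with h0 | h0 | h0
    · right
      refine ⟨-Y, pos _ ?_ ?_, by simp⟩
      · rw [mem_DS _ _ _ _ _ hK] at hY ⊢
        exact Dual_neg _ _ _ _ _ _ hY
      · simpa using h0
    · left; left
      have hD := (mem_DS F J h s t hK Y).1 hY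
      obtain ⟨a4, a1, a2, a3, a5⟩ := hD
      have hH : (1:ℝ) / 2 ^ h < 1 := by
        rw [div_lt_one (by positivity)]; exact one_lt_pow₀ (by norm_num) (by omega)
      have key : ∀ (y : ℤ) (Q : ℝ), |(y:ℝ) - Y.2.2.2 * Q| ≤ 1 / 2 ^ h → y = 0 := by
        intro y Q k
        rw [h0] at k
        simp only [Int.cast_zero, zero_mul, sub_zero] at k
        have : |y| < 1 := by exact_mod_cast lt_of_le_of_lt k hH
        exact Int.abs_lt_one_iff.1 this
      ext
      · exact key _ _ a1
      · exact key _ _ a2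
      · exact key _ _ a3
      · exact h0
    · left; right; exact pos Y hY h0
  have hP : P.card ≤ ∑ j ∈ Finset.range (J - 2 * h + 1), (DSj F J h s t j).card :=
    Finset.card_biUnion_le
  calc (DS F J h s t).card ≤ (({0} ∪ P) ∪ P.image (fun Y => -Y)).card := Finset.card_le_card hsub
    _ ≤ (({0} : Finset Z4) ∪ P).card + (P.image (fun Y => -Y)).card := Finset.card_union_le _ _
    _ ≤ (1 + P.card) + P.card :=
      Nat.add_le_add ((Finset.card_union_le ({0} : Finset Z4) P).trans (by simp))
        Finset.card_image_le
    _ ≤ _ := by omega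

lemma DSj_good (F : Fam) (J h : ℕ) (s t : ℝ) (hK : InK s t) (j : ℕ) (hj : j ≤ J)
    (Y : Z4) (hY : Y ∈ DSj F J h s t j) : Good F.swap j Y := by
  simp only [DSj, Finset.mem_filter] at hY
  obtain ⟨hY, h1, h2⟩ := hY
  obtain ⟨a4, a1, a2, a3, a5⟩ := (mem_DS F J h s t hK Y).1 hY
  have hH : (1:ℝ) / 2 ^ h ≤ 1 := by
    rw [div_le_one (by positivity)]; exact one_le_pow₀ (by norm_num)
  have hJ : (1:ℝ) / 2 ^ J ≤ 1 / 2 ^ j := by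
    gcongr; norm_num
  exact ⟨h1, h2, s, t, hK, a1.trans hH, a2.trans hH, a3.trans hH, a5.trans hJ⟩

lemma floor_close (x y D : ℝ) (h : |x - y| ≤ D) : |((⌊x⌋ : ℤ) : ℝ) - ⌊y⌋| ≤ D + 1 := by
  have h1 := Int.floor_le x
  have h2 := Int.lt_floor_add_one x
  have h3 := Int.floor_le y
  have h4 := Int.lt_floor_add_one y
  rw [abs_le] at *
  constructor <;> linarith [h.1, h.2]

/-- a finite set of integer pairs within distance `m` of each other -/
lemma box_card (T : Finset (ℤ × ℤ)) (m : ℕ) (hT : ∀ i ∈ T, ∀ i' ∈ T, |i.1 - i'.1| ≤ m ∧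
    |i.2 - i'.2| ≤ m) : T.card ≤ (2 * m + 1) ^ 2 := by
  rcases T.eq_empty_or_nonempty with h | ⟨i0, h0⟩
  · simp [h]
  have : T ⊆ Finset.Icc (i0.1 - m) (i0.1 + m) ×ˢ Finset.Icc (i0.2 - m) (i0.2 + m) := by
    intro i hi
    obtain ⟨a, b⟩ := hT i hi i0 h0
    rw [abs_le] at a b
    simp only [Finset.mem_product, Finset.mem_Icc]
    omega
  refine (Finset.card_le_card this).trans ?_
  rw [Finset.card_product, Int.card_Icc, Int.card_Icc, sq]
  apply le_of_eq
  congr 1 <;> omega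

lemma DSj_mult (F : Fam) (J h j : ℕ) (hjJ : j + 2 * h ≤ J) (I : Finset (ℤ × ℤ))
    (S T : ℤ × ℤ → ℝ) (hK : ∀ i ∈ I, InK (S i) (T i))
    (hS : ∀ i ∈ I, i.1 = ⌊S i / (2 ^ h / 2 ^ J)⌋ ∧ i.2 = ⌊T i / (2 ^ h / 2 ^ J)⌋) (Y : Z4) :
    (I.filter (fun i => Y ∈ DSj F J h (S i) (T i) j)).card ≤ 4489 * 4 ^ (J - 2 * h - j) := by
  set m := J - 2 * h - j with hm
  have hJm : J = m + 2 * h + j := by omega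
  have := box_card (I.filter (fun i => Y ∈ DSj F J h (S i) (T i) j)) (33 * 2 ^ m) ?_
  · refine this.trans ?_
    have h1 : 1 ≤ 2 ^ m := Nat.one_le_two_pow
    have h2 : 4 ^ m = (2 ^ m) ^ 2 := by rw [← pow_mul, mul_comm, pow_mul]; norm_num
    rw [h2]
    nlinarith
  intro i hi i' hi'
  rw [Finset.mem_filter] at hi hi'
  simp only [DSj, Finset.mem_filter] at hi hi'
  obtain ⟨hi, hY, hy, -⟩ := hi
  obtain ⟨hi', hY', -, -⟩ := hi'
  obtain ⟨a4, a1, a2, a3, a5⟩ := (mem_DS F J h _ _ (hK i hi) Y).1 hY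
  obtain ⟨b4, b1, b2, b3, b5⟩ := (mem_DS F J h _ _ (hK i' hi') Y).1 hY'
  have hy' : (2:ℝ) ^ j ≤ Y.2.2.2 := by exact_mod_cast hy
  have key : ∀ (y Q Q' : ℝ), |y - Y.2.2.2 * Q| ≤ 1 / 2 ^ h → |y - Y.2.2.2 * Q'| ≤ 1 / 2 ^ h →
      |Q - Q'| ≤ 2 / (2 ^ h * 2 ^ j) := by
    intro y Q Q' k1 k2
    have k3 : |(Y.2.2.2:ℝ) * (Q - Q')| ≤ 2 * (1 / 2 ^ h) := by
      rw [abs_le] at *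
      constructor <;> linarith [k1.1, k1.2, k2.1, k2.2]
    rw [abs_mul] at k3
    have k4 : (2:ℝ) ^ j * |Q - Q'| ≤ 2 * (1 / 2 ^ h) := 
      le_trans (by gcongr; exact hy'.trans (le_abs_self _)) k3
    rw [le_div_iff₀ (by positivity)]
    calc |Q - Q'| * (2 ^ h * 2 ^ j) = (2 ^ j * |Q - Q'|) * 2 ^ h := by ring
      _ ≤ (2 * (1 / 2 ^ h)) * 2 ^ h := by gcongr
      _ = 2 := by field_simp
  obtain ⟨c1, c2⟩ := F.iq _ _ _ _ _ (hK i hi) (hK i' hi') (key _ _ _ a1 b1) (key _ _ _ a2 b2)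
  have fin : ∀ x y : ℝ, |x - y| ≤ 16 * (2 / (2 ^ h * 2 ^ j)) →
      |⌊x / (2 ^ h / 2 ^ J)⌋ - ⌊y / (2 ^ h / 2 ^ J)⌋| ≤ ((33 * 2 ^ m : ℕ) : ℤ) := by
    intro x y hxy
    have h1 : |x / (2 ^ h / 2 ^ J) - y / (2 ^ h / 2 ^ J)| ≤ 32 * 2 ^ m := by
      rw [← sub_div, abs_div, abs_of_pos (by positivity : (0:ℝ) < 2 ^ h / 2 ^ J),
        div_le_iff₀ (by positivity)]
      refine hxy.trans (le_of_eq ?_)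
      rw [hJm]
      field_simp
      ring
    have h2 := floor_close _ _ _ h1
    have h3 : (1:ℝ) ≤ 2 ^ m := one_le_pow₀ (by norm_num)
    have h4 : |((⌊x / (2 ^ h / 2 ^ J)⌋ : ℤ) : ℝ) - ⌊y / (2 ^ h / 2 ^ J)⌋| ≤ 33 * 2 ^ m := by linarith
    exact_mod_cast h4
  rw [(hS i hi).1, (hS i hi).2, (hS i' hi').1, (hS i' hi').2]
  exact ⟨fin _ _ c1, fin _ _ c2⟩

lemma DS_total (F : Fam) (J h : ℕ) (hh : 1 ≤ h) (hJ : 2 * h ≤ J) (I : Finset (ℤ × ℤ))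
    (S T : ℤ × ℤ → ℝ) (hK : ∀ i ∈ I, InK (S i) (T i))
    (hS : ∀ i ∈ I, i.1 = ⌊S i / (2 ^ h / 2 ^ J)⌋ ∧ i.2 = ⌊T i / (2 ^ h / 2 ^ J)⌋)
    (Bs : ℕ → ℝ) (hB : ∀ j, j ≤ J - 2 * h → ∀ G : Finset Z4, (∀ Y ∈ G, Good F.swap j Y) →
      (G.card : ℝ) ≤ Bs j) :
    ((∑ i ∈ I, (DS F J h (S i) (T i)).card : ℕ) : ℝ) ≤ I.card +
      8978 * ∑ j ∈ Finset.range (J - 2 * h + 1), 4 ^ (J - 2 * h - j) * Bs j := by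
  classical
  have h1 : ∑ i ∈ I, (DS F J h (S i) (T i)).card ≤ I.card +
      2 * ∑ j ∈ Finset.range (J - 2 * h + 1), ∑ i ∈ I, (DSj F J h (S i) (T i) j).card := by
    calc _ ≤ ∑ i ∈ I, (1 + 2 * ∑ j ∈ Finset.range (J - 2 * h + 1),
          (DSj F J h (S i) (T i) j).card) :=
        Finset.sum_le_sum (fun i hi => DS_card F J h hh hJ _ _ (hK i hi))
      _ = _ := by
        rw [Finset.sum_add_distrib, ← Finset.mul_sum, Finset.sum_comm]
        simp
  have h2 : ∀ j ∈ Finset.range (J - 2 * h + 1),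
      ((∑ i ∈ I, (DSj F J h (S i) (T i) j).card : ℕ) : ℝ) ≤
        4489 * (4 ^ (J - 2 * h - j) * Bs j) := by
    intro j hj
    rw [Finset.mem_range] at hj
    let G := I.biUnion (fun i => DSj F J h (S i) (T i) j)
    have hG : (G.card : ℝ) ≤ Bs j := by
      apply hB j (by omega)
      intro Y hY
      simp only [G, Finset.mem_biUnion] at hY
      obtain ⟨i, hi, hY⟩ := hY
      exact DSj_good F J h _ _ (hK i hi) j (by omega) Y hY
    have e : ∑ i ∈ I, (DSj F J h (S i) (T i) j).card =
        ∑ Y ∈ G, (I.filter (fun i => Y ∈ DSj F J h (S i) (T i) j)).card := by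
      refine Eq.trans ?_ (Finset.sum_card_bipartiteAbove_eq_sum_card_bipartiteBelow
        (s := I) (t := G) (fun i Y => Y ∈ DSj F J h (S i) (T i) j))
      apply Finset.sum_congr rfl
      intro i hi
      congr 1
      ext Y
      simp only [Finset.bipartiteAbove, Finset.mem_filter, G, Finset.mem_biUnion]
      exact ⟨fun hY => ⟨⟨i, hi, hY⟩, hY⟩, fun hY => hY.2⟩
    have e2 : ∑ i ∈ I, (DSj F J h (S i) (T i) j).card ≤ G.card * (4489 * 4 ^ (J - 2 * h - j)) := by
      rw [e, ← smul_eq_mul]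
      apply Finset.sum_le_card_nsmul
      intro Y _
      exact DSj_mult F J h j (by omega) I S T hK hS Y
    calc ((∑ i ∈ I, (DSj F J h (S i) (T i) j).card : ℕ) : ℝ)
        ≤ ((G.card * (4489 * 4 ^ (J - 2 * h - j)) : ℕ) : ℝ) := by exact_mod_cast e2
      _ = 4489 * (4 ^ (J - 2 * h - j) * (G.card : ℝ)) := by push_cast; ring
      _ ≤ _ := by gcongr
  calc ((∑ i ∈ I, (DS F J h (S i) (T i)).card : ℕ) : ℝ) ≤ ((I.card +
      2 * ∑ j ∈ Finset.range (J - 2 * h + 1), ∑ i ∈ I, (DSj F J h (S i) (T i) j).card : ℕ) : ℝ) := by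
        exact_mod_cast h1
    _ = I.card + 2 * ∑ j ∈ Finset.range (J - 2 * h + 1),
        ((∑ i ∈ I, (DSj F J h (S i) (T i) j).card : ℕ) : ℝ) := by push_cast; ring
    _ ≤ I.card + 2 * ∑ j ∈ Finset.range (J - 2 * h + 1), 4489 * (4 ^ (J - 2 * h - j) * Bs j) := by
        gcongr with j hj; exact h2 j hj
    _ = _ := by rw [← Finset.mul_sum]; ring

lemma cell_card (F : Fam) (J h : ℕ) (hJ : 2 * h ≤ J) (A : Finset Z4)
    (s' t' : ℝ) (hK : InK s' t')
    (hA : ∀ X ∈ A, (2:ℤ) ^ J ≤ X.2.2.2 ∧ X.2.2.2 < (2:ℤ) ^ (J + 1) ∧ ∃ s t, GoodAt F J X s t ∧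
      |s - s'| ≤ 2 ^ h / 2 ^ J ∧ |t - t'| ≤ 2 ^ h / 2 ^ J) :
    (A.card : ℝ) ≤ (64 * 4000 ^ 4 * 65 ^ 3 * 161) * 16 ^ h * (DS F J h s' t').card := by
  obtain ⟨⟨b1, c1⟩, ⟨b2, c2⟩, ⟨b3, c3⟩⟩ := F.bp s' t' hK
  have hN : (0:ℝ) < 2 ^ J := by positivity
  have hH : (1:ℝ) ≤ 2 ^ h := one_le_pow₀ (by norm_num)
  have hHN : (2:ℝ) ^ h ≤ 2 ^ J := pow_le_pow_right₀ (by norm_num) (by omega)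
  have e4 : (4:ℝ) ^ h = (2 ^ h) ^ 2 := by rw [← pow_mul, mul_comm, pow_mul]; norm_num
  have e16 : (16:ℝ) ^ h = (2 ^ h) ^ 4 := by rw [← pow_mul, mul_comm, pow_mul]; norm_num
  have hb : ∀ x : ℝ, 1 / 16 ≤ x → x ≤ 16 → |x| ≤ 16 := fun x h1 h2 => by
    rw [abs_le]; constructor <;> linarith
  have main := transfer (F.p1 s' t') (F.p2 s' t') (F.p3 s' t') (F.q1 s' t') (F.q2 s' t')
    (F.q3 s' t') (65 * 2 ^ J) (65 * 2 ^ h) (161 * (4 ^ h / 2 ^ J)) (hb _ b1 c1) (hb _ b2 c2) b3 c3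
    (F.pq s' t' hK) (by positivity) (by positivity) (by positivity) (by linarith) A
    (DS F J h s' t') ?_ ?_
  · refine main.trans (le_of_eq ?_)
    rw [e4, e16]
    field_simp
  · intro X hX
    obtain ⟨h1, h2, s, t, hG, hs, ht⟩ := hA X hX
    obtain ⟨k0, k1, k2, k3, k5⟩ := hG
    have h1' : (2:ℝ) ^ J ≤ X.2.2.2 := by exact_mod_cast h1
    have h2' : (X.2.2.2 : ℝ) ≤ 2 * 2 ^ J := by
      rw [← pow_succ']; exact_mod_cast h2.le
    have h4 : |(X.2.2.2 : ℝ)| ≤ 2 * 2 ^ J := by rw [abs_of_pos (by linarith)]; exact h2'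
    obtain ⟨m1, m2, m3, m5⟩ := near_bound F s t s' t' (2 ^ h / 2 ^ J) (2 ^ J) X.1 X.2.1 X.2.2.1
      X.2.2.2 k0 hK hs ht hN h4 k1 k2 k3 k5
    have r1 : (2:ℝ) ^ J * (2 ^ h / 2 ^ J) = 2 ^ h := by field_simp
    rw [r1] at m1 m2 m3
    refine ⟨by linarith, by linarith, by linarith, by linarith, m5.trans ?_⟩
    rw [e4, show (1:ℝ) / 2 ^ J + 96 * (2 ^ h / 2 ^ J) + 64 * (2 ^ J * (2 ^ h / 2 ^ J) ^ 2) =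
      (1 + 96 * 2 ^ h + 64 * (2 ^ h) ^ 2) / 2 ^ J by field_simp, ← mul_div_assoc]
    gcongr
    nlinarith
  · intro Y y4 y1 y2 y3 y5
    rw [mem_DS _ _ _ _ _ hK]
    have u1 : (1:ℝ) / (65 * 2 ^ h) ≤ 1 / 2 ^ h := by gcongr; linarith
    have u2 : (1:ℝ) / (65 * 2 ^ J) ≤ 1 / 2 ^ J := by gcongr; linarith
    have u3 : (1:ℝ) / (161 * (4 ^ h / 2 ^ J)) ≤ 2 ^ J / 4 ^ h := by
      rw [← one_div_div ((4:ℝ) ^ h)]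
      gcongr
      have : (0:ℝ) ≤ 4 ^ h / 2 ^ J := by positivity
      linarith
    exact ⟨y4.trans u3, y1.trans u1, y2.trans u1, y3.trans u1, y5.trans u2⟩

/-- the absolute constant of the recursion -/
def CS : ℝ := 64 * 4000 ^ 4 * 65 ^ 3 * 161 * 8978

lemma step (F : Fam) (J h : ℕ) (hh : 1 ≤ h) (hJ : 2 * h ≤ J) (A : Finset Z4)
    (hA : ∀ X ∈ A, Good F J X)
    (Bs : ℕ → ℝ) (hB : ∀ j, j ≤ J - 2 * h → ∀ G : Finset Z4, (∀ Y ∈ G, Good F.swap j Y) →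
      (G.card : ℝ) ≤ Bs j) :
    (A.card : ℝ) ≤ CS * (4 ^ (h + J) +
      ∑ j ∈ Finset.range (J - 2 * h + 1), 4 ^ (J - j) * Bs j) := by
  classical
  have hw : ∀ X : Z4, ∃ st : ℝ × ℝ, X ∈ A → GoodAt F J X st.1 st.2 := by
    intro X
    by_cases hX : X ∈ A
    · obtain ⟨_, _, s, t, h⟩ := hA X hX
      exact ⟨(s, t), fun _ => h⟩
    · exact ⟨(0, 0), fun h => absurd h hX⟩
  choose θ hθ using hw
  let κ : ℝ := 2 ^ h / 2 ^ J
  have hκ : 0 < κ := by positivity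
  let cell : Z4 → ℤ × ℤ := fun X => (⌊(θ X).1 / κ⌋, ⌊(θ X).2 / κ⌋)
  let I := A.image cell
  have hr : ∀ i : ℤ × ℤ, ∃ X : Z4, i ∈ I → X ∈ A ∧ cell X = i := by
    intro i
    by_cases hi : i ∈ I
    · obtain ⟨X, hX, h⟩ := Finset.mem_image.1 hi
      exact ⟨X, fun _ => ⟨hX, h⟩⟩
    · exact ⟨0, fun h => absurd h hi⟩
  choose rep hrep using hr
  let S : ℤ × ℤ → ℝ := fun i => (θ (rep i)).1
  let T : ℤ × ℤ → ℝ := fun i => (θ (rep i)).2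
  have hK : ∀ i ∈ I, InK (S i) (T i) := fun i hi => (hθ _ (hrep i hi).1).1
  have hS : ∀ i ∈ I, i.1 = ⌊S i / κ⌋ ∧ i.2 = ⌊T i / κ⌋ := fun i hi =>
    ⟨by rw [← congrArg Prod.fst (hrep i hi).2], by rw [← congrArg Prod.snd (hrep i hi).2]⟩
  have hI : (I.card : ℝ) ≤ 25 * 4 ^ (J - h) := by
    have hsub : I ⊆ Finset.Icc (0:ℤ) (4 * 2 ^ (J - h)) ×ˢ Finset.Icc (0:ℤ) (4 * 2 ^ (J - h)) := by
      intro i hi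
      have hk := hK i hi
      obtain ⟨h1, h2, h3, h4, _, _⟩ := hk
      obtain ⟨e1, e2⟩ := hS i hi
      have key : ∀ x : ℝ, 1 / 4 ≤ x → x ≤ 4 → 0 ≤ ⌊x / κ⌋ ∧ ⌊x / κ⌋ ≤ 4 * 2 ^ (J - h) := by
        intro x hx1 hx2
        constructor
        · apply Int.floor_nonneg.2; apply div_nonneg <;> linarith
        · have : x / κ ≤ 4 * 2 ^ (J - h) := by
            rw [div_le_iff₀ hκ]
            have : (2:ℝ) ^ (J - h) * κ = 1 := by
              simp only [κ]
              rw [mul_div_assoc', ← pow_add, Nat.sub_add_cancel (by omega)]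
              exact div_self (by positivity)
            rw [mul_assoc, this]; linarith
          have h2 : ((⌊x / κ⌋ : ℤ) : ℝ) ≤ 4 * 2 ^ (J - h) := (Int.floor_le _).trans this
          exact_mod_cast h2
      simp only [Finset.mem_product, Finset.mem_Icc]
      rw [e1, e2]
      exact ⟨key _ h1 h2, key _ h3 h4⟩
    have h1 := Finset.card_le_card hsub
    rw [Finset.card_product, Int.card_Icc] at h1
    have h2 : ((4 * 2 ^ (J - h) + 1 - 0 : ℤ)).toNat = 4 * 2 ^ (J - h) + 1 := by
      have : (4 * 2 ^ (J - h) + 1 - 0 : ℤ) = ((4 * 2 ^ (J - h) + 1 : ℕ) : ℤ) := by push_cast; ring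
      rw [this]; exact Int.toNat_natCast _
    rw [h2] at h1
    have h3 : (I.card : ℝ) ≤ (4 * 2 ^ (J - h) + 1) * (4 * 2 ^ (J - h) + 1) := by exact_mod_cast h1
    have h4 : (4:ℝ) ^ (J - h) = (2 ^ (J - h)) ^ 2 := by rw [← pow_mul, mul_comm, pow_mul]; norm_num
    have h5 : (1:ℝ) ≤ 2 ^ (J - h) := one_le_pow₀ (by norm_num)
    rw [h4]
    nlinarith
  have hcell : ∀ i ∈ I, ((A.filter (fun X => cell X = i)).card : ℝ) ≤
      (64 * 4000 ^ 4 * 65 ^ 3 * 161) * 16 ^ h * (DS F J h (S i) (T i)).card := by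
    intro i hi
    apply cell_card F J h hJ _ _ _ (hK i hi)
    intro X hX
    rw [Finset.mem_filter] at hX
    obtain ⟨g1, g2, _⟩ := hA X hX.1
    refine ⟨g1, g2, _, _, hθ X hX.1, ?_⟩
    have close : ∀ x y : ℝ, ⌊x / κ⌋ = ⌊y / κ⌋ → |x - y| ≤ κ := by
      intro x y hxy
      have := (Int.abs_sub_lt_one_of_floor_eq_floor hxy).le
      rwa [← sub_div, abs_div, abs_of_pos hκ, div_le_one hκ] at this
    obtain ⟨e1, e2⟩ := hS i hi
    have f1 := congrArg Prod.fst hX.2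
    have f2 := congrArg Prod.snd hX.2
    exact ⟨close _ _ (f1.trans e1), close _ _ (f2.trans e2)⟩
  have hsum : (A.card : ℝ) = ∑ i ∈ I, ((A.filter (fun X => cell X = i)).card : ℝ) := by
    have := Finset.card_eq_sum_card_image cell A
    rw [this]; push_cast; rfl
  have tot := DS_total F J h hh hJ I S T hK hS Bs hB
  have e1 : (16:ℝ) ^ h * 4 ^ (J - h) = 4 ^ (h + J) := by
    rw [show (16:ℝ) = 4 ^ 2 by norm_num, ← pow_mul, ← pow_add]; congr 1; omega
  have e2 : (16:ℝ) ^ h * ∑ j ∈ Finset.range (J - 2 * h + 1), 4 ^ (J - 2 * h - j) * Bs j =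
      ∑ j ∈ Finset.range (J - 2 * h + 1), 4 ^ (J - j) * Bs j := by
    rw [Finset.mul_sum]
    apply Finset.sum_congr rfl
    intro j hj
    rw [Finset.mem_range] at hj
    rw [← mul_assoc, show (16:ℝ) = 4 ^ 2 by norm_num, ← pow_mul, ← pow_add]
    congr 2; omega
  calc (A.card : ℝ) ≤ ∑ i ∈ I, (64 * 4000 ^ 4 * 65 ^ 3 * 161) * 16 ^ h *
        ((DS F J h (S i) (T i)).card : ℝ) := by
        rw [hsum]; exact Finset.sum_le_sum hcell
    _ = (64 * 4000 ^ 4 * 65 ^ 3 * 161) * 16 ^ h * 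
        ((∑ i ∈ I, (DS F J h (S i) (T i)).card : ℕ) : ℝ) := by
        rw [← Finset.mul_sum]; push_cast; rfl
    _ ≤ (64 * 4000 ^ 4 * 65 ^ 3 * 161) * 16 ^ h * (25 * 4 ^ (J - h) +
      8978 * ∑ j ∈ Finset.range (J - 2 * h + 1), 4 ^ (J - 2 * h - j) * Bs j) := by
        gcongr; exact tot.trans (by gcongr)
    _ = (64 * 4000 ^ 4 * 65 ^ 3 * 161) * (25 * (16 ^ h * 4 ^ (J - h)) +
      8978 * (16 ^ h * ∑ j ∈ Finset.range (J - 2 * h + 1), 4 ^ (J - 2 * h - j) * Bs j)) := by ring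
    _ = (64 * 4000 ^ 4 * 65 ^ 3 * 161) * (25 * 4 ^ (h + J) +
      8978 * ∑ j ∈ Finset.range (J - 2 * h + 1), 4 ^ (J - j) * Bs j) := by rw [e1, e2]
    _ ≤ (64 * 4000 ^ 4 * 65 ^ 3 * 161) * (8978 * 4 ^ (h + J) +
      8978 * ∑ j ∈ Finset.range (J - 2 * h + 1), 4 ^ (J - j) * Bs j) := by
        gcongr; norm_num
    _ = _ := by unfold CS; ring


lemma crude (F : Fam) (J : ℕ) (A : Finset Z4) (hA : ∀ X ∈ A, Good F J X) :
    (A.card : ℝ) ≤ 67 ^ 4 * 16 ^ J := by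
  have hsub : A ⊆ Finset.Icc (-33 * 2 ^ J : ℤ) (33 * 2 ^ J) ×ˢ Finset.Icc (-33 * 2 ^ J : ℤ) (33 * 2 ^ J)
    ×ˢ Finset.Icc (-33 * 2 ^ J : ℤ) (33 * 2 ^ J) ×ˢ Finset.Icc (-33 * 2 ^ J : ℤ) (33 * 2 ^ J) := by
    intro X hX
    obtain ⟨h1, h2, s, t, hK, a1, a2, a3, -⟩ := hA X hX
    obtain ⟨⟨b1, c1⟩, ⟨b2, c2⟩, ⟨b3, c3⟩⟩ := F.bp s t hK
    have hN : (1:ℝ) ≤ 2 ^ J := one_le_pow₀ (by norm_num)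
    have h1' : (2:ℝ) ^ J ≤ X.2.2.2 := by exact_mod_cast h1
    have h2' : (X.2.2.2 : ℝ) ≤ 2 * 2 ^ J := by
      rw [← pow_succ']; exact_mod_cast h2.le
    have h4 : |(X.2.2.2 : ℝ)| ≤ 2 * 2 ^ J := by rw [abs_of_pos (by linarith)]; exact h2'
    have key : ∀ (y : ℤ), |(y:ℝ)| ≤ 33 * 2 ^ J → y ∈ Finset.Icc (-33 * 2 ^ J : ℤ) (33 * 2 ^ J) := by
      intro y hy
      rw [abs_le] at hy
      rw [Finset.mem_Icc]
      constructor
      · have : ((-33 * 2 ^ J : ℤ) : ℝ) ≤ y := by push_cast; linarith [hy.1]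
        exact_mod_cast this
      · have : (y : ℝ) ≤ ((33 * 2 ^ J : ℤ) : ℝ) := by push_cast; linarith [hy.2]
        exact_mod_cast this
    have key2 : ∀ (y Q : ℝ), |y - X.2.2.2 * Q| ≤ 1 → 1 / 16 ≤ Q → Q ≤ 16 →
        |y| ≤ 33 * 2 ^ J := by
      intro y Q k1 k2 k3
      have : |X.2.2.2 * Q| ≤ 2 * 2 ^ J * 16 := by
        rw [abs_mul, abs_of_nonneg (by linarith : 0 ≤ Q)]; gcongr
      rw [show y = (y - X.2.2.2 * Q) + X.2.2.2 * Q by ring]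
      refine (abs_add_le _ _).trans ?_
      linarith
    simp only [Finset.mem_product]
    exact ⟨key _ (key2 _ _ a1 b1 c1), key _ (key2 _ _ a2 b2 c2), key _ (key2 _ _ a3 b3 c3),
      key _ (by linarith)⟩
  have h1 := Finset.card_le_card hsub
  simp only [Finset.card_product, Int.card_Icc] at h1
  have h2 : (33 * 2 ^ J + 1 - -33 * 2 ^ J : ℤ).toNat = 66 * 2 ^ J + 1 := by
    have : (33 * 2 ^ J + 1 - -33 * 2 ^ J : ℤ) = ((66 * 2 ^ J + 1 : ℕ) : ℤ) := by push_cast; ring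
    rw [this]; exact Int.toNat_natCast _
  rw [h2] at h1
  have h3 : (A.card : ℝ) ≤ (66 * 2 ^ J + 1) ^ 4 := by
    have : A.card ≤ (66 * 2 ^ J + 1) ^ 4 := h1.trans (le_of_eq (by ring))
    exact_mod_cast this
  refine h3.trans ?_
  have e16 : (16:ℝ) ^ J = (2 ^ J) ^ 4 := by rw [← pow_mul, mul_comm, pow_mul]; norm_num
  have h5 : (1:ℝ) ≤ 2 ^ J := one_le_pow₀ (by norm_num)
  rw [e16, ← mul_pow]
  gcongr
  linarith

lemma good_count (ρ : ℝ) (hρ : 1 < ρ) : ∃ A0 : ℝ, 0 < A0 ∧ ∀ (J : ℕ) (F : Fam) (A : Finset Z4),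
    (∀ X ∈ A, Good F J X) → (A.card : ℝ) ≤ A0 * 4 ^ J * ρ ^ J := by
  have hCS : 0 < CS := by unfold CS; norm_num
  have hρ0 : 0 < ρ := by linarith
  have hρ1 : 0 < ρ - 1 := by linarith
  obtain ⟨h, hh⟩ := pow_unbounded_of_one_lt (2 * (CS * (ρ / (ρ - 1)))) hρ
  have hh1 : 2 * (CS * (ρ / (ρ - 1))) ≤ ρ ^ (2 * (h + 1)) :=
    hh.le.trans (pow_le_pow_right₀ hρ.le (by omega))
  generalize h + 1 = k at hh1
  by_cases hk : 1 ≤ k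
  swap
  · exfalso
    have : k = 0 := by omega
    subst this
    have h1 : 1 < ρ / (ρ - 1) := by rw [lt_div_iff₀ hρ1]; linarith
    have h2 : 1 ≤ CS := by unfold CS; norm_num
    norm_num at hh1
    nlinarith
  refine ⟨2 * CS * 4 ^ k + 67 ^ 4 * 16 ^ k, by positivity, ?_⟩
  set A0 := 2 * CS * 4 ^ k + 67 ^ 4 * 16 ^ k with hA0
  intro J
  induction J using Nat.strong_induction_on with
  | _ J ih =>
  intro F A hA
  have hρJ : 1 ≤ ρ ^ J := one_le_pow₀ hρ.le
  by_cases hJ : 2 * k ≤ J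
  · have st := step F J k hk hJ A hA (fun j => A0 * 4 ^ j * ρ ^ j)
      (fun j hj G hG => ih j (by omega) F.swap G hG)
    have e : ∑ j ∈ Finset.range (J - 2 * k + 1), (4:ℝ) ^ (J - j) * (A0 * 4 ^ j * ρ ^ j) =
        A0 * 4 ^ J * ∑ j ∈ Finset.range (J - 2 * k + 1), ρ ^ j := by
      rw [Finset.mul_sum]
      apply Finset.sum_congr rfl
      intro j hj
      rw [Finset.mem_range] at hj
      have : (4:ℝ) ^ J = 4 ^ (J - j) * 4 ^ j := by rw [← pow_add]; congr 1; omega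
      rw [this]; ring
    rw [e] at st
    have hs : ∑ j ∈ Finset.range (J - 2 * k + 1), ρ ^ j ≤ ρ ^ (J - 2 * k) * (ρ / (ρ - 1)) := by
      rw [geom_sum_eq hρ.ne', ← mul_div_assoc, ← pow_succ]
      gcongr
      linarith
    have hs2 : CS * ∑ j ∈ Finset.range (J - 2 * k + 1), ρ ^ j ≤ ρ ^ J / 2 := by
      calc CS * ∑ j ∈ Finset.range (J - 2 * k + 1), ρ ^ j
          ≤ CS * (ρ ^ (J - 2 * k) * (ρ / (ρ - 1))) := by gcongr
        _ = ρ ^ (J - 2 * k) * (CS * (ρ / (ρ - 1))) := by ring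
        _ ≤ ρ ^ (J - 2 * k) * (ρ ^ (2 * k) / 2) := by gcongr; linarith
        _ = ρ ^ J / 2 := by
          rw [mul_div_assoc', ← pow_add]; congr 2; omega
    have h4 : CS * 4 ^ (k + J) ≤ A0 / 2 * 4 ^ J * ρ ^ J := by
      have : CS * 4 ^ k ≤ A0 / 2 := by
        have : (0:ℝ) < 67 ^ 4 * 16 ^ k := by positivity
        rw [hA0]; linarith
      calc CS * 4 ^ (k + J) = (CS * 4 ^ k) * 4 ^ J * 1 := by rw [pow_add]; ring
        _ ≤ A0 / 2 * 4 ^ J * ρ ^ J := by gcongr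
    have h5 : 0 ≤ A0 * 4 ^ J := by positivity
    calc (A.card : ℝ) ≤ _ := st
      _ = CS * 4 ^ (k + J) + A0 * 4 ^ J * (CS * ∑ j ∈ Finset.range (J - 2 * k + 1), ρ ^ j) := by ring
      _ ≤ A0 / 2 * 4 ^ J * ρ ^ J + A0 * 4 ^ J * (ρ ^ J / 2) := by gcongr
      _ = _ := by ring
  · have c := crude F J A hA
    have h1 : (67:ℝ) ^ 4 * 16 ^ k ≤ A0 := by
      have : (0:ℝ) < 2 * CS * 4 ^ k := by positivity
      rw [hA0]; linarith
    have h2 : (16:ℝ) ^ J ≤ 16 ^ k * 4 ^ J := by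
      rw [show (16:ℝ) = 4 ^ 2 by norm_num, ← pow_mul, ← pow_mul, ← pow_add]
      exact pow_le_pow_right₀ (by norm_num) (by omega)
    calc (A.card : ℝ) ≤ 67 ^ 4 * 16 ^ J := c
      _ ≤ 67 ^ 4 * (16 ^ k * 4 ^ J) * 1 := by rw [mul_one]; gcongr
      _ = (67 ^ 4 * 16 ^ k) * 4 ^ J * 1 := by ring
      _ ≤ A0 * 4 ^ J * ρ ^ J := by gcongr


lemma energy_real (N ra rb rc rd rN : ℝ) (hN : 2 ≤ N) (hr : 0 < rN) (hrN : rN ^ 2 = N)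
    (a1 : rN ≤ ra) (a2 : ra ^ 2 ≤ 2 * N) (b1 : rN ≤ rb) (b2 : rb ^ 2 ≤ 2 * N)
    (c1 : rN ≤ rc) (c2 : rc ^ 2 ≤ 2 * N) (d1 : rN ≤ rd) (d2 : rd ^ 2 ≤ 2 * N)
    (h : |ra + rb - rc - rd| ≤ 1 / (100 * (N * rN))) :
    InK (ra / rd) (rb / rd) ∧ |rc ^ 2 - rd ^ 2 * (ra / rd + rb / rd - 1) ^ 2| ≤ 1 ∧
    |1 / (ra / rd) * ra ^ 2 + 1 / (rb / rd) * rb ^ 2 - 1 / (ra / rd + rb / rd - 1) * rc ^ 2 - rd ^ 2|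
      ≤ 1 / (2 * N) := by
  have hr1 : 7 / 5 ≤ rN := by nlinarith
  have up : ∀ x : ℝ, rN ≤ x → x ^ 2 ≤ 2 * N → x ≤ 3 / 2 * rN := by
    intro x h1 h2; nlinarith
  have a3 := up _ a1 a2
  have b3 := up _ b1 b2
  have c3 := up _ c1 c2
  have d3 := up _ d1 d2
  have hw : 1 / (100 * (N * rN)) ≤ 1 / 200 := by
    gcongr; nlinarith
  set w := 1 / (100 * (N * rN)) with hwdef
  have hw0 : 0 < w := by positivity
  have hwN : w * rN = 1 / (100 * N) := by rw [hwdef]; field_simp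
  obtain ⟨u, hu⟩ : ∃ u, u = ra + rb - rd := ⟨_, rfl⟩
  have hd0 : 0 < rd := by linarith
  have ha0 : 0 < ra := by linarith
  have hb0 : 0 < rb := by linarith
  have hg : ra / rd + rb / rd - 1 = u / rd := by rw [hu]; field_simp
  have huc : |u - rc| ≤ w := by rw [hu, show ra + rb - rd - rc = ra + rb - rc - rd by ring]; exact h
  have huc' := abs_le.1 huc
  have u1 : 9 / 10 * rN ≤ u := by linarith
  have u2 : u ≤ 8 / 5 * rN := by linarith
  have hu0 : 0 < u := by linarith
  have hsq : |rc ^ 2 - u ^ 2| ≤ 1 / (25 * N) := by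
    rw [show rc ^ 2 - u ^ 2 = - ((u - rc) * (u + rc)) by ring, abs_neg, abs_mul,
      abs_of_pos (by linarith : 0 < u + rc)]
    calc |u - rc| * (u + rc) ≤ w * (4 * rN) :=
          mul_le_mul huc (by linarith) (by linarith) hw0.le
      _ = 4 * (w * rN) := by ring
      _ = 1 / (25 * N) := by rw [hwN]; field_simp; norm_num
  rw [hg]
  refine ⟨⟨?_, ?_, ?_, ?_, ?_, ?_⟩, ?_, ?_⟩
  · rw [le_div_iff₀ hd0]; linarith
  · rw [div_le_iff₀ hd0]; linarith
  · rw [le_div_iff₀ hd0]; linarith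
  · rw [div_le_iff₀ hd0]; linarith
  · rw [hg, le_div_iff₀ hd0]; linarith
  · rw [hg, div_le_iff₀ hd0]; linarith
  · rw [show rd ^ 2 * (u / rd) ^ 2 = u ^ 2 by field_simp]
    refine hsq.trans ?_
    rw [div_le_one (by positivity)]; linarith
  · have e : 1 / (ra / rd) * ra ^ 2 + 1 / (rb / rd) * rb ^ 2 - 1 / (u / rd) * rc ^ 2 - rd ^ 2 =
        - (rd / u) * (rc ^ 2 - u ^ 2) := by
      have : rd ^ 2 = rd * (ra + rb - u) := by rw [hu]; ring
      rw [this]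
      field_simp
      ring
    rw [e, abs_mul, abs_neg, abs_of_pos (by positivity)]
    have : rd / u ≤ 2 := by rw [div_le_iff₀ hu0]; linarith
    calc rd / u * |rc ^ 2 - u ^ 2| ≤ 2 * (1 / (25 * N)) := by gcongr
      _ = (4 / 25) * (1 / (2 * N)) := by field_simp; norm_num
      _ ≤ 1 / (2 * N) := by
        have : 0 < 1 / (2 * N) := by positivity
        linarith

/-- casting quadruples -/
def castZ4 (X : ℕ × ℕ × ℕ × ℕ) : Z4 := (X.1, X.2.1, X.2.2.1, X.2.2.2)

lemma castZ4_inj : Function.Injective castZ4 := by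
  rintro ⟨a, b, c, d⟩ ⟨a', b', c', d'⟩ h
  simpa [castZ4] using h

lemma energy (ε : ℝ) (hε : 0 < ε) : ∃ C : ℝ, 0 < C ∧ ∀ (N : ℝ), 2 ≤ N →
    ∀ A : Finset (ℕ × ℕ × ℕ × ℕ), (∀ X ∈ A, (N < X.1 ∧ X.1 ≤ 2 * N) ∧
      (N < X.2.1 ∧ X.2.1 ≤ 2 * N) ∧ (N < X.2.2.1 ∧ X.2.2.1 ≤ 2 * N) ∧
      (N < X.2.2.2 ∧ X.2.2.2 ≤ 2 * N) ∧
      |√X.1 + √X.2.1 - √X.2.2.1 - √X.2.2.2| ≤ 1 / (100 * (N * √N))) →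
    (A.card : ℝ) ≤ C * (N ^ 2 * N ^ ε) := by
  classical
  obtain ⟨A0, hA0, hgood⟩ := good_count ((2:ℝ) ^ ε) (Real.one_lt_rpow (by norm_num) hε)
  refine ⟨A0 * 4 * 2 ^ ε + A0 * 4 * 2 ^ ε, by positivity, ?_⟩
  intro N hN A hA
  have hN0 : 0 < N := by linarith
  have piece : ∀ J : ℕ, (2:ℝ) ^ J ≤ 2 * N →
      ((A.filter (fun X => Nat.log 2 X.2.2.2 = J)).card : ℝ) ≤ A0 * 4 * 2 ^ ε * (N ^ 2 * N ^ ε) := by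
    intro J hJ
    have hg := hgood J F0 ((A.filter (fun X => Nat.log 2 X.2.2.2 = J)).map ⟨_, castZ4_inj⟩) ?_
    · rw [Finset.card_map] at hg
      refine hg.trans ?_
      have e1 : ((2:ℝ) ^ ε) ^ J = ((2:ℝ) ^ J) ^ ε := by
        rw [← Real.rpow_natCast, ← Real.rpow_mul (by norm_num), mul_comm,
          Real.rpow_mul (by norm_num), Real.rpow_natCast]
      have e2 : (4:ℝ) ^ J = (2 ^ J) ^ 2 := by rw [← pow_mul, mul_comm, pow_mul]; norm_num
      rw [e1, e2]
      calc A0 * (2 ^ J) ^ 2 * ((2:ℝ) ^ J) ^ ε ≤ A0 * (2 * N) ^ 2 * (2 * N) ^ ε := by gcongr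
        _ = _ := by rw [Real.mul_rpow (by norm_num) hN0.le]; ring
    · intro Y hY
      obtain ⟨X, hX, rfl⟩ := Finset.mem_map.1 hY
      rw [Finset.mem_filter] at hX
      obtain ⟨hX, hXJ⟩ := hX
      obtain ⟨⟨ha1, ha2⟩, ⟨hb1, hb2⟩, ⟨hc1, hc2⟩, ⟨hd1, hd2⟩, hx⟩ := hA X hX
      have hd0 : X.2.2.2 ≠ 0 := by
        intro h; rw [h] at hd1; simp at hd1; linarith
      have s1 : √(X.1:ℝ) ^ 2 = X.1 := Real.sq_sqrt (Nat.cast_nonneg _)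
      have s2 : √(X.2.1:ℝ) ^ 2 = X.2.1 := Real.sq_sqrt (Nat.cast_nonneg _)
      have s3 : √(X.2.2.1:ℝ) ^ 2 = X.2.2.1 := Real.sq_sqrt (Nat.cast_nonneg _)
      have s4 : √(X.2.2.2:ℝ) ^ 2 = X.2.2.2 := Real.sq_sqrt (Nat.cast_nonneg _)
      obtain ⟨r1, r2, r3⟩ := energy_real N (√X.1) (√X.2.1) (√X.2.2.1) (√X.2.2.2) (√N) hN
        (Real.sqrt_pos.2 hN0) (Real.sq_sqrt hN0.le)
        (Real.sqrt_le_sqrt ha1.le) (by rw [s1]; exact ha2)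
        (Real.sqrt_le_sqrt hb1.le) (by rw [s2]; exact hb2)
        (Real.sqrt_le_sqrt hc1.le) (by rw [s3]; exact hc2)
        (Real.sqrt_le_sqrt hd1.le) (by rw [s4]; exact hd2) hx
      have hdp : (0:ℝ) < √(X.2.2.2:ℝ) := Real.sqrt_pos.2 (by linarith)
      refine ⟨?_, ?_, √X.1 / √X.2.2.2, √X.2.1 / √X.2.2.2, r1, ?_, ?_, ?_, ?_⟩
      · simp only [castZ4, Function.Embedding.coeFn_mk]
        rw [← hXJ]; exact_mod_cast Nat.pow_log_le_self 2 hd0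
      · simp only [castZ4, Function.Embedding.coeFn_mk]
        rw [← hXJ]; exact_mod_cast Nat.lt_pow_succ_log_self (by norm_num) X.2.2.2
      · simp only [castZ4, Function.Embedding.coeFn_mk, F0, Int.cast_natCast]
        rw [div_pow, s1, s4]
        rw [mul_div_cancel₀ _ (by exact_mod_cast hd0)]; simp
      · simp only [castZ4, Function.Embedding.coeFn_mk, F0, Int.cast_natCast]
        rw [div_pow, s2, s4]
        rw [mul_div_cancel₀ _ (by exact_mod_cast hd0)]; simp
      · simp only [castZ4, Function.Embedding.coeFn_mk, F0, Int.cast_natCast]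
        rw [s3, s4] at r2
        exact r2
      · simp only [castZ4, Function.Embedding.coeFn_mk, F0, Int.cast_natCast]
        rw [s1, s2, s3, s4] at r3
        refine r3.trans ?_
        gcongr
  set J0 := Nat.log 2 ⌊N⌋₊ with hJ0
  have hf0 : ⌊N⌋₊ ≠ 0 := by
    have : 1 ≤ ⌊N⌋₊ := Nat.le_floor (by push_cast; linarith)
    omega
  have hJN : (2:ℝ) ^ J0 ≤ N := by
    have h1 : 2 ^ J0 ≤ ⌊N⌋₊ := Nat.pow_log_le_self 2 hf0
    have h2 : ((2 ^ J0 : ℕ) : ℝ) ≤ ⌊N⌋₊ := by exact_mod_cast h1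
    push_cast at h2
    exact h2.trans (Nat.floor_le hN0.le)
  have hsub : A ⊆ A.filter (fun X => Nat.log 2 X.2.2.2 = J0) ∪
      A.filter (fun X => Nat.log 2 X.2.2.2 = J0 + 1) := by
    intro X hX
    obtain ⟨-, -, -, ⟨hd1, hd2⟩, -⟩ := hA X hX
    have k1 : ⌊N⌋₊ ≤ X.2.2.2 := by
      have : ((⌊N⌋₊ : ℕ) : ℝ) ≤ X.2.2.2 := (Nat.floor_le hN0.le).trans hd1.le
      exact_mod_cast this
    have k2 : X.2.2.2 < 2 * (⌊N⌋₊ + 1) := by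
      have : (X.2.2.2 : ℝ) < 2 * (⌊N⌋₊ + 1) := by linarith [Nat.lt_floor_add_one N]
      exact_mod_cast this
    have k3 : ⌊N⌋₊ < 2 ^ (J0 + 1) := Nat.lt_pow_succ_log_self (by norm_num) _
    have k4 : Nat.log 2 X.2.2.2 < J0 + 2 := by
      apply Nat.log_lt_of_lt_pow (by omega)
      rw [show J0 + 2 = J0 + 1 + 1 by omega, pow_succ]; omega
    have k5 : J0 ≤ Nat.log 2 X.2.2.2 := Nat.log_mono_right k1
    simp only [Finset.mem_union, Finset.mem_filter]
    rcases (by omega : Nat.log 2 X.2.2.2 = J0 ∨ Nat.log 2 X.2.2.2 = J0 + 1) with h | h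
    · left; exact ⟨hX, h⟩
    · right; exact ⟨hX, h⟩
  have h1 := (Finset.card_le_card hsub).trans (Finset.card_union_le _ _)
  have h2 : (A.card : ℝ) ≤ ((A.filter (fun X => Nat.log 2 X.2.2.2 = J0)).card : ℝ) +
      (A.filter (fun X => Nat.log 2 X.2.2.2 = J0 + 1)).card := by exact_mod_cast h1
  have p1 := piece J0 (by linarith)
  have p2 := piece (J0 + 1) (by rw [pow_succ]; linarith)
  linarith


lemma geom_int (r : ℝ) (h0 : 0 ≤ r) (h1 : r < 1) (I : Finset ℤ) (i : ℤ) :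
    ∑ j ∈ I, r ^ (i - j).natAbs ≤ 2 / (1 - r) := by
  classical
  have part : ∀ K : Finset ℤ, (∀ a ∈ K, ∀ b ∈ K, (i - a).natAbs = (i - b).natAbs → a = b) →
      ∑ j ∈ K, r ^ (i - j).natAbs ≤ 1 / (1 - r) := by
    intro K hK
    have e : ∑ j ∈ K, r ^ (i - j).natAbs = ∑ n ∈ K.image (fun j => (i - j).natAbs), r ^ n := by
      rw [Finset.sum_image]
      intro a ha b hb hab
      exact hK a ha b hb hab
    rw [e, one_div, ← tsum_geometric_of_lt_one h0 h1]
    exact (summable_geometric_of_lt_one h0 h1).sum_le_tsum _ (fun n _ => by positivity)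
  rw [← Finset.sum_filter_add_sum_filter_not I (fun j => j ≤ i)]
  have p1 := part (I.filter (fun j => j ≤ i)) (by
    intro a ha b hb hab
    rw [Finset.mem_filter] at ha hb
    omega)
  have p2 := part (I.filter (fun j => ¬ j ≤ i)) (by
    intro a ha b hb hab
    rw [Finset.mem_filter] at ha hb
    omega)
  have : 2 / (1 - r) = 1 / (1 - r) + 1 / (1 - r) := by ring
  linarith

lemma gauss_cell (w Δ x y : ℝ) (hw : 0 < w) (hΔ : 0 < Δ) :
    Real.exp (-(x - y) ^ 2 / (2 * Δ ^ 2)) ≤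
      Real.exp (3 / 2) * Real.exp (-(1 / (1 + Δ / w))) ^ (⌊x / w⌋ - ⌊y / w⌋).natAbs := by
  rw [← Real.exp_nat_mul, ← Real.exp_add]
  apply Real.exp_le_exp.2
  set R := 1 + Δ / w with hR
  have hR1 : 1 ≤ R := by rw [hR]; have : 0 < Δ / w := by positivity
                         linarith
  have hΔR : Δ ≤ R * w := by rw [hR]; field_simp; linarith
  have hm : (((⌊x / w⌋ - ⌊y / w⌋).natAbs : ℕ) : ℝ) ≤ |x - y| / w + 1 := by
    rw [Nat.cast_natAbs]
    have := floor_close (x / w) (y / w) (|x - y| / w) (by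
      rw [← sub_div, abs_div, abs_of_pos hw])
    push_cast
    exact this
  set m : ℝ := (((⌊x / w⌋ - ⌊y / w⌋).natAbs : ℕ) : ℝ) with hmdef
  set u := |x - y| with hu
  have hu0 : 0 ≤ u := abs_nonneg _
  have hR0 : 0 < R := by linarith
  rw [show (x - y) ^ 2 = u ^ 2 by rw [hu, sq_abs]]
  -- v = u / (R w)
  have h1 : u / (R * w) ≤ u / Δ := by gcongr
  have h2 : u ^ 2 / (2 * Δ ^ 2) = (u / Δ) ^ 2 / 2 := by field_simp
  have h3 : m / R ≤ u / (R * w) + 1 := by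
    calc m / R ≤ (u / w + 1) / R := by gcongr
      _ = u / (R * w) + 1 / R := by field_simp
      _ ≤ _ := by
        have : 1 / R ≤ 1 := by rw [div_le_one hR0]; exact hR1
        linarith
  rw [neg_div, h2, show m * -(1 / R) = - (m / R) by ring]
  nlinarith [sq_nonneg (u / Δ - 1)]

lemma gauss_general {ι : Type*} [DecidableEq ι] (P : Finset ι) (f : ι → ℝ) (w Δ : ℝ) (hw : 0 < w) (hΔ : 0 < Δ) :
    ∑ x ∈ P, ∑ y ∈ P, Real.exp (-(f x - f y) ^ 2 / (2 * Δ ^ 2)) ≤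
      Real.exp (3 / 2) * 4 * (1 + Δ / w) *
        ((P ×ˢ P).filter (fun z => |f z.1 - f z.2| ≤ w)).card := by
  classical
  set R := 1 + Δ / w with hR
  have hR1 : 1 ≤ R := by rw [hR]; have : 0 < Δ / w := by positivity
                         linarith
  set r := Real.exp (-(1 / R)) with hr
  have hr0 : 0 ≤ r := (Real.exp_pos _).le
  have hr1 : r < 1 := by
    have hp : 0 < 1 / R := by positivity
    have := Real.exp_lt_exp.2 (show -(1 / R) < 0 by linarith)
    rwa [Real.exp_zero] at this
  have hgeo : 2 / (1 - r) ≤ 4 * R := by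
    rw [div_le_iff₀ (by linarith)]
    have h1 : 1 + 1 / R ≤ Real.exp (1 / R) := by linarith [Real.add_one_le_exp (1 / R)]
    have h2 : r * Real.exp (1 / R) = 1 := by rw [hr, ← Real.exp_add]; simp
    have h3 : r * (1 + 1 / R) ≤ 1 := by exact (mul_le_mul_of_nonneg_left h1 hr0).trans h2.le
    have h4 : r * (R + 1) ≤ R := by
      have : r * (R + 1) = R * (r * (1 + 1 / R)) := by field_simp
      rw [this]; nlinarith
    nlinarith
  let c : ι → ℤ := fun x => ⌊f x / w⌋
  let I := P.image c
  let n : ℤ → ℝ := fun i => ((P.filter (fun x => c x = i)).card : ℝ)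
  have sc : ∀ g : ℤ → ℝ, ∑ x ∈ P, g (c x) = ∑ i ∈ I, n i * g i := by
    intro g
    rw [Finset.sum_comp g c]
    simp only [nsmul_eq_mul, n, I]
  have h1 : ∑ x ∈ P, ∑ y ∈ P, Real.exp (-(f x - f y) ^ 2 / (2 * Δ ^ 2)) ≤
      Real.exp (3 / 2) * ∑ x ∈ P, ∑ y ∈ P, r ^ (c x - c y).natAbs := by
    rw [Finset.mul_sum]
    apply Finset.sum_le_sum
    intro x _
    rw [Finset.mul_sum]
    apply Finset.sum_le_sum
    intro y _
    exact gauss_cell w Δ (f x) (f y) hw hΔ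
  have h2 : ∑ x ∈ P, ∑ y ∈ P, r ^ (c x - c y).natAbs =
      ∑ i ∈ I, ∑ j ∈ I, n i * n j * r ^ (i - j).natAbs := by
    rw [sc (fun i => ∑ y ∈ P, r ^ (i - c y).natAbs)]
    apply Finset.sum_congr rfl
    intro i _
    rw [sc (fun j => r ^ (i - j).natAbs), Finset.mul_sum]
    apply Finset.sum_congr rfl
    intro j _
    ring
  have h3 : ∑ i ∈ I, ∑ j ∈ I, n i * n j * r ^ (i - j).natAbs ≤ 4 * R * ∑ i ∈ I, n i ^ 2 := by
    have a1 : ∑ i ∈ I, ∑ j ∈ I, n i * n j * r ^ (i - j).natAbs ≤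
        ∑ i ∈ I, ∑ j ∈ I, (n i ^ 2 / 2 * r ^ (i - j).natAbs + n j ^ 2 / 2 * r ^ (j - i).natAbs) := by
      apply Finset.sum_le_sum
      intro i _
      apply Finset.sum_le_sum
      intro j _
      rw [show (j - i).natAbs = (i - j).natAbs by omega, ← add_mul]
      gcongr
      nlinarith [sq_nonneg (n i - n j)]
    have a2 : ∑ i ∈ I, ∑ j ∈ I, n i ^ 2 / 2 * r ^ (i - j).natAbs ≤ 2 * R * ∑ i ∈ I, n i ^ 2 := by
      rw [Finset.mul_sum]
      apply Finset.sum_le_sum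
      intro i _
      rw [← Finset.mul_sum]
      calc n i ^ 2 / 2 * ∑ j ∈ I, r ^ (i - j).natAbs ≤ n i ^ 2 / 2 * (4 * R) := by
            gcongr
            exact (geom_int r hr0 hr1 I i).trans hgeo
        _ = _ := by ring
    have a3 : ∑ i ∈ I, ∑ j ∈ I, n j ^ 2 / 2 * r ^ (j - i).natAbs ≤ 2 * R * ∑ i ∈ I, n i ^ 2 := by
      rw [Finset.sum_comm]; exact a2
    simp only [Finset.sum_add_distrib] at a1
    linarith
  have h4 : ∑ i ∈ I, n i ^ 2 ≤ ((P ×ˢ P).filter (fun z => |f z.1 - f z.2| ≤ w)).card := by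
    have b1 : ∑ i ∈ I, n i ^ 2 = ∑ x ∈ P, n (c x) := by
      rw [sc n]; apply Finset.sum_congr rfl; intro i _; ring
    have b2 : ∑ x ∈ P, n (c x) = ((∑ x ∈ P, (P.filter (fun y => c y = c x)).card : ℕ) : ℝ) := by
      push_cast; rfl
    rw [b1, b2]
    have b3 : ((P ×ˢ P).filter (fun z => |f z.1 - f z.2| ≤ w)).card =
        ∑ x ∈ P, (P.filter (fun y => |f x - f y| ≤ w)).card := by
      simp only [Finset.card_filter]
      rw [Finset.sum_product]
    rw [b3]
    norm_cast
    apply Finset.sum_le_sum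
    intro x _
    apply Finset.card_le_card
    intro y hy
    rw [Finset.mem_filter] at hy ⊢
    refine ⟨hy.1, ?_⟩
    have := (Int.abs_sub_lt_one_of_floor_eq_floor hy.2.symm).le
    rwa [← sub_div, abs_div, abs_of_pos hw, div_le_one hw] at this
  calc _ ≤ Real.exp (3 / 2) * ∑ x ∈ P, ∑ y ∈ P, r ^ (c x - c y).natAbs := h1
    _ ≤ Real.exp (3 / 2) * (4 * R * ∑ i ∈ I, n i ^ 2) := by rw [h2]; gcongr
    _ ≤ Real.exp (3 / 2) * (4 * R * ((P ×ˢ P).filter (fun z => |f z.1 - f z.2| ≤ w)).card) := by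
      gcongr
    _ = _ := by ring

/-- the integers in `(N, 2N]` -/
noncomputable def SN (N : ℝ) : Finset ℕ := Finset.Ioc ⌊N⌋₊ ⌊2 * N⌋₊

lemma mem_SN (N : ℝ) (hN : 0 ≤ N) (n : ℕ) : n ∈ SN N ↔ N < n ∧ (n:ℝ) ≤ 2 * N := by
  rw [SN, Finset.mem_Ioc, Nat.floor_lt hN, Nat.le_floor_iff (by linarith)]

lemma card_SN (N : ℝ) (hN : 0 ≤ N) : ((SN N).card : ℝ) ≤ 2 * N := by
  rw [SN, Nat.card_Ioc]
  calc ((⌊2 * N⌋₊ - ⌊N⌋₊ : ℕ) : ℝ) ≤ ((⌊2 * N⌋₊ : ℕ) : ℝ) := by exact_mod_cast Nat.sub_le _ _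
    _ ≤ 2 * N := Nat.floor_le (by linarith)

lemma gauss_sum (ε : ℝ) (hε : 0 < ε) : ∃ C : ℝ, 0 < C ∧ ∀ (N Δ : ℝ), 2 ≤ N → 0 < Δ →
    ∑ x ∈ SN N ×ˢ SN N, ∑ y ∈ SN N ×ˢ SN N,
      Real.exp (-((√x.1 + √x.2) - (√y.1 + √y.2)) ^ 2 / (2 * Δ ^ 2)) ≤
      C * ((1 + Δ * (N * √N)) * (N ^ 2 * N ^ ε)) := by
  classical
  obtain ⟨C, hC, hE⟩ := energy ε hε
  refine ⟨Real.exp (3 / 2) * 4 * 100 * C, by positivity, ?_⟩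
  intro N Δ hN hΔ
  have hN0 : 0 < N := by linarith
  have hw : 0 < 1 / (100 * (N * √N)) := by have := Real.sqrt_pos.2 hN0; positivity
  have g := gauss_general (SN N ×ˢ SN N) (fun x => √x.1 + √x.2) _ Δ hw hΔ
  refine g.trans ?_
  let φ : (ℕ × ℕ) × (ℕ × ℕ) → ℕ × ℕ × ℕ × ℕ := fun z => (z.1.1, z.1.2, z.2.1, z.2.2)
  have hφ : Function.Injective φ := by
    rintro ⟨⟨a, b⟩, ⟨c, d⟩⟩ ⟨⟨a', b'⟩, ⟨c', d'⟩⟩ h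
    simp only [φ, Prod.mk.injEq] at h ⊢
    tauto
  have e := hE N hN ((((SN N ×ˢ SN N) ×ˢ (SN N ×ˢ SN N)).filter (fun z =>
    |(√z.1.1 + √z.1.2) - (√z.2.1 + √z.2.2)| ≤ 1 / (100 * (N * √N)))).map ⟨φ, hφ⟩) ?_
  · rw [Finset.card_map] at e
    have h1 : 1 + Δ / (1 / (100 * (N * √N))) ≤ 100 * (1 + Δ * (N * √N)) := by
      rw [div_div_eq_mul_div, div_one]; linarith
    calc _ ≤ Real.exp (3 / 2) * 4 * (100 * (1 + Δ * (N * √N))) * (C * (N ^ 2 * N ^ ε)) := by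
          gcongr
      _ = _ := by ring
  · intro X hX
    obtain ⟨z, hz, rfl⟩ := Finset.mem_map.1 hX
    simp only [Finset.mem_filter, Finset.mem_product, mem_SN N hN0.le] at hz
    obtain ⟨⟨⟨h1, h2⟩, h3, h4⟩, h5⟩ := hz
    refine ⟨h1, h2, h3, h4, ?_⟩
    simp only [φ, Function.Embedding.coeFn_mk]
    convert h5 using 2
    ring

section Final

open MeasureTheory ProbabilityTheory

/-- finite exponential sum -/
noncomputable def ES {ι : Type*} (P : Finset ι) (f : ι → ℝ) (t : ℝ) : ℂ :=
  ∑ x ∈ P, Complex.exp (f x * t * Complex.I)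

lemma norm_cexp_real (a t : ℝ) : ‖Complex.exp (a * t * Complex.I)‖ = 1 := by
  rw [← Complex.ofReal_mul, Complex.norm_exp_ofReal_mul_I]

lemma cont_ES {ι : Type*} (P : Finset ι) (f : ι → ℝ) : Continuous (ES P f) := by
  unfold ES; fun_prop

lemma norm_ES {ι : Type*} (P : Finset ι) (f : ι → ℝ) (t : ℝ) : ‖ES P f t‖ ≤ P.card := by
  unfold ES
  refine (norm_sum_le _ _).trans ?_
  simp [norm_cexp_real]

lemma integrable_of_bdd {E : Type*} [NormedAddCommGroup E] [SecondCountableTopologyEither ℝ E]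
    (μ : Measure ℝ) [IsProbabilityMeasure μ] (g : ℝ → E)
    (hg : Continuous g) (B : ℝ) (hB : ∀ t, ‖g t‖ ≤ B) : Integrable g μ :=
  Integrable.of_bound hg.aestronglyMeasurable B (Filter.Eventually.of_forall hB)

lemma integral_ES {ι : Type*} (P : Finset ι) (f : ι → ℝ) (v : NNReal) :
    ∫ t, ES P f t ∂(gaussianReal 0 v) =
      ((∑ x ∈ P, Real.exp (-(v * (f x) ^ 2 / 2)) : ℝ) : ℂ) := by
  unfold ES
  rw [integral_finsetSum]
  · push_cast
    apply Finset.sum_congr rfl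
    intro x _
    have := charFun_gaussianReal (μ := 0) (v := v) (f x)
    rw [charFun_apply_real] at this
    rw [this]
    congr 1
    push_cast
    ring
  · intro x _
    apply integrable_of_bdd _ _ (by fun_prop) 1
    intro t
    exact (norm_cexp_real _ _).le

lemma fourth_moment {ι : Type*} (P : Finset ι) (f : ι → ℝ) (v : NNReal) :
    ∫ t, ‖ES P f t‖ ^ 4 ∂(gaussianReal 0 v) =
      ∑ x ∈ P ×ˢ P, ∑ y ∈ P ×ˢ P,
        Real.exp (-(v * ((f x.1 + f x.2) - (f y.1 + f y.2)) ^ 2 / 2)) := by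
  have h := integral_ES ((P ×ˢ P) ×ˢ (P ×ˢ P))
    (fun z => (f z.1.1 + f z.1.2) - (f z.2.1 + f z.2.2)) v
  have e : ∀ t, ES ((P ×ˢ P) ×ˢ (P ×ˢ P))
    (fun z => (f z.1.1 + f z.1.2) - (f z.2.1 + f z.2.2)) t = ((‖ES P f t‖ ^ 4 : ℝ) : ℂ) := by
    intro t
    have e1 : ((‖ES P f t‖ ^ 4 : ℝ) : ℂ) = (ES P f t * ES P f t) *
        ((starRingEnd ℂ) (ES P f t) * (starRingEnd ℂ) (ES P f t)) := by
      have := Complex.mul_conj' (ES P f t)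
      push_cast
      rw [show ((‖ES P f t‖ : ℝ) : ℂ) ^ 4 = (((‖ES P f t‖ : ℝ) : ℂ) ^ 2) ^ 2 by ring, ← this]
      ring
    have e2 : (starRingEnd ℂ) (ES P f t) = ∑ x ∈ P, Complex.exp (-(f x * t * Complex.I)) := by
      unfold ES
      rw [map_sum]
      apply Finset.sum_congr rfl
      intro x _
      rw [← Complex.exp_conj]
      simp
    rw [e1, e2]
    unfold ES
    rw [Finset.sum_mul_sum, Finset.sum_mul_sum, Finset.sum_product]
    simp only [← Finset.sum_product']
    rw [Finset.sum_mul_sum, ← Finset.sum_product']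
    apply Finset.sum_congr rfl
    intro z _
    rw [← Complex.exp_add, ← Complex.exp_add, ← Complex.exp_add]
    congr 1
    push_cast
    ring
  simp only [e] at h
  rw [integral_complex_ofReal] at h
  have h' := Complex.ofReal_injective h
  rw [h', Finset.sum_product]

lemma amgm7 (y : Fin 7 → ℝ) (hy : ∀ j, 0 ≤ y j) : ∏ j, y j ≤ ∑ j, (1 / 7) * y j ^ 7 := by
  have := Real.geom_mean_le_arith_mean_weighted Finset.univ (fun _ : Fin 7 => (1:ℝ) / 7)
    (fun j => y j ^ 7) (fun _ _ => by norm_num) (by simp) (fun j _ => pow_nonneg (hy j) 7)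
  refine le_trans (le_of_eq ?_) this
  apply Finset.prod_congr rfl
  intro j _
  have := Real.pow_rpow_inv_natCast (hy j) (n := 7) (by norm_num)
  rw [one_div]
  exact_mod_cast this.symm

lemma holder_count (S : Fin 7 → Finset ℕ) (σ : Fin 7 → ℝ) (v : NNReal) (B : Fin 7 → ℝ) (K : ℝ)
    (hB : ∀ j, 0 < B j)
    (hK : ∀ j, ∫ t, ‖ES (S j) (fun n => σ j * √n) t‖ ^ 7 ∂(gaussianReal 0 v) ≤ K * B j ^ 7) :
    ∑ n ∈ Fintype.piFinset S, Real.exp (-(v * (∑ j, σ j * √(n j)) ^ 2 / 2)) ≤ K * ∏ j, B j := by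
  have h := integral_ES (Fintype.piFinset S) (fun n => ∑ j, σ j * √(n j)) v
  have e : ∀ t, ES (Fintype.piFinset S) (fun n => ∑ j, σ j * √(n j)) t =
      ∏ j, ES (S j) (fun n => σ j * √n) t := by
    intro t
    unfold ES
    rw [Finset.prod_univ_sum]
    apply Finset.sum_congr rfl
    intro n _
    rw [← Complex.exp_sum]
    congr 1
    push_cast
    rw [Finset.sum_mul, Finset.sum_mul]
  have h1 : ∑ n ∈ Fintype.piFinset S, Real.exp (-(v * (∑ j, σ j * √(n j)) ^ 2 / 2)) ≤
      ∫ t, ‖ES (Fintype.piFinset S) (fun n => ∑ j, σ j * √(n j)) t‖ ∂(gaussianReal 0 v) := by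
    refine le_trans ?_ (norm_integral_le_integral_norm _)
    rw [h, Complex.norm_real]
    exact le_abs_self _
  refine h1.trans ?_
  have int7 : ∀ j, Integrable (fun t => ‖ES (S j) (fun n => σ j * √n) t‖ ^ 7) (gaussianReal 0 v) := by
    intro j
    apply integrable_of_bdd _ _ ((cont_ES _ _).norm.pow 7) (((S j).card : ℝ) ^ 7)
    intro t
    change ‖‖ES (S j) (fun n => σ j * √n) t‖ ^ 7‖ ≤ _
    rw [norm_pow, norm_norm]
    gcongr
    exact norm_ES _ _ _
  have pt : ∀ t, ‖ES (Fintype.piFinset S) (fun n => ∑ j, σ j * √(n j)) t‖ ≤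
      (∏ j, B j) * ∑ j, (1 / 7) * (‖ES (S j) (fun n => σ j * √n) t‖ ^ 7 / B j ^ 7) := by
    intro t
    rw [e, norm_prod]
    have := amgm7 (fun j => ‖ES (S j) (fun n => σ j * √n) t‖ / B j)
      (fun j => div_nonneg (norm_nonneg _) (hB j).le)
    rw [Finset.prod_div_distrib, div_le_iff₀ (Finset.prod_pos (fun j _ => hB j))] at this
    simp only [div_pow] at this
    linarith
  calc ∫ t, ‖ES (Fintype.piFinset S) (fun n => ∑ j, σ j * √(n j)) t‖ ∂(gaussianReal 0 v)
      ≤ ∫ t, (∏ j, B j) * ∑ j, (1 / 7) * (‖ES (S j) (fun n => σ j * √n) t‖ ^ 7 / B j ^ 7)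
          ∂(gaussianReal 0 v) := by
        apply integral_mono _ _ pt
        · apply integrable_of_bdd _ _ (cont_ES _ _).norm _ 
          intro t
          rw [norm_norm]
          exact norm_ES _ _ _
        · apply Integrable.const_mul
          apply integrable_finsetSum
          intro j _
          exact ((int7 j).div_const _).const_mul _
    _ = (∏ j, B j) * ∑ j, (1 / 7) *
        ((∫ t, ‖ES (S j) (fun n => σ j * √n) t‖ ^ 7 ∂(gaussianReal 0 v)) / B j ^ 7) := by
        rw [integral_const_mul, integral_finsetSum]
        · simp only [integral_const_mul, integral_div]
        · intro j _
          exact ((int7 j).div_const _).const_mul _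
    _ ≤ (∏ j, B j) * ∑ j : Fin 7, (1 / 7) * K := by
        have : 0 ≤ ∏ j, B j := Finset.prod_nonneg (fun j _ => (hB j).le)
        gcongr with j
        rw [div_le_iff₀ (pow_pos (hB j) 7)]
        exact hK j
    _ = K * ∏ j, B j := by
        simp; ring

open MeasureTheory ProbabilityTheory

lemma B_pow (N Δ ε : ℝ) (hN : 2 ≤ N) (hΔ : 0 < Δ) :
    (N ^ 5 + Δ * (N ^ 6 * √N)) * N ^ (7 * ε) ≤
      ((Δ ^ ((1:ℝ) / 7) * N ^ ((13:ℝ) / 14) + N ^ ((5:ℝ) / 7)) * N ^ ε) ^ 7 := by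
  have hN0 : 0 < N := by linarith
  have e1 : (N ^ ε) ^ 7 = N ^ (7 * ε) := by
    rw [← Real.rpow_natCast, ← Real.rpow_mul hN0.le]; congr 1; push_cast; ring
  have e2 : (Δ ^ ((1:ℝ) / 7)) ^ 7 = Δ := by
    rw [← Real.rpow_natCast, ← Real.rpow_mul hΔ.le]; norm_num
  have e3 : (N ^ ((13:ℝ) / 14)) ^ 7 = N ^ 6 * √N := by
    rw [← Real.rpow_natCast, ← Real.rpow_mul hN0.le, Real.sqrt_eq_rpow, ← Real.rpow_natCast N 6,
      ← Real.rpow_add hN0]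
    congr 1; norm_num
  have e4 : (N ^ ((5:ℝ) / 7)) ^ 7 = N ^ 5 := by
    rw [← Real.rpow_natCast, ← Real.rpow_mul hN0.le, ← Real.rpow_natCast N 5]
    congr 1; norm_num
  rw [mul_pow, e1]
  have h : ∀ x y : ℝ, 0 ≤ x → 0 ≤ y → x ^ 7 + y ^ 7 ≤ (x + y) ^ 7 := by
    intro x y hx hy
    have : (x + y) ^ 7 - (x ^ 7 + y ^ 7) = 7 * x ^ 6 * y + 21 * x ^ 5 * y ^ 2 + 35 * x ^ 4 * y ^ 3 +
      35 * x ^ 3 * y ^ 4 + 21 * x ^ 2 * y ^ 5 + 7 * x * y ^ 6 := by ring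
    have h2 : 0 ≤ (x + y) ^ 7 - (x ^ 7 + y ^ 7) := by rw [this]; positivity
    linarith
  have h3 := h (Δ ^ ((1:ℝ) / 7) * N ^ ((13:ℝ) / 14)) (N ^ ((5:ℝ) / 7)) (by positivity) (by positivity)
  rw [mul_pow, e2, e3, e4] at h3
  gcongr
  linarith

lemma moment7 (ε : ℝ) (hε : 0 < ε) : ∃ K : ℝ, 0 < K ∧ ∀ (N Δ σ : ℝ) (v : NNReal), 2 ≤ N → 0 < Δ →
    (v : ℝ) = 1 / Δ ^ 2 → σ ^ 2 = 1 →
    ∫ t, ‖ES (SN N) (fun n => σ * √n) t‖ ^ 7 ∂(gaussianReal 0 v) ≤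
      K * ((Δ ^ ((1:ℝ) / 7) * N ^ ((13:ℝ) / 14) + N ^ ((5:ℝ) / 7)) * N ^ ε) ^ 7 := by
  obtain ⟨C, hC, hG⟩ := gauss_sum (7 * ε) (by positivity)
  refine ⟨8 * C, by positivity, ?_⟩
  intro N Δ σ v hN hΔ hv hσ
  have hN0 : 0 < N := by linarith
  have int4 : Integrable (fun t => ‖ES (SN N) (fun n => σ * √n) t‖ ^ 4) (gaussianReal 0 v) := by
    apply integrable_of_bdd _ _ ((cont_ES _ _).norm.pow 4) (((SN N).card : ℝ) ^ 4)
    intro t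
    change ‖‖ES (SN N) (fun n => σ * √n) t‖ ^ 4‖ ≤ _
    rw [norm_pow, norm_norm]
    gcongr
    exact norm_ES _ _ _
  have int7 : Integrable (fun t => ‖ES (SN N) (fun n => σ * √n) t‖ ^ 7) (gaussianReal 0 v) := by
    apply integrable_of_bdd _ _ ((cont_ES _ _).norm.pow 7) (((SN N).card : ℝ) ^ 7)
    intro t
    change ‖‖ES (SN N) (fun n => σ * √n) t‖ ^ 7‖ ≤ _
    rw [norm_pow, norm_norm]
    gcongr
    exact norm_ES _ _ _
  have h1 : ∫ t, ‖ES (SN N) (fun n => σ * √n) t‖ ^ 7 ∂(gaussianReal 0 v) ≤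
      ∫ t, (2 * N) ^ 3 * ‖ES (SN N) (fun n => σ * √n) t‖ ^ 4 ∂(gaussianReal 0 v) := by
    apply integral_mono int7 (int4.const_mul _)
    intro t
    have hb := (norm_ES (SN N) (fun n => σ * √n) t).trans (card_SN N hN0.le)
    change ‖ES (SN N) (fun n => σ * √n) t‖ ^ 7 ≤ (2 * N) ^ 3 * ‖ES (SN N) (fun n => σ * √n) t‖ ^ 4
    rw [show (7:ℕ) = 3 + 4 by norm_num, pow_add]
    gcongr
  have h2 : ∫ t, ‖ES (SN N) (fun n => σ * √n) t‖ ^ 4 ∂(gaussianReal 0 v) ≤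
      C * ((1 + Δ * (N * √N)) * (N ^ 2 * N ^ (7 * ε))) := by
    rw [fourth_moment]
    refine le_trans (le_of_eq ?_) (hG N Δ hN hΔ)
    apply Finset.sum_congr rfl
    intro x _
    apply Finset.sum_congr rfl
    intro y _
    congr 1
    rw [hv, show (σ * √x.1 + σ * √x.2 - (σ * √y.1 + σ * √y.2)) ^ 2 =
      σ ^ 2 * (√x.1 + √x.2 - (√y.1 + √y.2)) ^ 2 by ring, hσ]
    field_simp
  rw [integral_const_mul] at h1
  calc _ ≤ (2 * N) ^ 3 * (C * ((1 + Δ * (N * √N)) * (N ^ 2 * N ^ (7 * ε)))) := h1.trans (by gcongr)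
    _ = 8 * C * ((N ^ 5 + Δ * (N ^ 6 * √N)) * N ^ (7 * ε)) := by ring
    _ ≤ _ := by gcongr; exact B_pow N Δ ε hN hΔ

theorem final (σ : Fin 7 → ℝ) (hσ : ∀ j, σ j ^ 2 = 1) (ε : ℝ) (hε : 0 < ε) :
    ∃ C : ℝ, 0 < C ∧ ∀ (N : Fin 7 → ℝ) (Δ : ℝ), (∀ j, 2 ≤ N j) → 0 < Δ →
    ∀ A : Set (Fin 7 → ℕ), (∀ n ∈ A, (∀ j, N j < n j ∧ (n j : ℝ) ≤ 2 * N j) ∧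
      |∑ j, σ j * √(n j)| < Δ) → (A.ncard : ℝ) ≤
    C * ∏ j, ((Δ ^ ((1:ℝ) / 7) * N j ^ ((13:ℝ) / 14) + N j ^ ((5:ℝ) / 7)) * N j ^ ε) := by
  classical
  obtain ⟨K, hK, hM⟩ := moment7 ε hε
  refine ⟨Real.exp (1 / 2) * K, by positivity, ?_⟩
  intro N Δ hN hΔ A hA
  have hN0 : ∀ j, 0 < N j := fun j => by linarith [hN j]
  let v : NNReal := ⟨1 / Δ ^ 2, by positivity⟩
  have hv : (v : ℝ) = 1 / Δ ^ 2 := rfl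
  have hc := holder_count (fun j => SN (N j)) σ v
    (fun j => (Δ ^ ((1:ℝ) / 7) * N j ^ ((13:ℝ) / 14) + N j ^ ((5:ℝ) / 7)) * N j ^ ε) K
    (fun j => by have := hN0 j; positivity)
    (fun j => hM (N j) Δ (σ j) v (hN j) hΔ hv (hσ j))
  set T := (Fintype.piFinset (fun j => SN (N j))).filter (fun n => |∑ j, σ j * √(n j)| < Δ) with hT
  have hsub : A ⊆ (T : Set (Fin 7 → ℕ)) := by
    intro n hn
    obtain ⟨h1, h2⟩ := hA n hn
    rw [Finset.mem_coe, hT, Finset.mem_filter, Fintype.mem_piFinset]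
    exact ⟨fun j => (mem_SN _ (hN0 j).le _).2 (h1 j), h2⟩
  have hcard : (A.ncard : ℝ) ≤ T.card := by
    have := Set.ncard_le_ncard hsub T.finite_toSet
    rw [Set.ncard_coe_finset] at this
    exact_mod_cast this
  have hexp : (T.card : ℝ) ≤ Real.exp (1 / 2) * ∑ n ∈ Fintype.piFinset (fun j => SN (N j)),
      Real.exp (-(v * (∑ j, σ j * √(n j)) ^ 2 / 2)) := by
    calc (T.card : ℝ) = ∑ n ∈ T, (1:ℝ) := by simp
      _ ≤ ∑ n ∈ T, Real.exp (1 / 2) * Real.exp (-(v * (∑ j, σ j * √(n j)) ^ 2 / 2)) := by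
        apply Finset.sum_le_sum
        intro n hn
        rw [hT, Finset.mem_filter] at hn
        rw [← Real.exp_add]
        apply Real.one_le_exp
        have h1 : (∑ j, σ j * √(n j)) ^ 2 ≤ Δ ^ 2 := by
          rw [← sq_abs]; gcongr; exact hn.2.le
        rw [hv]
        have h2 : 1 / Δ ^ 2 * (∑ j, σ j * √(n j)) ^ 2 ≤ 1 := by
          rw [one_div_mul_eq_div, div_le_one (by positivity)]; exact h1
        linarith
      _ ≤ ∑ n ∈ Fintype.piFinset (fun j => SN (N j)),
          Real.exp (1 / 2) * Real.exp (-(v * (∑ j, σ j * √(n j)) ^ 2 / 2)) := by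
        apply Finset.sum_le_sum_of_subset_of_nonneg (Finset.filter_subset _ _)
        intros; positivity
      _ = _ := by rw [Finset.mul_sum]
  calc (A.ncard : ℝ) ≤ _ := hcard.trans hexp
    _ ≤ Real.exp (1 / 2) * (K * _) := by gcongr
    _ = _ := by ring

end Final


theorem count_seven_tuples (σ₅ σ₆ : ℝ) (h₅ : σ₅ = 1 ∨ σ₅ = -1) (h₆ : σ₆ = 1 ∨ σ₆ = -1)
    (ε : ℝ) (hε : 0 < ε) :
    ∃ C : ℝ, 0 < C ∧ ∀ (N : Fin 7 → ℝ) (Δ : ℝ), (∀ j, 2 ≤ N j) → 0 < Δ →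
      (Set.ncard {n : Fin 7 → ℕ | (∀ j, N j < (n j : ℝ) ∧ (n j : ℝ) ≤ 2 * N j) ∧
          0 < |Real.sqrt (n 0) + Real.sqrt (n 1) + Real.sqrt (n 2) + Real.sqrt (n 3) +
              σ₅ * Real.sqrt (n 4) + σ₆ * Real.sqrt (n 5) - Real.sqrt (n 6)| ∧
          |Real.sqrt (n 0) + Real.sqrt (n 1) + Real.sqrt (n 2) + Real.sqrt (n 3) +
              σ₅ * Real.sqrt (n 4) + σ₆ * Real.sqrt (n 5) - Real.sqrt (n 6)| < Δ} : ℝ) ≤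
        C * ∏ j : Fin 7,
          ((Δ ^ ((1 : ℝ) / 7) * N j ^ ((13 : ℝ) / 14) + N j ^ ((5 : ℝ) / 7)) * N j ^ ε) := by

  have hσ : ∀ j, (![1,1,1,1,σ₅,σ₆,-1] : Fin 7 → ℝ) j ^ 2 = 1 := by
    intro j
    rcases h₅ with rfl | rfl <;> rcases h₆ with rfl | rfl <;> fin_cases j <;> simp
  obtain ⟨C, hC, h⟩ := final _ hσ ε hε
  refine ⟨C, hC, fun N Δ hN hΔ => h N Δ hN hΔ _ (fun n hn => ⟨hn.1, ?_⟩)⟩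
  have h2 := hn.2.2
  have e : ∑ j, (![1,1,1,1,σ₅,σ₆,-1] : Fin 7 → ℝ) j * √(n j : ℝ) =
      Real.sqrt (n 0) + Real.sqrt (n 1) + Real.sqrt (n 2) + Real.sqrt (n 3) +
              σ₅ * Real.sqrt (n 4) + σ₆ * Real.sqrt (n 5) - Real.sqrt (n 6) := by
    rw [Fin.sum_univ_seven]
    simp [Matrix.cons_val]
    ring
  rw [e]
  exact h2
end
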